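/- Let u₁, …, u_k ∈ F₂, let H be the subgroup of F₂ generated by u₁, …, u_k, and let L = max_{1 ≤ i ≤ k} |u_i|. Suppose that there exists an automorphism φ of F₂ whose fixed point set {w ∈ F₂ : φ(w) = w} is exactly H. Then there exist a Whitehead automorphism β of type (W1), an automorphism δ' that is a composition of at most (2^{4L+4}+1)·L automorphisms from {δ₁, δ₂, δ₃, δ₄}, and a chain ψ' of type (C1) or of type (C2) of length at most 4L+4, such that the fixed point set of β∘δ'∘ψ' is exactly H. -/

import Mathlib

noncomputable section

/-- The free group of rank two. -/
abbrev F : Type := FreeGroup (Fin 2)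

/-- The generator `a`. -/
def ga : F := FreeGroup.of 0

/-- The generator `b`. -/
def gb : F := FreeGroup.of 1

/-- Build an automorphism of `F` from images of the generators together with
an explicit inverse. -/
def mkAut (x y xi yi : F)
    (h1 : FreeGroup.lift ![xi, yi] x = ga)
    (h2 : FreeGroup.lift ![xi, yi] y = gb)
    (h3 : FreeGroup.lift ![x, y] xi = ga)
    (h4 : FreeGroup.lift ![x, y] yi = gb) : MulAut F :=
  MonoidHom.toMulEquiv (FreeGroup.lift ![x, y]) (FreeGroup.lift ![xi, yi])
    (by
      ext i
      fin_cases i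
      · simpa [ga] using h1
      · simpa [gb] using h2)
    (by
      ext i
      fin_cases i
      · simpa [ga] using h3
      · simpa [gb] using h4)

/-- `σ : a ↦ ab, b ↦ b`. -/
def σ : MulAut F :=
  mkAut (ga * gb) gb (ga * gb⁻¹) gb
    (by simp [ga, gb]) (by simp [ga, gb]) (by simp [ga, gb]) (by simp [ga, gb])

/-- `τ : a ↦ a, b ↦ ba`. -/
def τ : MulAut F :=
  mkAut ga (gb * ga) ga (gb * ga⁻¹)
    (by simp [ga, gb]) (by simp [ga, gb]) (by simp [ga, gb]) (by simp [ga, gb])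

/-- `δ₁ : a ↦ b⁻¹ab, b ↦ b`. -/
def δ₁ : MulAut F :=
  mkAut (gb⁻¹ * ga * gb) gb (gb * ga * gb⁻¹) gb
    (by simp [ga, gb, mul_assoc]) (by simp [ga, gb]) (by simp [ga, gb, mul_assoc]) (by simp [ga, gb])

/-- `δ₂ : a ↦ bab⁻¹, b ↦ b`. -/
def δ₂ : MulAut F :=
  mkAut (gb * ga * gb⁻¹) gb (gb⁻¹ * ga * gb) gb
    (by simp [ga, gb, mul_assoc]) (by simp [ga, gb]) (by simp [ga, gb, mul_assoc]) (by simp [ga, gb])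

/-- `δ₃ : a ↦ a, b ↦ a⁻¹ba`. -/
def δ₃ : MulAut F :=
  mkAut ga (ga⁻¹ * gb * ga) ga (ga * gb * ga⁻¹)
    (by simp [ga, gb]) (by simp [ga, gb, mul_assoc]) (by simp [ga, gb]) (by simp [ga, gb, mul_assoc])

/-- `δ₄ : a ↦ a, b ↦ aba⁻¹`. -/
def δ₄ : MulAut F :=
  mkAut ga (ga * gb * ga⁻¹) ga (ga⁻¹ * gb * ga)
    (by simp [ga, gb]) (by simp [ga, gb, mul_assoc]) (by simp [ga, gb]) (by simp [ga, gb, mul_assoc])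

/-- `π : a ↦ b, b ↦ a⁻¹`. -/
def pi' : MulAut F :=
  mkAut gb ga⁻¹ gb⁻¹ ga
    (by simp [ga, gb]) (by simp [ga, gb]) (by simp [ga, gb]) (by simp [ga, gb])

/-- Word length of (the reduced word representing) an element of `F`. -/
def len (w : F) : ℕ := w.toWord.length

/-- Cyclic length: minimal word length among all conjugates. -/
def cyclen (w : F) : ℕ := sInf {n | ∃ g : F, len (g * w * g⁻¹) = n}

/-- The chain `τ^{m_k}σ^{l_k}⋯τ^{m_1}σ^{l_1}` of type (C1) determined by the list
`[(l_k, m_k), …, (l_1, m_1)]` of pairs of exponents. -/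
def chainC1 (c : List (ℕ × ℕ)) : MulAut F :=
  (c.map fun p => τ ^ p.2 * σ ^ p.1).prod

/-- The chain `τ^{-m_k}σ^{-l_k}⋯τ^{-m_1}σ^{-l_1}` of type (C2) determined by the list
`[(l_k, m_k), …, (l_1, m_1)]` of pairs of exponents. -/
def chainC2 (c : List (ℕ × ℕ)) : MulAut F :=
  (c.map fun p => (τ ^ p.2)⁻¹ * (σ ^ p.1)⁻¹).prod

/-- Number of factors of `σ` in a chain. -/
def sigmaCount (c : List (ℕ × ℕ)) : ℕ := (c.map Prod.fst).sum

/-- Number of factors of `τ` in a chain. -/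
def tauCount (c : List (ℕ × ℕ)) : ℕ := (c.map Prod.snd).sum

/-- The length `Σ (l_i + m_i)` of a chain. -/
def chainLen (c : List (ℕ × ℕ)) : ℕ := sigmaCount c + tauCount c

/-- A Whitehead automorphism of type (W1): it permutes `{a, a⁻¹, b, b⁻¹}`. -/
def IsW1 (β : MulAut F) : Prop :=
  β ga ∈ ({ga, ga⁻¹, gb, gb⁻¹} : Set F) ∧ β gb ∈ ({ga, ga⁻¹, gb, gb⁻¹} : Set F)

/-- A chain of type (C1). -/
def IsC1 (φ : MulAut F) : Prop := ∃ c : List (ℕ × ℕ), c ≠ [] ∧ φ = chainC1 c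

/-- A chain of type (C2). -/
def IsC2 (φ : MulAut F) : Prop := ∃ c : List (ℕ × ℕ), c ≠ [] ∧ φ = chainC2 c

/-- A positive element: a product of the generators `a` and `b`. -/
def IsPositive (w : F) : Prop := w ∈ Submonoid.closure ({ga, gb} : Set F)

/-- The four automorphisms `δ₁, δ₂, δ₃, δ₄`. -/
def δIdx : Fin 4 → MulAut F := ![δ₁, δ₂, δ₃, δ₄]


/-- An integer valued length function of tree type on a group. -/
structure TL (G : Type*) [Group G] where
  nu : G → ℕ
  one : nu 1 = 0
  inv : ∀ g, nu g⁻¹ = nu g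
  fp : ∀ y z t, nu y + nu (z⁻¹ * t) ≤ nu z + nu (y⁻¹ * t) ∨
    nu y + nu (z⁻¹ * t) ≤ nu t + nu (y⁻¹ * z)
  par : ∀ g h, ∃ c, nu (g⁻¹ * h) + 2 * c = nu g + nu h
  interp : ∀ g k, k ≤ nu g → ∃ p, nu p = k ∧ nu p + nu (p⁻¹ * g) = nu g
  et : ∀ c p q, nu (p⁻¹ * (c * p)) = 0 → nu (q⁻¹ * (c * q)) = 0 → nu (p⁻¹ * q) = 1 → c = 1

namespace TL
variable {G : Type*} [Group G] (T : TL G)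

/-- The (pseudo)distance attached to a tree length. -/
def d (p q : G) : ℕ := T.nu (p⁻¹ * q)

theorem d_self (p : G) : T.d p p = 0 := by simp [d, T.one]

theorem d_one (p : G) : T.d 1 p = T.nu p := by simp [d]

theorem d_comm (p q : G) : T.d p q = T.d q p := by
  unfold d; rw [← T.inv]; simp

theorem d_mul (x p q : G) : T.d (x * p) (x * q) = T.d p q := by
  unfold d; congr 1; group

theorem d_fp (x y z t : G) : T.d x y + T.d z t ≤ T.d x z + T.d y t ∨
    T.d x y + T.d z t ≤ T.d x t + T.d y z := by
  have h := T.fp (x⁻¹ * y) (x⁻¹ * z) (x⁻¹ * t)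
  have e : ∀ p q, T.nu ((x⁻¹ * p)⁻¹ * (x⁻¹ * q)) = T.d p q := fun p q => by
    unfold d; congr 1; group
  rw [e, e, e] at h
  exact h

theorem d_tri (x y z : G) : T.d x z ≤ T.d x y + T.d y z := by
  have h := T.d_fp x z y y
  have h1 := T.d_self y
  have h2 := T.d_comm y z
  omega

theorem d_par (x y z : G) : ∃ c, T.d x z + 2 * c = T.d x y + T.d y z := by
  obtain ⟨c, hc⟩ := T.par (y⁻¹ * x) (y⁻¹ * z)
  refine ⟨c, ?_⟩
  have h2 := T.d_comm x y
  unfold d at *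
  rw [h2, ← hc]; congr 2; group

theorem d_interp (x y : G) (k : ℕ) (hk : k ≤ T.d x y) : ∃ p, T.d x p = k ∧ T.d x p + T.d p y = T.d x y := by
  obtain ⟨p, h1, h2⟩ := T.interp (x⁻¹ * y) k hk
  refine ⟨x * p, ?_, ?_⟩
  · unfold d; rw [← h1]; congr 1; group
  · unfold d; rw [← h2]; congr 2 <;> group

/-- Translates of points of the middle of a long segment stay on the segment. -/
theorem mid (g u p : G) (R k : ℕ) (hu : T.nu u ≤ R) (hug : T.d g (u * g) ≤ R)
    (hp : T.d 1 p = k) (hpg : T.d 1 p + T.d p g = T.nu g) (h1 : R < k) (h2 : k + R < T.nu g) :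
    T.d 1 (u * p) + T.nu g = k + T.d 1 (u * g) ∧
    T.d 1 (u * p) + T.d (u * p) g = T.nu g := by
  have e1 : T.d u (u * p) = T.d 1 p := by simpa using T.d_mul u 1 p
  have e2 : T.d (u * p) (u * g) = T.d p g := T.d_mul u p g
  have e3 : T.d u (u * g) = T.d 1 g := by simpa using T.d_mul u 1 g
  have e4 := T.d_one g
  have e5 := T.d_one u
  have f1 := T.d_fp 1 (u * p) u (u * g)
  have f2 := T.d_fp 1 (u * g) (u * p) g
  have c1 := T.d_comm u (u * p)
  have c2 := T.d_comm g (u * g)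
  have c3 := T.d_comm (u * p) (u * g)
  have t1 := T.d_tri 1 (u * p) (u * g)
  have t2 := T.d_tri 1 (u * p) g
  omega

theorem same_pt (g x y : G) (hx : T.d 1 x + T.d x g = T.nu g) (hy : T.d 1 y + T.d y g = T.nu g)
    (h : T.d 1 x = T.d 1 y) : T.d x y = 0 := by
  have f := T.d_fp 1 g x y
  have e4 := T.d_one g
  have c1 := T.d_comm g x
  have c2 := T.d_comm g y
  omega

theorem lemG (u v g : G) (R : ℕ) (huv : u * v ≠ v * u) (hu : T.nu u ≤ R) (hv : T.nu v ≤ R)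
    (hug : T.d g (u * g) ≤ R) (hvg : T.d g (v * g) ≤ R) : T.nu g ≤ 4 * R + 2 := by
  by_contra hN
  push Not at hN
  have tri : ∀ w : G, T.nu w ≤ R → T.d g (w * g) ≤ R →
      T.d 1 (w * g) ≤ T.nu g + R ∧ T.nu g ≤ T.d 1 (w * g) + R := by
    intro w _ h2
    have t1 := T.d_tri 1 g (w * g)
    have t2 := T.d_tri 1 (w * g) g
    have c2 := T.d_comm g (w * g)
    have e4 := T.d_one g
    omega
  have key : ∀ p, T.d 1 p = 2 * R + 1 ∨ T.d 1 p = 2 * R + 2 → T.d 1 p + T.d p g = T.nu g →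
      T.nu (p⁻¹ * ((v * u)⁻¹ * (u * v) * p)) = 0 := by
    intro p hp hpg
    have tu := tri u hu hug
    have tv := tri v hv hvg
    obtain ⟨a1, a2⟩ := T.mid g u p R _ hu hug rfl hpg (by omega) (by omega)
    obtain ⟨b1, b2⟩ := T.mid g v p R _ hv hvg rfl hpg (by omega) (by omega)
    obtain ⟨a3, a4⟩ := T.mid g v (u * p) R _ hv hvg rfl a2 (by omega) (by omega)
    obtain ⟨b3, b4⟩ := T.mid g u (v * p) R _ hu hug rfl b2 (by omega) (by omega)
    have := T.same_pt g _ _ a4 b4 (by omega)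
    rw [← this]; unfold d; congr 1; group
  have e4 := T.d_one g
  obtain ⟨q, hq1, hq2⟩ := T.d_interp 1 g (2 * R + 2) (by omega)
  obtain ⟨p, hp1, hp2⟩ := T.d_interp 1 q (2 * R + 1) (by omega)
  have t1 := T.d_tri p q g
  have t2 := T.d_tri 1 p g
  have := T.et _ p q (key p (Or.inl hp1) (by omega)) (key q (Or.inr hq1) (by omega)) (by unfold d at *; omega)
  apply huv
  rw [inv_mul_eq_one] at this
  exact this.symm

theorem lemT' (g : G) (ω : MulAut G) (hω : ∀ x, T.nu (ω x) = T.nu x) (u v : G)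
    (huv : u * v ≠ v * u) (hu : g * ω u = u * g) (hv : g * ω v = v * g)
    (hmin : ∀ h, T.nu g ≤ T.nu (h⁻¹ * (g * ω h))) : T.nu g = 0 := by
  by_contra hl
  obtain ⟨Φ, hΦ⟩ : ∃ Φ : G → G, ∀ p, Φ p = g * ω p := ⟨_, fun _ => rfl⟩
  have iso : ∀ p q, T.d (Φ p) (Φ q) = T.d p q := by
    intro p q
    rw [hΦ, hΦ, T.d_mul]; unfold d; rw [← hω (p⁻¹ * q)]; simp
  have cu : ∀ p, Φ (u * p) = u * Φ p := by
    intro p; rw [hΦ, hΦ, map_mul, ← mul_assoc, hu, mul_assoc]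
  have cv : ∀ p, Φ (v * p) = v * Φ p := by
    intro p; rw [hΦ, hΦ, map_mul, ← mul_assoc, hv, mul_assoc]
  have g1 : Φ 1 = g := by simp [hΦ]
  have hmin' : ∀ h, T.nu g ≤ T.d h (Φ h) := by
    intro h; unfold d; rw [hΦ]; exact hmin h
  have l1 : T.d 1 (Φ 1) = T.nu g := by rw [g1, T.d_one]
  have l2 : T.d (Φ 1) (Φ (Φ 1)) = T.nu g := by rw [iso, l1]
  obtain ⟨c, hc⟩ := T.d_par 1 (Φ 1) (Φ (Φ 1))
  by_cases hD : T.d 1 (Φ (Φ 1)) = 2 * T.nu g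
  · -- hyperbolic case
    have hyp : ∀ n, T.d 1 (Φ^[n] 1) = n * T.nu g ∧ T.d 1 (Φ^[n+1] 1) = (n + 1) * T.nu g := by
      intro n
      induction n with
      | zero => simp [T.d_self, l1]
      | succ n ih =>
        refine ⟨ih.2, ?_⟩
        have i1 : ∀ n, T.d (Φ^[n] 1) (Φ^[n+1] 1) = T.nu g := by
          intro n
          induction n with
          | zero => simpa using l1
          | succ n ih => rw [Function.iterate_succ_apply', Function.iterate_succ_apply' _ (n+1), iso, ih]
        have i2 : ∀ n, T.d (Φ^[n] 1) (Φ^[n+2] 1) = 2 * T.nu g := by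
          intro n
          induction n with
          | zero => simpa using hD
          | succ n ih => rw [Function.iterate_succ_apply', Function.iterate_succ_apply' _ (n+2), iso, ih]
        have f := T.d_fp 1 (Φ^[n+1] 1) (Φ^[n] 1) (Φ^[n+2] 1)
        have j1 := i1 n
        have j2 : T.d (Φ^[n+1] 1) (Φ^[n+2] 1) = T.nu g := i1 (n+1)
        have j3 := i2 n
        have t := T.d_tri 1 (Φ^[n+1] 1) (Φ^[n+2] 1)
        have c1 := T.d_comm (Φ^[n] 1) (Φ^[n+1] 1)
        obtain ⟨k1, k2⟩ := ih
        change T.d 1 (Φ^[n+2] 1) = (n + 1 + 1) * T.nu g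
        have x1 : (n + 1) * T.nu g = n * T.nu g + T.nu g := by ring
        have x2 : (n + 1 + 1) * T.nu g = n * T.nu g + 2 * T.nu g := by ring
        omega
    have fixd : ∀ w : G, (∀ p, Φ (w * p) = w * Φ p) → ∀ n, T.d (Φ^[n] 1) (w * Φ^[n] 1) = T.nu w := by
      intro w hw n
      induction n with
      | zero => simp [T.d_one]
      | succ n ih => rw [Function.iterate_succ_apply', ← hw, iso, ih]
    set R := max (T.nu u) (T.nu v) with hR
    have := T.lemG u v (Φ^[4*R+3] 1) R huv (le_max_left _ _) (le_max_right _ _)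
      (by rw [fixd u cu]; exact le_max_left _ _) (by rw [fixd v cv]; exact le_max_right _ _)
    rw [← T.d_one, (hyp _).1] at this
    have : (4 * R + 3) * 1 ≤ (4 * R + 3) * T.nu g := Nat.mul_le_mul_left _ (by omega)
    omega
  · by_cases h2 : 2 ≤ T.nu g
    · obtain ⟨r, hr1, hr2⟩ := T.d_interp 1 (Φ 1) 1 (by omega)
      have f1 := T.d_fp 1 (Φ r) (Φ 1) (Φ (Φ 1))
      have f2 := T.d_fp r (Φ r) 1 (Φ 1)
      have i1 := iso 1 r
      have i2 := iso r (Φ 1)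
      have c1 := T.d_comm (Φ 1) (Φ r)
      have c2 := T.d_comm 1 r
      have c3 := T.d_comm 1 (Φ r)
      have := hmin' r
      omega
    · have l1' : T.nu g = 1 := by omega
      have h0 : T.d 1 (Φ (Φ 1)) = 0 := by omega
      have sub0 : ∀ x y z, T.d x y = 0 → T.d x z = T.d y z := by
        intro x y z h
        have t1 := T.d_tri x y z
        have t2 := T.d_tri y x z
        have c2 := T.d_comm x y
        omega
      have key : ∀ w : G, (∀ p, Φ (w * p) = w * Φ p) →
          (T.d 1 w = 0 ∧ T.d (Φ 1) (w * Φ 1) = 0) ∨ (T.d (Φ 1) w = 0 ∧ T.d 1 (w * Φ 1) = 0) := by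
        intro w hw
        have hw1 : Φ w = w * Φ 1 := by simpa using hw 1
        have i1 : T.d (Φ 1) w = T.d 1 (w * Φ 1) := by
          rw [← iso, ← sub0 _ _ _ h0, hw1]
        have i2 : T.d (Φ 1) (w * Φ 1) = T.d 1 w := by rw [← hw1, iso]
        have i3 : T.d w (w * Φ 1) = 1 := by
          have := T.d_mul w 1 (Φ 1); rw [mul_one] at this; omega
        have f1 := T.d_fp 1 w (Φ 1) (w * Φ 1)
        have f2 := T.d_fp 1 (w * Φ 1) (Φ 1) w
        obtain ⟨e, he⟩ := T.d_par 1 w (w * Φ 1)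
        have c1 := T.d_comm w (w * Φ 1)
        have c2 := T.d_comm w (Φ 1)
        have c3 := T.d_comm (w * Φ 1) (Φ 1)
        omega
      have tr0 : ∀ x y z, T.d x y = 0 → T.d y z = 0 → T.d x z = 0 := by
        intro x y z h h'
        rw [sub0 _ _ _ h, h']
      have com : T.d (v * u) (u * v) = 0 := by
        have mu : ∀ p q, T.d (u * p) (u * q) = T.d p q := T.d_mul u
        have mv : ∀ p q, T.d (v * p) (v * q) = T.d p q := T.d_mul v
        have mu1 : ∀ q, T.d u (u * q) = T.d 1 q := fun q => by simpa using mu 1 q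
        have mv1 : ∀ q, T.d v (v * q) = T.d 1 q := fun q => by simpa using mv 1 q
        rcases key u cu with ⟨a1, a2⟩ | ⟨a1, a2⟩ <;> rcases key v cv with ⟨b1, b2⟩ | ⟨b1, b2⟩
        · have x1 : T.d v (v * u) = 0 := by rw [mv1, a1]
          have x2 : T.d u (u * v) = 0 := by rw [mu1, b1]
          rw [T.d_comm] at x1
          exact tr0 _ _ _ x1 (tr0 _ _ _ (by rwa [T.d_comm]) (tr0 _ _ _ a1 x2))
        · have x1 : T.d v (v * u) = 0 := by rw [mv1, a1]
          have x2 : T.d (u * Φ 1) (u * v) = 0 := by rw [mu, b1]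
          rw [T.d_comm] at x1
          exact tr0 _ _ _ x1 (tr0 _ _ _ (by rwa [T.d_comm]) (tr0 _ _ _ a2 x2))
        · have x1 : T.d (v * Φ 1) (v * u) = 0 := by rw [mv, a1]
          have x2 : T.d u (u * v) = 0 := by rw [mu1, b1]
          rw [T.d_comm] at x1
          exact tr0 _ _ _ x1 (tr0 _ _ _ (by rwa [T.d_comm]) (tr0 _ _ _ a1 x2))
        · have x1 : T.d (v * Φ 1) (v * u) = 0 := by rw [mv, a1]
          have x2 : T.d (u * Φ 1) (u * v) = 0 := by rw [mu, b1]
          rw [T.d_comm] at x1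
          exact tr0 _ _ _ x1 (tr0 _ _ _ (by rwa [T.d_comm]) (tr0 _ _ _ a2 x2))
      have com2 : T.d (v * u * Φ 1) (u * v * Φ 1) = 0 := by
        rw [mul_assoc, mul_assoc, ← cu, ← cv, ← cv, ← cu, iso]; simpa using com
      have := T.et ((v * u)⁻¹ * (u * v)) 1 (Φ 1)
        (by rw [← com]; unfold d; congr 1; group)
        (by rw [← com2]; unfold d; congr 1; group) (by unfold d at l1; omega)
      apply huv
      rw [inv_mul_eq_one] at this
      exact this.symm

theorem lemT (g : G) (ω : MulAut G) (hω : ∀ x, T.nu (ω x) = T.nu x) (u v : G)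
    (huv : u * v ≠ v * u) (hu : g * ω u = u * g) (hv : g * ω v = v * g) :
    ∃ h, T.nu (h⁻¹ * (g * ω h)) = 0 := by
  obtain ⟨h, hh⟩ : ∃ h, ∀ h', T.nu (h⁻¹ * (g * ω h)) ≤ T.nu (h'⁻¹ * (g * ω h')) := by
    exact ⟨Function.argmin (fun h => T.nu (h⁻¹ * (g * ω h))),
      fun h' => Function.argmin_le (fun h => T.nu (h⁻¹ * (g * ω h))) h'⟩
  refine ⟨h, T.lemT' _ ω hω (h⁻¹ * u * h) (h⁻¹ * v * h) ?_ ?_ ?_ ?_⟩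
  · intro e; apply huv
    have : h * (h⁻¹ * u * h * (h⁻¹ * v * h)) * h⁻¹ = h * (h⁻¹ * v * h * (h⁻¹ * u * h)) * h⁻¹ := by rw [e]
    simpa [mul_assoc] using this
  · simp only [map_mul, map_inv]
    calc _ = h⁻¹ * (g * ω u) * ω h := by group
      _ = _ := by rw [hu]; group
  · simp only [map_mul, map_inv]
    calc _ = h⁻¹ * (g * ω v) * ω h := by group
      _ = _ := by rw [hv]; group
  · intro k
    refine (hh (h * k)).trans (le_of_eq ?_)
    congr 1; simp only [map_mul]; group

end TL

set_option linter.unusedSectionVars false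

section Weights
variable {α : Type*} [DecidableEq α]

/-- Weight of a list of letters. -/
def lw (wt : α → ℕ) (l : List (α × Bool)) : ℕ := (l.map fun x => wt x.1).sum

/-- Weighted length of an element of the free group. -/
def wnu (wt : α → ℕ) (g : FreeGroup α) : ℕ := lw wt g.toWord

/-- Longest common initial part. -/
def lcp {β : Type*} [DecidableEq β] : List β → List β → List β
  | a :: l, b :: n => if a = b then a :: lcp l n else []
  | _, _ => []

theorem lcp_prefix_left {β : Type*} [DecidableEq β] (l n : List β) : lcp l n <+: l := by
  induction l generalizing n with
  | nil => simp [lcp]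
  | cons a l ih =>
    cases n with
    | nil => simp [lcp]
    | cons b n =>
      simp only [lcp]; split_ifs with h
      · simpa using ih n
      · simp

theorem lcp_comm {β : Type*} [DecidableEq β] (l n : List β) : lcp l n = lcp n l := by
  induction l generalizing n with
  | nil => cases n <;> simp [lcp]
  | cons a l ih =>
    cases n with
    | nil => simp [lcp]
    | cons b n =>
      simp only [lcp, ih n]
      by_cases h : a = b
      · simp [h]
      · rw [if_neg h, if_neg (Ne.symm h)]

theorem lcp_prefix_right {β : Type*} [DecidableEq β] (l n : List β) : lcp l n <+: n := by
  rw [lcp_comm]; exact lcp_prefix_left n l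

theorem prefix_lcp {β : Type*} [DecidableEq β] (p l n : List β) (h1 : p <+: l) (h2 : p <+: n) :
    p <+: lcp l n := by
  induction p generalizing l n with
  | nil => simp
  | cons a p ih =>
    cases l with
    | nil => simp at h1
    | cons b l =>
      cases n with
      | nil => simp at h2
      | cons c n =>
        rw [List.cons_prefix_cons] at h1 h2
        obtain ⟨rfl, h1⟩ := h1
        obtain ⟨rfl, h2⟩ := h2
        simpa [lcp] using ih l n h1 h2

theorem lcp_split {β : Type*} [DecidableEq β] (l n : List β) : ∃ s t, l = lcp l n ++ s ∧ n = lcp l n ++ t ∧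
    ∀ x ∈ s.head?, ∀ y ∈ t.head?, x ≠ y := by
  induction l generalizing n with
  | nil => exact ⟨[], n, by simp [lcp], by simp [lcp], by simp⟩
  | cons a l ih =>
    cases n with
    | nil => exact ⟨a :: l, [], by simp [lcp], by simp [lcp], by simp⟩
    | cons b n =>
      by_cases h : a = b
      · obtain ⟨s, t, h1, h2, h3⟩ := ih n
        refine ⟨s, t, ?_, ?_, h3⟩
        · simp only [lcp, if_pos h, List.cons_append, ← h1]
        · subst h; simp only [lcp, if_true, List.cons_append, ← h2]
      · exact ⟨a :: l, b :: n, by simp [lcp, h], by simp [lcp, h], by simpa using h⟩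

theorem lw_append (wt : α → ℕ) (l n : List (α × Bool)) : lw wt (l ++ n) = lw wt l + lw wt n := by
  simp [lw]

theorem lw_invRev (wt : α → ℕ) (l : List (α × Bool)) : lw wt (FreeGroup.invRev l) = lw wt l := by
  simp [lw, FreeGroup.invRev, List.sum_reverse, Function.comp_def]

theorem lw_pfx (wt : α → ℕ) {l n : List (α × Bool)} (h : l <+: n) : lw wt l ≤ lw wt n := by
  obtain ⟨t, rfl⟩ := h
  rw [lw_append]; omega

theorem wnu_mk_red (wt : α → ℕ) {l : List (α × Bool)} (h : FreeGroup.IsReduced l) :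
    wnu wt (FreeGroup.mk l) = lw wt l := by
  unfold wnu; rw [FreeGroup.toWord_mk, h.reduce_eq]

theorem isReduced_invRev {l : List (α × Bool)} (h : FreeGroup.IsReduced l) :
    FreeGroup.IsReduced (FreeGroup.invRev l) := by
  have : FreeGroup.invRev l = ((FreeGroup.mk l)⁻¹).toWord := by
    rw [FreeGroup.toWord_inv, FreeGroup.toWord_mk, h.reduce_eq]
  rw [this]; exact FreeGroup.isReduced_toWord

theorem wnu_inv_mul (wt : α → ℕ) (g h : FreeGroup α) :
    wnu wt (g⁻¹ * h) + 2 * lw wt (lcp g.toWord h.toWord) = wnu wt g + wnu wt h := by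
  obtain ⟨s, t, h1, h2, h3⟩ := lcp_split g.toWord h.toWord
  set p := lcp g.toWord h.toWord with hp
  have hg : g = FreeGroup.mk p * FreeGroup.mk s := by
    rw [FreeGroup.mul_mk, ← h1, FreeGroup.mk_toWord]
  have hh : h = FreeGroup.mk p * FreeGroup.mk t := by
    rw [FreeGroup.mul_mk, ← h2, FreeGroup.mk_toWord]
  have rs : FreeGroup.IsReduced s := by
    have : FreeGroup.IsReduced g.toWord := FreeGroup.isReduced_toWord
    rw [h1] at this; exact List.IsChain.right_of_append this
  have rt : FreeGroup.IsReduced t := by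
    have : FreeGroup.IsReduced h.toWord := FreeGroup.isReduced_toWord
    rw [h2] at this; exact List.IsChain.right_of_append this
  have e : g⁻¹ * h = FreeGroup.mk (FreeGroup.invRev s ++ t) := by
    conv_lhs => rw [hg, hh]
    rw [← FreeGroup.mul_mk, ← FreeGroup.inv_mk]; group
  have red : FreeGroup.IsReduced (FreeGroup.invRev s ++ t) := by
    unfold FreeGroup.IsReduced
    rw [List.isChain_append]
    refine ⟨isReduced_invRev rs, rt, ?_⟩
    intro x hx y hy hxy
    have : x ∈ (s.head?).map (fun z : α × Bool => (z.1, !z.2)) := by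
      simpa [FreeGroup.invRev] using hx
    cases s with
    | nil => simp at this
    | cons z s =>
      simp at this
      have := h3 z (by simp) y hy
      subst x
      obtain ⟨z1, z2⟩ := z
      obtain ⟨y1, y2⟩ := y
      simp at hxy this ⊢
      subst hxy
      revert this; cases z2 <;> cases y2 <;> simp
  rw [e, wnu_mk_red wt red, lw_append, lw_invRev]
  unfold wnu
  rw [h1, h2, lw_append, lw_append]
  have : lcp (p ++ s) (p ++ t) = p := by rw [← h1, ← h2]
  omega

theorem exists_prefix_lw (wt : α → ℕ) (hwt : ∀ x, wt x ≤ 1) (l : List (α × Bool)) (k : ℕ) (hk : k ≤ lw wt l) :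
    ∃ p s, l = p ++ s ∧ lw wt p = k := by
  induction l generalizing k with
  | nil => simp [lw] at hk; exact ⟨[], [], rfl, by simp [lw, hk]⟩
  | cons a l ih =>
    rcases Nat.eq_zero_or_pos k with rfl | hk0
    · exact ⟨[], a :: l, rfl, by simp [lw]⟩
    · have ha := hwt a.1
      have : lw wt (a :: l) = wt a.1 + lw wt l := by simp [lw]
      obtain ⟨p, s, h1, h2⟩ := ih (k - wt a.1) (by omega)
      refine ⟨a :: p, s, by simp [h1], ?_⟩
      have : lw wt (a :: p) = wt a.1 + lw wt p := by simp [lw]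
      omega

/-- The tree length attached to a 0-1 weight. -/
def wTL (wt : α → ℕ) (hwt : ∀ x, wt x ≤ 1)
    (et : ∀ c p q, wnu wt (p⁻¹ * (c * p)) = 0 → wnu wt (q⁻¹ * (c * q)) = 0 →
      wnu wt (p⁻¹ * q) = 1 → c = 1) : TL (FreeGroup α) where
  nu := wnu wt
  one := by simp [wnu, lw]
  inv := fun g => by unfold wnu; rw [FreeGroup.toWord_inv, lw_invRev]
  fp := by
    intro y z t
    have e1 := wnu_inv_mul wt z t
    have e2 := wnu_inv_mul wt y t
    have e3 := wnu_inv_mul wt y z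
    have : lw wt (lcp y.toWord t.toWord) ≤ lw wt (lcp z.toWord t.toWord) ∨
        lw wt (lcp y.toWord z.toWord) ≤ lw wt (lcp z.toWord t.toWord) := by
      rcases List.prefix_or_prefix_of_prefix (lcp_prefix_left y.toWord t.toWord)
        (lcp_prefix_left y.toWord z.toWord) with h | h
      · left
        exact lw_pfx wt (prefix_lcp _ _ _ (h.trans (lcp_prefix_right _ _)) (lcp_prefix_right _ _))
      · right
        exact lw_pfx wt (prefix_lcp _ _ _ (lcp_prefix_right _ _) (h.trans (lcp_prefix_right _ _)))
    omega
  par := fun g h => ⟨_, wnu_inv_mul wt g h⟩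
  interp := by
    intro g k hk
    obtain ⟨p, s, h1, h2⟩ := exists_prefix_lw wt hwt g.toWord k hk
    have rg : FreeGroup.IsReduced g.toWord := FreeGroup.isReduced_toWord
    have rp : FreeGroup.IsReduced p := by
      rw [h1] at rg; exact List.IsChain.left_of_append rg
    have rs : FreeGroup.IsReduced s := by
      rw [h1] at rg; exact List.IsChain.right_of_append rg
    have hg : g = FreeGroup.mk p * FreeGroup.mk s := by
      rw [FreeGroup.mul_mk, ← h1, FreeGroup.mk_toWord]
    refine ⟨FreeGroup.mk p, by rw [wnu_mk_red wt rp, h2], ?_⟩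
    rw [show (FreeGroup.mk p)⁻¹ * g = FreeGroup.mk s by rw [hg]; group, wnu_mk_red wt rp,
      wnu_mk_red wt rs, ← lw_append, ← h1]; rfl
  et := et

theorem wnu_mul_le (wt : α → ℕ) (g h : FreeGroup α) : wnu wt (g * h) ≤ wnu wt g + wnu wt h := by
  have := wnu_inv_mul wt g⁻¹ h
  rw [inv_inv] at this
  have e : wnu wt g⁻¹ = wnu wt g := by unfold wnu; rw [FreeGroup.toWord_inv, lw_invRev]
  omega

theorem wnu_one (wt : α → ℕ) : wnu wt (1 : FreeGroup α) = 0 := by simp [wnu, lw]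

theorem wnu_inv (wt : α → ℕ) (g : FreeGroup α) : wnu wt g⁻¹ = wnu wt g := by
  unfold wnu; rw [FreeGroup.toWord_inv, lw_invRev]

theorem wnu_full (g : FreeGroup α) : wnu (fun _ => 1) g = g.norm := by
  simp [wnu, lw, FreeGroup.norm]

/-- The word length as a tree length. -/
def fTL (α : Type*) [DecidableEq α] : TL (FreeGroup α) :=
  wTL (fun _ => 1) (fun _ => le_refl 1) (by
    intro c p q h _ _
    rw [wnu_full, FreeGroup.norm_eq_zero] at h
    have : c = p * (p⁻¹ * (c * p)) * p⁻¹ := by group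
    rw [this, h]; group)

theorem fTL_nu (g : FreeGroup α) : (fTL α).nu g = g.norm := wnu_full g

/-- A homomorphism sending generators to a bounded weight does not increase weights. -/
theorem wnu_lift_le {β : Type*} [DecidableEq β] (wt : β → ℕ) (wt' : α → ℕ) (f : FreeGroup α →* FreeGroup β)
    (hf : ∀ x, wnu wt (f (FreeGroup.of x)) ≤ wt' x) (g : FreeGroup α) : wnu wt (f g) ≤ wnu wt' g := by
  have key : ∀ l : List (α × Bool), wnu wt (f (FreeGroup.mk l)) ≤ lw wt' l := by
    intro l
    induction l with
    | nil => rw [show FreeGroup.mk ([] : List (α × Bool)) = 1 from rfl, map_one, wnu_one]; omega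
    | cons a l ih =>
      have e : FreeGroup.mk (a :: l) = FreeGroup.mk [a] * FreeGroup.mk l := by rw [FreeGroup.mul_mk]; rfl
      rw [e, map_mul]
      refine (wnu_mul_le _ _ _).trans ?_
      have : lw wt' (a :: l) = wt' a.1 + lw wt' l := by simp [lw]
      rw [this]
      refine add_le_add ?_ ih
      obtain ⟨x, b⟩ := a
      cases b
      · have : FreeGroup.mk [(x, false)] = (FreeGroup.of x)⁻¹ := rfl
        rw [this, map_inv, wnu_inv]; exact hf x
      · exact hf x
  have := key g.toWord
  rwa [FreeGroup.mk_toWord] at this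

end Weights


section Centralizers
open scoped commutatorElement

theorem free_center_gen {ι : Type*} [DecidableEq ι] (x y : ι) (hxy : x ≠ y) (z : FreeGroup ι)
    (hx : FreeGroup.of x * z = z * FreeGroup.of x) (hy : FreeGroup.of y * z = z * FreeGroup.of y) : z = 1 := by
  by_contra hz
  have main : ∀ (p : ι × Bool) (w : List (ι × Bool)) (t : ι), z.toWord = p :: w → p.1 ≠ t →
      FreeGroup.of t * z = z * FreeGroup.of t → False := by
    intro p w t hw hpt hc
    have rz : FreeGroup.IsReduced z.toWord := FreeGroup.isReduced_toWord
    have red : FreeGroup.IsReduced ((t, true) :: z.toWord) := by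
      rw [hw] at rz ⊢
      unfold FreeGroup.IsReduced at rz ⊢
      rw [List.isChain_cons_cons]
      exact ⟨fun h => absurd h.symm hpt, rz⟩
    have e1 : (FreeGroup.of t * z).toWord = (t, true) :: z.toWord := by
      have : FreeGroup.of t * z = FreeGroup.mk ((t, true) :: z.toWord) := by
        conv_lhs => rw [← FreeGroup.mk_toWord (x := z)]
        rfl
      rw [this, FreeGroup.toWord_mk, red.reduce_eq]
    have sl := FreeGroup.toWord_mul_sublist z (FreeGroup.of t)
    rw [← hc, e1, FreeGroup.toWord_of] at sl
    have e2 := sl.eq_of_length (by simp)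
    rw [hw] at e2
    simp only [List.cons_append, List.cons.injEq] at e2
    exact hpt (by rw [← e2.1])
  cases hw : z.toWord with
  | nil => exact hz (by rwa [FreeGroup.toWord_eq_nil_iff] at hw)
  | cons p w =>
    by_cases hp : p.1 = x
    · exact main p w y hw (by rw [hp]; exact hxy) hy
    · exact main p w x hw hp hx

theorem isCyclic_of_center {C : Type*} [Group C] [IsFreeGroup C] (z : C) (hz : z ≠ 1)
    (hc : ∀ g : C, g * z = z * g) : IsCyclic C := by
  classical
  let e := IsFreeGroup.toFreeGroup C
  have hz' : e z ≠ 1 := by simpa using hz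
  have hc' : ∀ g, g * e z = e z * g := by
    intro g
    have := congrArg e (hc (e.symm g))
    simpa using this
  have sub : Subsingleton (IsFreeGroup.Generators C) := by
    refine ⟨fun x y => ?_⟩
    by_contra hxy
    exact hz' (free_center_gen x y hxy _ (hc' _) (hc' _))
  have : IsCyclic (FreeGroup (IsFreeGroup.Generators C)) := by
    rcases isEmpty_or_nonempty (IsFreeGroup.Generators C) with h | ⟨⟨x⟩⟩
    · infer_instance
    · refine ⟨FreeGroup.of x, fun g => ?_⟩
      change g ∈ Subgroup.zpowers (FreeGroup.of x)
      induction g using FreeGroup.induction_on with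
      | C1 => exact one_mem _
      | of y => rw [Subsingleton.elim y x]; exact Subgroup.mem_zpowers _
      | inv_of y h => exact inv_mem h
      | mul a b ha hb => exact mul_mem ha hb
  exact isCyclic_of_surjective e.symm e.symm.surjective

variable {α : Type*}

theorem centralizer_cyclic (x : FreeGroup α) (hx : x ≠ 1) :
    ∃ r : FreeGroup α, ∀ g, g * x = x * g ↔ g ∈ Subgroup.zpowers r := by
  let C : Subgroup (FreeGroup α) := Subgroup.centralizer {x}
  have memC : ∀ g, g ∈ C ↔ g * x = x * g := by
    intro g
    rw [Subgroup.mem_centralizer_singleton_iff]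
  have : IsCyclic C := by
    refine isCyclic_of_center (C := C) ⟨x, (memC x).2 rfl⟩ ?_ ?_
    · intro h; exact hx (by simpa using congrArg Subtype.val h)
    · rintro ⟨g, hg⟩
      exact Subtype.ext ((memC g).1 hg)
  obtain ⟨⟨r, hr⟩, h⟩ := this
  refine ⟨r, fun g => ⟨fun hg => ?_, fun hg => ?_⟩⟩
  · obtain ⟨k, hk⟩ := h ⟨g, (memC g).2 hg⟩
    exact ⟨k, by simpa using congrArg Subtype.val hk⟩
  · exact (memC g).1 (Subgroup.zpowers_le.2 hr hg)

theorem comm_trans {x y z : FreeGroup α} (hx : x ≠ 1) (h1 : y * x = x * y) (h2 : z * x = x * z) :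
    y * z = z * y := by
  obtain ⟨r, hr⟩ := centralizer_cyclic x hx
  obtain ⟨i, rfl⟩ := (hr y).1 h1
  obtain ⟨j, rfl⟩ := (hr z).1 h2
  simp only [← zpow_add, add_comm]

theorem free_zpow_inj {r : FreeGroup α} (hr : r ≠ 1) {m n : ℤ} (h : r ^ m = r ^ n) : m = n := by
  by_contra hmn
  have : r ^ (m - n) = 1 ^ (m - n) := by rw [zpow_sub, h]; simp
  exact hr (zpow_left_injective (sub_ne_zero.2 hmn) this)

theorem comm_of_triple {u v : FreeGroup α} (h : ⁅⁅u, v⁆, u⁆ = 1) : u * v = v * u := by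
  by_cases hu : u = 1
  · simp [hu]
  by_cases hv : v = 1
  · simp [hv]
  rw [commutatorElement_eq_one_iff_mul_comm] at h
  have h1 : (v * u * v⁻¹) * u = u * (v * u * v⁻¹) := by
    rw [commutatorElement_def] at h
    have : u * v * u⁻¹ * v⁻¹ = u * (v * u * v⁻¹)⁻¹ := by group
    rw [this] at h
    have h' : (v * u * v⁻¹)⁻¹ * u = u * (v * u * v⁻¹)⁻¹ := by
      have := congrArg (fun t => u⁻¹ * t) h
      simpa [mul_assoc] using this
    have h2 := congrArg (fun t => (v * u * v⁻¹) * t * (v * u * v⁻¹)) h'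
    simp only [mul_assoc, inv_mul_cancel, mul_inv_cancel_left, mul_one] at h2
    simpa [mul_assoc] using h2.symm
  obtain ⟨r, hr⟩ := centralizer_cyclic u hu
  have hru : r * u = u * r := (hr r).2 (Subgroup.mem_zpowers r)
  have hr1 : r ≠ 1 := by
    rintro rfl
    have := (hr u).1 rfl
    simp at this; exact hu this
  have hvu : v * u * v⁻¹ ≠ 1 := by simpa using hu
  -- conjugation by v preserves the centralizer of u
  have c1 : (v * r * v⁻¹) * u = u * (v * r * v⁻¹) := by
    refine comm_trans hvu ?_ h1.symm
    calc _ = v * (r * u) * v⁻¹ := by group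
      _ = _ := by rw [hru]; group
  have c2 : (v⁻¹ * r * v) * u = u * (v⁻¹ * r * v) := by
    have : r * (v * u * v⁻¹) = (v * u * v⁻¹) * r := comm_trans hu hru h1
    calc _ = v⁻¹ * (r * (v * u * v⁻¹)) * v := by group
      _ = _ := by rw [this]; group
  obtain ⟨j, hj⟩ := (hr _).1 c1
  obtain ⟨i, hi⟩ := (hr _).1 c2
  simp only at hj hi
  have hij : r ^ (j * i) = r ^ (1 : ℤ) := by
    rw [zpow_mul, hj, conj_zpow, hi]; group
  have hij' := free_zpow_inj hr1 hij
  have h3 : v * (v * r * v⁻¹) * v⁻¹ = r := by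
    rw [← hj, ← conj_zpow, ← hj, ← zpow_mul]
    rcases Int.eq_one_or_neg_one_of_mul_eq_one hij' with h | h <;> simp [h]
  have hv2 : v * v ≠ 1 := by
    intro h
    have : v ^ 2 = 1 := by rw [pow_two, h]
    exact hv (pow_eq_one_iff_left (two_ne_zero) |>.1 this)
  have h4 : r * v = v * r := comm_trans hv2 (by
    conv_lhs => rw [← h3]
    group) (by group)
  obtain ⟨m, hm⟩ := (hr u).1 rfl
  simp only at hm
  rw [← hm]
  exact (Commute.zpow_left (show Commute r v from h4) m).eq

/-- A commutative subgroup of a free group containing the whole centralizer-type fixed set. -/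
theorem fix_comm_eq {φ : MulAut (FreeGroup α)} {x : FreeGroup α} (hx : x ≠ 1) (hφ : φ x = x)
    (hc : ∀ y, φ y = y → y * x = x * y) (g : FreeGroup α) : g * x = x * g ↔ φ g = g := by
  refine ⟨fun hg => ?_, hc g⟩
  obtain ⟨r, hr⟩ := centralizer_cyclic x hx
  obtain ⟨m, hm⟩ := (hr x).1 rfl
  simp only at hm
  have hm0 : m ≠ 0 := by rintro rfl; simp at hm; exact hx hm.symm
  have : φ r = r := by
    have e : φ r ^ m = r ^ m := by rw [← map_zpow, hm, hφ]
    exact zpow_left_injective hm0 e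
  obtain ⟨k, rfl⟩ := (hr g).1 hg
  simp only [map_zpow, this]

end Centralizers


section AutBasics

theorem mkAut_ga (x y xi yi : F) (h1 h2 h3 h4) : mkAut x y xi yi h1 h2 h3 h4 ga = x := by
  simp [mkAut, ga]
theorem mkAut_gb (x y xi yi : F) (h1 h2 h3 h4) : mkAut x y xi yi h1 h2 h3 h4 gb = y := by
  simp [mkAut, gb]
theorem mkAut_inv_ga (x y xi yi : F) (h1 h2 h3 h4) : (mkAut x y xi yi h1 h2 h3 h4)⁻¹ ga = xi := by
  rw [MulAut.inv_apply, MulEquiv.symm_apply_eq]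
  exact h3.symm
theorem mkAut_inv_gb (x y xi yi : F) (h1 h2 h3 h4) : (mkAut x y xi yi h1 h2 h3 h4)⁻¹ gb = yi := by
  rw [MulAut.inv_apply, MulEquiv.symm_apply_eq]
  exact h4.symm

/-- Swap of the generators. -/
def swp : MulAut F := mkAut gb ga gb ga
  (by simp [ga, gb]) (by simp [ga, gb]) (by simp [ga, gb]) (by simp [ga, gb])
/-- Inversion of `b`. -/
def eps : MulAut F := mkAut ga gb⁻¹ ga gb⁻¹
  (by simp [ga, gb]) (by simp [ga, gb]) (by simp [ga, gb]) (by simp [ga, gb])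
/-- Inversion of `a`. -/
def kap : MulAut F := mkAut ga⁻¹ gb ga⁻¹ gb
  (by simp [ga, gb]) (by simp [ga, gb]) (by simp [ga, gb]) (by simp [ga, gb])
/-- Inversion of both generators. -/
def iot : MulAut F := mkAut ga⁻¹ gb⁻¹ ga⁻¹ gb⁻¹
  (by simp [ga, gb]) (by simp [ga, gb]) (by simp [ga, gb]) (by simp [ga, gb])

@[simp] theorem σ_ga : σ ga = ga * gb := mkAut_ga ..
@[simp] theorem σ_gb : σ gb = gb := mkAut_gb ..
@[simp] theorem σi_ga : σ⁻¹ ga = ga * gb⁻¹ := mkAut_inv_ga ..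
@[simp] theorem σi_gb : σ⁻¹ gb = gb := mkAut_inv_gb ..
@[simp] theorem τ_ga : τ ga = ga := mkAut_ga ..
@[simp] theorem τ_gb : τ gb = gb * ga := mkAut_gb ..
@[simp] theorem τi_ga : τ⁻¹ ga = ga := mkAut_inv_ga ..
@[simp] theorem τi_gb : τ⁻¹ gb = gb * ga⁻¹ := mkAut_inv_gb ..
@[simp] theorem pi_ga : pi' ga = gb := mkAut_ga ..
@[simp] theorem pi_gb : pi' gb = ga⁻¹ := mkAut_gb ..
@[simp] theorem pii_ga : pi'⁻¹ ga = gb⁻¹ := mkAut_inv_ga ..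
@[simp] theorem pii_gb : pi'⁻¹ gb = ga := mkAut_inv_gb ..
@[simp] theorem σs_ga : MulEquiv.symm σ ga = ga * gb⁻¹ := σi_ga
@[simp] theorem σs_gb : MulEquiv.symm σ gb = gb := σi_gb
@[simp] theorem τs_ga : MulEquiv.symm τ ga = ga := τi_ga
@[simp] theorem τs_gb : MulEquiv.symm τ gb = gb * ga⁻¹ := τi_gb
@[simp] theorem pis_ga : MulEquiv.symm pi' ga = gb⁻¹ := pii_ga
@[simp] theorem pis_gb : MulEquiv.symm pi' gb = ga := pii_gb
@[simp] theorem swp_ga : swp ga = gb := mkAut_ga ..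
@[simp] theorem swp_gb : swp gb = ga := mkAut_gb ..
@[simp] theorem eps_ga : eps ga = ga := mkAut_ga ..
@[simp] theorem eps_gb : eps gb = gb⁻¹ := mkAut_gb ..
@[simp] theorem kap_ga : kap ga = ga⁻¹ := mkAut_ga ..
@[simp] theorem kap_gb : kap gb = gb := mkAut_gb ..
@[simp] theorem iot_ga : iot ga = ga⁻¹ := mkAut_ga ..
@[simp] theorem iot_gb : iot gb = gb⁻¹ := mkAut_gb ..

theorem hom_ext2 {G : Type*} [Group G] {f g : F →* G} (h1 : f ga = g ga) (h2 : f gb = g gb) : f = g := by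
  ext i; fin_cases i
  · exact h1
  · exact h2

theorem aut_ext {φ ψ : MulAut F} (h1 : φ ga = ψ ga) (h2 : φ gb = ψ gb) : φ = ψ := by
  have : φ.toMonoidHom = ψ.toMonoidHom := hom_ext2 h1 h2
  ext w
  exact DFunLike.congr_fun this w

theorem F_induction {p : F → Prop} (h1 : p 1) (ha : ∀ w, p w → p (w * ga)) (hb : ∀ w, p w → p (w * gb))
    (ha' : ∀ w, p w → p (w * ga⁻¹)) (hb' : ∀ w, p w → p (w * gb⁻¹)) (w : F) : p w := by
  have key : ∀ l : List (Fin 2 × Bool), p (FreeGroup.mk l) := by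
    intro l
    induction l using List.reverseRecOn with
    | nil => exact h1
    | append_singleton l x ih =>
      rw [← FreeGroup.mul_mk]
      obtain ⟨i, b⟩ := x
      fin_cases i <;> cases b
      · exact ha' _ ih
      · exact ha _ ih
      · exact hb' _ ih
      · exact hb _ ih
  rw [← FreeGroup.mk_toWord (x := w)]
  exact key _

theorem swp_swp : swp * swp = 1 := aut_ext (by simp) (by simp)
theorem eps_eps : eps * eps = 1 := aut_ext (by simp) (by simp)
theorem kap_kap : kap * kap = 1 := aut_ext (by simp) (by simp)
theorem iot_iot : iot * iot = 1 := aut_ext (by simp) (by simp)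
theorem pi_sq : pi' * pi' = iot := aut_ext (by simp) (by simp)
theorem swp_τ : swp * τ = σ * swp := aut_ext (by simp) (by simp)
theorem swp_σ : swp * σ = τ * swp := aut_ext (by simp) (by simp)
theorem kap_pi : pi' = kap * swp := aut_ext (by simp) (by simp)
theorem swp_τi : swp * τ⁻¹ = σ⁻¹ * swp := aut_ext (by simp) (by simp)

theorem conj_comm_aut (φ : MulAut F) (g : F) : φ * MulAut.conj g = MulAut.conj (φ g) * φ := by
  ext w; simp

/-- Outer automorphism group. -/
abbrev InnF : Subgroup (MulAut F) := (MulAut.conj : F →* MulAut F).range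

instance : InnF.Normal := by
  refine ⟨fun n hn g => ?_⟩
  obtain ⟨x, rfl⟩ := hn
  exact ⟨g x, by rw [conj_comm_aut]; group⟩

/-- The quotient by inner automorphisms. -/
abbrev Q := MulAut F ⧸ InnF

/-- The quotient map to the outer automorphism group. -/
def qq : MulAut F →* Q := QuotientGroup.mk' InnF

theorem qq_surj : Function.Surjective qq := QuotientGroup.mk'_surjective _

theorem qq_eq {φ ψ : MulAut F} (h : qq φ = qq ψ) : ∃ g, φ = MulAut.conj g * ψ := by
  have h' : qq (φ * ψ⁻¹) = 1 := by rw [map_mul, map_inv, h]; group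
  have : φ * ψ⁻¹ ∈ InnF := by
    have := (QuotientGroup.eq_one_iff (N := InnF) (φ * ψ⁻¹)).1 h'
    exact this
  obtain ⟨g, hg⟩ := this
  exact ⟨g, by rw [hg]; group⟩

theorem qq_conj (g : F) : qq (MulAut.conj g) = 1 :=
  (QuotientGroup.eq_one_iff (N := InnF) _).2 ⟨g, rfl⟩

theorem qq_of (g : F) {φ ψ : MulAut F} (h : φ = MulAut.conj g * ψ) : qq φ = qq ψ := by
  rw [h, map_mul, qq_conj, one_mul]

/-- class of σ -/
def qS : Q := qq σ
/-- class of τ -/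
def qT : Q := qq τ
/-- class of π -/
def qJ : Q := qq pi'
/-- class of ε -/
def qE : Q := qq eps

theorem rJS : qJ * qS = qT⁻¹ * qJ := by
  unfold qJ qS qT; rw [← map_inv, ← map_mul, ← map_mul]
  exact qq_of 1 (aut_ext (by simp) (by simp))

theorem rJT : qJ * qT = qS⁻¹ * qJ := by
  unfold qJ qS qT; rw [← map_inv, ← map_mul, ← map_mul]
  exact qq_of gb⁻¹ (aut_ext (by simp) (by simp))

theorem rES : qE * qS = qS⁻¹ * qE := by
  unfold qE qS; rw [← map_inv, ← map_mul, ← map_mul]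
  exact qq_of 1 (aut_ext (by simp) (by simp))

theorem rET : qE * qT = qT⁻¹ * qE := by
  unfold qE qT; rw [← map_inv, ← map_mul, ← map_mul]
  exact qq_of ga⁻¹ (aut_ext (by simp) (by simp))

theorem rEE : qE * qE = 1 := by
  unfold qE; rw [← map_mul, eps_eps, map_one]

theorem rJ4 : qJ * qJ * (qJ * qJ) = 1 := by
  unfold qJ; rw [← map_mul, pi_sq, ← map_mul, iot_iot, map_one]

theorem rEJ : qE * qJ = qJ⁻¹ * qE := by
  unfold qE qJ; rw [← map_inv, ← map_mul, ← map_mul]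
  exact qq_of 1 (aut_ext (by simp) (by simp))

theorem rS : qS = qT * qJ * qT := by
  unfold qS qJ qT; rw [← map_mul, ← map_mul]
  exact qq_of ga (aut_ext (by simp [mul_assoc]) (by simp [mul_assoc]))

theorem rT : qT = qS * qJ⁻¹ * qS := by
  unfold qS qJ qT; rw [← map_inv, ← map_mul, ← map_mul]
  exact qq_of gb (aut_ext (by simp [mul_assoc]) (by simp [mul_assoc]))
end AutBasics


section Counts

/-- weight of `a` -/
def wtA : Fin 2 → ℕ := ![1, 0]
/-- weight of `b` -/
def wtB : Fin 2 → ℕ := ![0, 1]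

/-- cyclic count -/
def Ncyc (wt : Fin 2 → ℕ) (w : F) : ℕ := sInf (Set.range fun g => wnu wt (g * w * g⁻¹))

theorem Ncyc_conj (wt : Fin 2 → ℕ) (w h : F) : Ncyc wt (h * w * h⁻¹) = Ncyc wt w := by
  unfold Ncyc; congr 1; ext n; constructor
  · rintro ⟨g, rfl⟩; exact ⟨g * h, by simp [mul_assoc]⟩
  · rintro ⟨g, rfl⟩; exact ⟨g * h⁻¹, by simp [mul_assoc]⟩

theorem Ncyc_isConj (wt : Fin 2 → ℕ) {v w : F} (h : IsConj v w) : Ncyc wt v = Ncyc wt w := by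
  obtain ⟨c, rfl⟩ := isConj_iff.1 h
  rw [Ncyc_conj]

theorem Ncyc_of_pow (wt : Fin 2 → ℕ) (w : F) (h : ∀ m : ℕ, wnu wt (w ^ m) = m * wnu wt w) :
    Ncyc wt w = wnu wt w := by
  apply le_antisymm
  · exact Nat.sInf_le ⟨1, by simp⟩
  · refine le_csInf (Set.range_nonempty _) ?_
    rintro _ ⟨g, rfl⟩
    by_contra hlt
    push Not at hlt
    have key : ∀ m : ℕ, wnu wt (w ^ m) ≤ 2 * wnu wt g + m * wnu wt (g * w * g⁻¹) := by
      intro m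
      have e : w ^ m = g⁻¹ * (g * w * g⁻¹) ^ m * g := by rw [conj_pow]; group
      have p : ∀ (x : F), wnu wt (x ^ m) ≤ m * wnu wt x := by
        intro x
        induction m with
        | zero => simp [wnu_one]
        | succ m ih =>
          rw [pow_succ]
          refine (wnu_mul_le _ _ _).trans ?_
          have := ih (by rw [conj_pow]; group)
          linarith
      rw [e]
      have h1 := wnu_mul_le wt (g⁻¹ * (g * w * g⁻¹) ^ m) g
      have h2 := wnu_mul_le wt g⁻¹ ((g * w * g⁻¹) ^ m)
      have h3 := wnu_inv wt g
      have h4 := p (g * w * g⁻¹)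
      omega
    have := key (2 * wnu wt g + 1)
    rw [h] at this
    have h5 : (2 * wnu wt g + 1) * (wnu wt (g * w * g⁻¹) + 1) ≤ (2 * wnu wt g + 1) * wnu wt w :=
      Nat.mul_le_mul_left _ hlt
    have : (2 * wnu wt g + 1) * (wnu wt (g * w * g⁻¹) + 1) = (2 * wnu wt g + 1) * wnu wt (g * w * g⁻¹) + (2 * wnu wt g + 1) := by ring
    omega

/-- signed letter `a` -/
def sa (s : Bool) : F := if s then ga else ga⁻¹

/-- The word with data `(sg, k)`. -/
def W (sg : ℕ → Bool) (k : ℕ → ℤ) : ℕ → F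
  | 0 => 1
  | n + 1 => W sg k n * (sa (sg n) * gb ^ k n)

/-- The word with data `(sg, k)` as a list. -/
def WL (sg : ℕ → Bool) (k : ℕ → ℤ) : ℕ → List (Fin 2 × Bool)
  | 0 => []
  | n + 1 => WL sg k n ++ ((0, sg n) :: List.replicate (k n).natAbs (1, decide (0 < k n)))

theorem mk_replicate (i : Fin 2) (n : ℤ) : FreeGroup.mk (List.replicate n.natAbs (i, decide (0 < n))) = FreeGroup.of i ^ n := by
  have key : ∀ (m : ℕ) (b : Bool), FreeGroup.mk (List.replicate m (i, b)) = (FreeGroup.mk [(i, b)]) ^ m := by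
    intro m b
    induction m with
    | zero => rfl
    | succ m ih => rw [List.replicate_succ, pow_succ', ← ih, FreeGroup.mul_mk]; rfl
  rw [key]
  rcases lt_trichotomy n 0 with h | h | h
  · have e : decide (0 < n) = false := by simp; omega
    rw [e, show FreeGroup.mk [(i, false)] = (FreeGroup.of i)⁻¹ from rfl, inv_pow, ← zpow_natCast, ← zpow_neg]
    congr 1; omega
  · simp [h]
  · have e : decide (0 < n) = true := by simpa using h
    rw [e, show FreeGroup.mk [(i, true)] = (FreeGroup.of i) from rfl, ← zpow_natCast]
    congr 1; omega

theorem mk_WL (sg : ℕ → Bool) (k : ℕ → ℤ) (n : ℕ) : FreeGroup.mk (WL sg k n) = W sg k n := by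
  induction n with
  | zero => rfl
  | succ n ih =>
    have h1 : sa (sg n) = FreeGroup.mk [(0, sg n)] := by
      unfold sa ga; cases sg n <;> rfl
    rw [WL, W, ← FreeGroup.mul_mk, ih, h1, gb, ← mk_replicate, FreeGroup.mul_mk]; rfl

/-- cyclic reducedness of data -/
def Wred (sg : ℕ → Bool) (k : ℕ → ℤ) : Prop := ∀ i, k i = 0 → sg (i + 1) = sg i

theorem WL_red (sg : ℕ → Bool) (k : ℕ → ℤ) (h : Wred sg k) (n : ℕ) : FreeGroup.IsReduced (WL sg k n) ∧
    ∀ x ∈ (WL sg k n).getLast?, x.1 = 0 → x.2 = sg n := by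
  induction n with
  | zero => simp [WL]
  | succ n ih =>
    obtain ⟨ih1, ih2⟩ := ih
    constructor
    · unfold FreeGroup.IsReduced at *
      rw [WL, List.isChain_append]
      refine ⟨ih1, ?_, ?_⟩
      · rw [List.isChain_cons]
        refine ⟨?_, List.isChain_replicate_of_rel _ (fun _ => rfl)⟩
        intro y hy hy'
        have : y ∈ List.replicate (k n).natAbs ((1 : Fin 2), decide (0 < k n)) := List.mem_of_mem_head? hy
        rw [List.mem_replicate] at this
        rw [this.2] at hy'
        simp at hy'
      · intro x hx y hy hxy
        simp at hy
        subst hy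
        exact ih2 x hx hxy
    · intro x hx hx0
      rw [WL, List.getLast?_append] at hx
      by_cases hk : k n = 0
      · simp [hk] at hx
        rw [← hx, h n hk]
      · have : ((0, sg n) :: List.replicate (k n).natAbs ((1 : Fin 2), decide (0 < k n))).getLast? = some (1, decide (0 < k n)) := by
          rw [List.getLast?_cons, List.getLast?_replicate]
          simp [hk]
        rw [this] at hx
        simp at hx
        rw [← hx] at hx0
        simp at hx0

theorem nA_W (sg : ℕ → Bool) (k : ℕ → ℤ) (h : Wred sg k) (n : ℕ) : wnu wtA (W sg k n) = n := by
  rw [← mk_WL, wnu_mk_red _ (WL_red sg k h n).1]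
  clear h
  induction n with
  | zero => simp [WL, lw]
  | succ n ih => rw [WL, lw_append, ih]; simp [lw, wtA]

theorem nB_W (sg : ℕ → Bool) (k : ℕ → ℤ) (h : Wred sg k) (n : ℕ) :
    wnu wtB (W sg k n) = ∑ i ∈ Finset.range n, (k i).natAbs := by
  rw [← mk_WL, wnu_mk_red _ (WL_red sg k h n).1]
  clear h
  induction n with
  | zero => simp [WL, lw]
  | succ n ih => rw [WL, lw_append, ih, Finset.sum_range_succ]; simp [lw, wtB]

theorem W_add (sg : ℕ → Bool) (k : ℕ → ℤ) (m n : ℕ) :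
    W sg k (m + n) = W sg k m * W (fun i => sg (m + i)) (fun i => k (m + i)) n := by
  induction n with
  | zero => simp [W]
  | succ n ih => rw [← add_assoc, W, W, ih, mul_assoc]

theorem W_pow (sg : ℕ → Bool) (k : ℕ → ℤ) (s : ℕ) (h1 : ∀ i, sg (s + i) = sg i) (h2 : ∀ i, k (s + i) = k i) (m : ℕ) :
    W sg k s ^ m = W sg k (m * s) := by
  induction m with
  | zero => simp [W]
  | succ m ih =>
    rw [pow_succ', ih, add_mul, one_mul, add_comm, W_add]
    simp only [h1, h2]

/-- periodic reduced cyclic data of period `s ≥ 1` -/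
structure Cyc (sg : ℕ → Bool) (k : ℕ → ℤ) (s : ℕ) : Prop where
  pos : 1 ≤ s
  per1 : ∀ i, sg (s + i) = sg i
  per2 : ∀ i, k (s + i) = k i
  red : Wred sg k

theorem Cyc.NA {sg k s} (h : Cyc sg k s) : Ncyc wtA (W sg k s) = s := by
  rw [Ncyc_of_pow, nA_W _ _ h.red]
  intro m
  rw [W_pow _ _ _ h.per1 h.per2, nA_W _ _ h.red, nA_W _ _ h.red]

theorem Cyc.NB {sg k s} (h : Cyc sg k s) : Ncyc wtB (W sg k s) = ∑ i ∈ Finset.range s, (k i).natAbs := by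
  rw [Ncyc_of_pow, nB_W _ _ h.red]
  intro m
  rw [W_pow _ _ _ h.per1 h.per2, nB_W _ _ h.red, nB_W _ _ h.red]
  induction m with
  | zero => simp
  | succ m ih =>
    rw [add_mul, one_mul, add_comm, Finset.sum_range_add, add_mul, one_mul, ← ih, add_comm]
    simp only [h.per2]

theorem wnu_gb_zpow (k : ℤ) : wnu wtA (gb ^ k) = 0 ∧ wnu wtB (gb ^ k) = k.natAbs := by
  have red : FreeGroup.IsReduced (List.replicate k.natAbs ((1 : Fin 2), decide (0 < k))) :=
    List.isChain_replicate_of_rel _ (fun _ => rfl)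
  rw [gb, ← mk_replicate, wnu_mk_red _ red, wnu_mk_red _ red]
  simp [lw, wtA, wtB]

theorem Ncyc_gb (k : ℤ) : Ncyc wtA (gb ^ k) = 0 ∧ Ncyc wtB (gb ^ k) = k.natAbs := by
  constructor
  · rw [Ncyc_of_pow, (wnu_gb_zpow k).1]
    intro m; rw [← zpow_natCast, ← zpow_mul, (wnu_gb_zpow _).1, (wnu_gb_zpow _).1, mul_zero]
  · rw [Ncyc_of_pow, (wnu_gb_zpow k).2]
    intro m; rw [← zpow_natCast, ← zpow_mul, (wnu_gb_zpow _).2, (wnu_gb_zpow _).2, Int.natAbs_mul, mul_comm]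
    simp

/-- indicator of negative sign -/
def eI (s : Bool) : ℤ := if s then 0 else 1

/-- turning number -/
def eta (sg : ℕ → Bool) (i : ℕ) : ℤ := 1 - eI (sg i) - eI (sg (i + 1))

theorem σ_zpow_gb (j : ℤ) : (σ ^ j) gb = gb := by
  induction j with
  | zero => simp
  | succ i ih => rw [zpow_add_one, MulAut.mul_apply, σ_gb, ih]
  | pred i ih => rw [zpow_sub_one, MulAut.mul_apply, σi_gb, ih]

theorem σ_zpow_ga (j : ℤ) : (σ ^ j) ga = ga * gb ^ j := by
  induction j with
  | zero => simp
  | succ i ih => rw [zpow_add_one, MulAut.mul_apply, σ_ga, map_mul, ih, σ_zpow_gb, zpow_add_one, mul_assoc]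
  | pred i ih => rw [zpow_sub_one, MulAut.mul_apply, σi_ga, map_mul, ih, map_inv, σ_zpow_gb, zpow_sub_one, mul_assoc]

theorem σ_sa (j : ℤ) (s : Bool) : (σ ^ j) (sa s) = gb ^ (-(j * eI s)) * sa s * gb ^ (j * (1 - eI s)) := by
  cases s
  · simp [sa, eI, σ_zpow_ga]
  · simp [sa, eI, σ_zpow_ga]

theorem σ_W (j : ℤ) (sg : ℕ → Bool) (k : ℕ → ℤ) (n : ℕ) :
    (σ ^ j) (W sg k n) = gb ^ (-(j * eI (sg 0))) * W sg (fun i => k i + j * eta sg i) n * gb ^ (j * eI (sg n)) := by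
  induction n with
  | zero => simp [W]
  | succ n ih =>
    rw [W, W, map_mul, map_mul, ih, σ_sa, map_zpow, σ_zpow_gb]
    have : k n + j * eta sg n = j * eI (sg n) + -(j * eI (sg n)) + (j * (1 - eI (sg n))) + k n - j * eI (sg (n + 1)) := by
      unfold eta; ring
    simp only [this, mul_assoc, ← zpow_add]
    congr 2
    rw [← mul_assoc, ← zpow_add]
    simp only [add_neg_cancel, zpow_zero, one_mul]
    congr 2; ring

theorem Cyc.σ {sg k s} (h : Cyc sg k s) (j : ℤ) : Cyc sg (fun i => k i + j * eta sg i) s := by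
  have e : ∀ i, eta sg (s + i) = eta sg i := fun i => by unfold eta; rw [h.per1, add_assoc, h.per1]
  refine ⟨h.pos, h.per1, fun i => ?_, fun i hi => ?_⟩
  · simp only [h.per2, e]
  · by_contra hne
    have : eta sg i = 0 := by
      unfold eta eI; revert hne; cases sg (i + 1) <;> cases sg i <;> simp
    rw [this] at hi
    exact hne (h.red i (by simpa using hi))

theorem Cyc.σ_conj {sg k s} (h : Cyc sg k s) (j : ℤ) :
    IsConj ((_root_.σ ^ j) (W sg k s)) (W sg (fun i => k i + j * eta sg i) s) := by
  rw [isConj_iff]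
  refine ⟨gb ^ (j * eI (sg 0)), ?_⟩
  have := h.per1 0
  rw [add_zero] at this
  rw [σ_W, this]
  simp [mul_assoc]

theorem isConj_aut {v w : F} (φ : MulAut F) (h : IsConj v w) : IsConj (φ v) (φ w) :=
  φ.toMonoidHom.map_isConj h

end Counts


section CyclicForm

theorem W_congr {sg sg' : ℕ → Bool} {k k' : ℕ → ℤ} (n : ℕ) (h1 : ∀ i < n, sg i = sg' i) (h2 : ∀ i < n, k i = k' i) :
    W sg k n = W sg' k' n := by
  induction n with
  | zero => rfl
  | succ n ih =>
    rw [W, W, ih (fun i hi => h1 i (by omega)) (fun i hi => h2 i (by omega)), h1 n (by omega), h2 n (by omega)]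

theorem exists_form (w : F) : ∃ (n : ℕ) (sg : ℕ → Bool) (k : ℕ → ℤ) (j : ℤ) (i : ℤ),
    w = gb ^ i * (W sg k n * gb ^ j) := by
  have stepb : ∀ (e : ℤ) (w : F), (∃ (n : ℕ) (sg : ℕ → Bool) (k : ℕ → ℤ) (j : ℤ) (i : ℤ),
      w = gb ^ i * (W sg k n * gb ^ j)) → ∃ (n : ℕ) (sg : ℕ → Bool) (k : ℕ → ℤ) (j : ℤ) (i : ℤ),
      w * gb ^ e = gb ^ i * (W sg k n * gb ^ j) := by
    rintro e w ⟨n, sg, k, j, i, rfl⟩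
    exact ⟨n, sg, k, j + e, i, by rw [zpow_add]; group⟩
  have stepa : ∀ (e : Bool) (w : F), (∃ (n : ℕ) (sg : ℕ → Bool) (k : ℕ → ℤ) (j : ℤ) (i : ℤ),
      w = gb ^ i * (W sg k n * gb ^ j)) → ∃ (n : ℕ) (sg : ℕ → Bool) (k : ℕ → ℤ) (j : ℤ) (i : ℤ),
      w * sa e = gb ^ i * (W sg k n * gb ^ j) := by
    rintro e w ⟨n, sg, k, j, i, rfl⟩
    rcases n with _ | n
    · refine ⟨1, fun _ => e, fun _ => 0, 0, i + j, ?_⟩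
      simp [W, zpow_add, mul_assoc]
    · refine ⟨n + 2, fun i => if i ≤ n then sg i else e, fun i => if i < n then k i else if i = n then k n + j else 0, 0, i, ?_⟩
      rw [W, W, W]
      have := W_congr (sg := fun i => if i ≤ n then sg i else e) (sg' := sg)
        (k := fun i => if i < n then k i else if i = n then k n + j else 0) (k' := k) n
        (fun i hi => by simp [hi.le]) (fun i hi => by simp [hi])
      rw [this]
      simp [zpow_add, mul_assoc]
  refine F_induction (p := fun w => ∃ (n : ℕ) (sg : ℕ → Bool) (k : ℕ → ℤ) (j : ℤ) (i : ℤ),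
      w = gb ^ i * (W sg k n * gb ^ j)) ?_ ?_ ?_ ?_ ?_ w
  · exact ⟨0, fun _ => true, fun _ => 0, 0, 0, by simp [W]⟩
  · intro w h; simpa [sa] using stepa true w h
  · intro w h; simpa using stepb 1 w h
  · intro w h; simpa [sa] using stepa false w h
  · intro w h; simpa using stepb (-1) w h

theorem W_shift_conj (sg : ℕ → Bool) (k : ℕ → ℤ) (s m : ℕ) (h1 : ∀ i, sg (s + i) = sg i) (h2 : ∀ i, k (s + i) = k i) :
    IsConj (W sg k s) (W (fun i => sg (m + i)) (fun i => k (m + i)) s) := by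
  rw [isConj_iff]
  refine ⟨(W sg k m)⁻¹, ?_⟩
  have e1 := W_add sg k m s
  have e2 := W_add sg k s m
  simp only [h1, h2] at e2
  rw [inv_inv, mul_assoc, ← e2, add_comm, e1]; group

/-- Every element is conjugate to a power of `b` or to a cyclically reduced word. -/
theorem cyclic_form (w : F) : (∃ k : ℤ, IsConj w (gb ^ k)) ∨ ∃ sg k s, Cyc sg k s ∧ IsConj w (W sg k s) := by
  classical
  let P : ℕ → Prop := fun n => ∃ (sg : ℕ → Bool) (k : ℕ → ℤ) (j : ℤ), IsConj w (W sg k n * gb ^ j)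
  have hP : ∃ n, P n := by
    obtain ⟨n, sg, k, j, i, h⟩ := exists_form w
    refine ⟨n, sg, k, j + i, ?_⟩
    rw [isConj_iff]
    exact ⟨gb ^ (-i), by rw [h, zpow_add]; group⟩
  obtain ⟨n, ⟨sg, k, j, hc⟩, hmin⟩ : ∃ n, P n ∧ ∀ m < n, ¬ P m :=
    ⟨Nat.find hP, Nat.find_spec hP, fun m hm => Nat.find_min hP hm⟩
  rcases Nat.eq_zero_or_pos n with rfl | hn
  · left; exact ⟨j, by simpa [W] using hc⟩
  right
  let sg' : ℕ → Bool := fun i => sg (i % n)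
  let k' : ℕ → ℤ := fun i => k (i % n) + if i % n = n - 1 then j else 0
  have p1 : ∀ i, sg' (n + i) = sg' i := fun i => by simp [sg']
  have p2 : ∀ i, k' (n + i) = k' i := fun i => by simp [k']
  have hW : W sg' k' n = W sg k n * gb ^ j := by
    obtain ⟨m, rfl⟩ : ∃ m, n = m + 1 := ⟨n - 1, by omega⟩
    rw [W, W, W_congr (sg' := sg) (k' := k) m]
    · have : m % (m + 1) = m := Nat.mod_eq_of_lt (by omega)
      simp [sg', k', this, zpow_add, mul_assoc]
    · intro i hi; simp [sg', Nat.mod_eq_of_lt (show i < m + 1 by omega)]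
    · intro i hi; simp [k', Nat.mod_eq_of_lt (show i < m + 1 by omega)]; omega
  rw [← hW] at hc
  refine ⟨sg', k', n, ⟨hn, p1, p2, ?_⟩, hc⟩
  intro i hi
  by_contra hne
  have hn2 : 2 ≤ n := by
    by_contra h
    have : n = 1 := by omega
    have := p1 i
    rw [show n + i = i + 1 by omega] at this
    exact hne this
  obtain ⟨m, rfl⟩ : ∃ m, n = m + 2 := ⟨n - 2, by omega⟩
  refine hmin m (by omega) ⟨fun t => sg' (i + 2 + t), fun t => k' (i + 2 + t), k' (i + 2 + (m + 1)), ?_⟩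
  refine hc.trans ?_
  have := W_shift_conj sg' k' (m + 2) (i + 2) p1 p2
  have eW : ∀ (f : ℕ → Bool) (h : ℕ → ℤ), W f h (m + 2) =
      W f h m * (sa (f m) * gb ^ h m) * (sa (f (m + 1)) * gb ^ h (m + 1)) := fun f h => rfl
  rw [eW (fun t => sg' (i + 2 + t))] at this
  have e1 : sg' (i + 2 + m) = sg' i := by rw [← p1 i]; congr 1; omega
  have e2 : sg' (i + 2 + (m + 1)) = sg' (i + 1) := by rw [← p1 (i + 1)]; congr 1; omega
  have e3 : k' (i + 2 + m) = 0 := by rw [← hi, ← p2 i]; congr 1; omega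
  rw [e1, e2, e3] at this
  have e4 : sa (sg' i) * sa (sg' (i + 1)) = 1 := by
    revert hne; unfold sa; cases sg' (i + 1) <;> cases sg' i <;> simp
  have e5 : ∀ x y : F, x * (sa (sg' i) * gb ^ (0:ℤ)) * (sa (sg' (i + 1)) * y) = x * y := by
    intro x y
    rw [zpow_zero, mul_one, mul_assoc, ← mul_assoc (sa _), e4, one_mul]
  rw [e5] at this
  exact this

/-- The count formulas for all `σ ^ j`. -/
theorem NB_σ {sg k s} (h : Cyc sg k s) {x : F} (hx : IsConj x (W sg k s)) (j : ℤ) :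
    Ncyc wtA ((σ ^ j) x) = s ∧ Ncyc wtB ((σ ^ j) x) = ∑ i ∈ Finset.range s, (k i + j * eta sg i).natAbs := by
  have c := (isConj_aut (σ ^ j) hx).trans (h.σ_conj j)
  rw [Ncyc_isConj _ c, Ncyc_isConj _ c]
  exact ⟨(h.σ j).NA, (h.σ j).NB⟩

theorem NB_gb {x : F} {k : ℤ} (hx : IsConj x (gb ^ k)) (j : ℤ) :
    Ncyc wtA ((σ ^ j) x) = 0 ∧ Ncyc wtB ((σ ^ j) x) = k.natAbs := by
  have c := isConj_aut (σ ^ j) hx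
  rw [map_zpow, σ_zpow_gb] at c
  rw [Ncyc_isConj _ c, Ncyc_isConj _ c]
  exact Ncyc_gb k

theorem NA_σ (x : F) (j : ℤ) : Ncyc wtA ((σ ^ j) x) = Ncyc wtA x := by
  rcases cyclic_form x with ⟨k, hk⟩ | ⟨sg, k, s, h, hx⟩
  · have h0 := NB_gb hk 0
    rw [(NB_gb hk j).1, ← h0.1]; simp
  · have h0 := NB_σ h hx 0
    rw [(NB_σ h hx j).1, ← h0.1]; simp

theorem NB_convex (x : F) : 2 * Ncyc wtB x ≤ Ncyc wtB (σ x) + Ncyc wtB (σ⁻¹ x) := by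
  rcases cyclic_form x with ⟨k, hk⟩ | ⟨sg, k, s, h, hx⟩
  · have h0 := (NB_gb hk 0).2
    have h1 := (NB_gb hk 1).2
    have h2 := (NB_gb hk (-1)).2
    simp only [zpow_zero, MulAut.one_apply, zpow_one, zpow_neg] at h0 h1 h2
    omega
  · have h0 := (NB_σ h hx 0).2
    have h1 := (NB_σ h hx 1).2
    have h2 := (NB_σ h hx (-1)).2
    simp only [zpow_zero, MulAut.one_apply, zpow_one, zpow_neg] at h0 h1 h2
    rw [h0, h1, h2, Finset.mul_sum, ← Finset.sum_add_distrib]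
    refine Finset.sum_le_sum fun i _ => ?_
    omega

theorem wnu_aut_le (wt wt' : Fin 2 → ℕ) (φ : MulAut F) (ha : wnu wt (φ ga) ≤ wt' 0) (hb : wnu wt (φ gb) ≤ wt' 1)
    (g : F) : wnu wt (φ g) ≤ wnu wt' g := by
  refine wnu_lift_le wt wt' φ.toMonoidHom ?_ g
  intro x; fin_cases x
  · exact ha
  · exact hb

theorem wnu_ga (wt : Fin 2 → ℕ) : wnu wt ga = wt 0 := by
  simp [wnu, lw, ga]
theorem wnu_gb (wt : Fin 2 → ℕ) : wnu wt gb = wt 1 := by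
  simp [wnu, lw, gb]

theorem wnu_swp_A (g : F) : wnu wtA (swp g) = wnu wtB g := by
  apply le_antisymm
  · exact wnu_aut_le _ _ _ (by simp [wnu_gb, wtA, wtB]) (by simp [wnu_ga, wtA, wtB]) g
  · have := wnu_aut_le wtB wtA swp (by simp [wnu_gb, wtA, wtB]) (by simp [wnu_ga, wtA, wtB]) (swp g)
    rwa [← MulAut.mul_apply, swp_swp, MulAut.one_apply] at this

theorem Ncyc_aut (wt wt' : Fin 2 → ℕ) (φ : MulAut F) (h : ∀ g, wnu wt (φ g) = wnu wt' g) (x : F) :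
    Ncyc wt (φ x) = Ncyc wt' x := by
  unfold Ncyc; congr 1; ext n; constructor
  · rintro ⟨g, rfl⟩; exact ⟨φ⁻¹ g, by simp [← h]⟩
  · rintro ⟨g, rfl⟩; exact ⟨φ g, by simp [← h]⟩

theorem NA_swp (x : F) : Ncyc wtA (swp x) = Ncyc wtB x := Ncyc_aut _ _ _ wnu_swp_A x

theorem NB_swp (x : F) : Ncyc wtB (swp x) = Ncyc wtA x := by
  rw [← NA_swp, ← MulAut.mul_apply, swp_swp]; rfl

theorem wnu_kap (wt : Fin 2 → ℕ) (g : F) : wnu wt (kap g) = wnu wt g := by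
  have h : ∀ g, wnu wt (kap g) ≤ wnu wt g :=
    wnu_aut_le _ _ _ (by simp [wnu_inv, wnu_ga]) (by simp [wnu_gb])
  apply le_antisymm (h g)
  have := h (kap g)
  rwa [← MulAut.mul_apply, kap_kap, MulAut.one_apply] at this

theorem N_kap (wt : Fin 2 → ℕ) (x : F) : Ncyc wt (kap x) = Ncyc wt x := Ncyc_aut _ _ _ (wnu_kap wt) x

theorem NB_pi (x : F) : Ncyc wtB (pi' x) = Ncyc wtA x := by
  rw [kap_pi, MulAut.mul_apply, N_kap, NB_swp]

theorem NB_pii (x : F) : Ncyc wtA (pi'⁻¹ x) = Ncyc wtB x := by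
  rw [← NB_pi]; simp

theorem NA_pi (x : F) : Ncyc wtA (pi' x) = Ncyc wtB x := by
  rw [kap_pi, MulAut.mul_apply, N_kap, NA_swp]

theorem NB_τ (x : F) : Ncyc wtB (τ x) = Ncyc wtB x ∧ Ncyc wtB (τ⁻¹ x) = Ncyc wtB x := by
  have h1 := NA_σ (swp x) 1
  have h2 := NA_σ (swp x) (-1)
  simp only [zpow_one, zpow_neg] at h1 h2
  rw [← MulAut.mul_apply] at h1 h2
  rw [← swp_τ, MulAut.mul_apply, NA_swp, NA_swp] at h1
  rw [← swp_τi, MulAut.mul_apply, NA_swp, NA_swp] at h2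
  exact ⟨h1, h2⟩

theorem Ncyc_qq (wt : Fin 2 → ℕ) {φ ψ : MulAut F} (h : qq φ = qq ψ) (x : F) : Ncyc wt (φ x) = Ncyc wt (ψ x) := by
  obtain ⟨g, rfl⟩ := qq_eq h
  simp only [MulAut.mul_apply, MulAut.conj_apply, Ncyc_conj]

theorem NB_σ_τ (x : F) : Ncyc wtB (σ x) = Ncyc wtA (τ x) ∧ Ncyc wtB (σ⁻¹ x) = Ncyc wtA (τ⁻¹ x) := by
  constructor
  · have h : qq σ = qq (τ * pi' * τ) := by rw [map_mul, map_mul]; exact rS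
    rw [Ncyc_qq _ h, MulAut.mul_apply, MulAut.mul_apply, (NB_τ _).1, NB_pi]
  · have h : qq σ⁻¹ = qq (τ⁻¹ * pi'⁻¹ * τ⁻¹) := by
      simp only [map_mul, map_inv]
      have := congrArg (·⁻¹) rS
      simpa [mul_assoc, qS, qT, qJ] using this
    rw [Ncyc_qq _ h, MulAut.mul_apply, MulAut.mul_apply, (NB_τ _).2]
    rw [kap_pi, mul_inv_rev, inv_eq_of_mul_eq_one_right swp_swp, inv_eq_of_mul_eq_one_right kap_kap,
      MulAut.mul_apply, NB_swp, N_kap]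

end CyclicForm


section HypCase
open scoped commutatorElement

/-- Integral Heisenberg group. -/
@[ext] structure Heis where
  x : ℤ
  y : ℤ
  z : ℤ

namespace Heis
instance : Mul Heis := ⟨fun p q => ⟨p.x + q.x, p.y + q.y, p.z + q.z + p.x * q.y⟩⟩
instance : One Heis := ⟨⟨0, 0, 0⟩⟩
instance : Inv Heis := ⟨fun p => ⟨-p.x, -p.y, -p.z + p.x * p.y⟩⟩
@[simp] theorem mul_x (p q : Heis) : (p * q).x = p.x + q.x := rfl
@[simp] theorem mul_y (p q : Heis) : (p * q).y = p.y + q.y := rfl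
@[simp] theorem mul_z (p q : Heis) : (p * q).z = p.z + q.z + p.x * q.y := rfl
@[simp] theorem one_x : (1 : Heis).x = 0 := rfl
@[simp] theorem one_y : (1 : Heis).y = 0 := rfl
@[simp] theorem one_z : (1 : Heis).z = 0 := rfl
@[simp] theorem inv_x (p : Heis) : (p⁻¹).x = -p.x := rfl
@[simp] theorem inv_y (p : Heis) : (p⁻¹).y = -p.y := rfl
@[simp] theorem inv_z (p : Heis) : (p⁻¹).z = -p.z + p.x * p.y := rfl
instance : Group Heis := Group.ofLeftAxioms
  (fun a b c => by ext <;> simp <;> ring) (fun a => by ext <;> simp) (fun a => by ext <;> simp)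

theorem triple (u v : Heis) : ⁅⁅u, v⁆, u⁆ = 1 := by
  simp only [commutatorElement_def]
  ext <;> simp <;> ring
end Heis

/-- Map to the Heisenberg group. -/
def hh : F →* Heis := FreeGroup.lift ![⟨1, 0, 0⟩, ⟨0, 1, 0⟩]

theorem hh_ga : hh ga = ⟨1, 0, 0⟩ := by simp [hh, ga]
theorem hh_gb : hh gb = ⟨0, 1, 0⟩ := by simp [hh, gb]

theorem hh_alt (sg : ℕ → Bool) (k : ℕ → ℤ) (h1 : ∀ i, sg (i + 1) = !sg i) (h2 : ∀ i, k (i + 1) = - k i)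
    (h3 : (k 0).natAbs = 1) (m : ℕ) : sg (2 * m) = sg 0 ∧ k (2 * m) = k 0 ∧
    hh (W sg k (2 * m)) = ⟨0, 0, m * ((if sg 0 then 1 else -1) * k 0)⟩ := by
  induction m with
  | zero => refine ⟨rfl, rfl, ?_⟩; simp [W]; rfl
  | succ m ih =>
    obtain ⟨i1, i2, i3⟩ := ih
    have e1 : sg (2 * m + 2) = sg 0 := by rw [h1, h1, i1]; simp
    have e2 : k (2 * m + 2) = k 0 := by rw [h2, h2, i2]; simp
    refine ⟨e1, e2, ?_⟩
    rw [show 2 * (m + 1) = 2 * m + 2 by ring, W, W, map_mul, map_mul, i3, h1, h2, i1, i2]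
    have hk : k 0 = 1 ∨ k 0 = -1 := by omega
    cases sg 0 <;> rcases hk with hk | hk <;> rw [hk] <;> ext <;>
      simp [sa, hh_ga, hh_gb] <;> ring

theorem lemA0 {sg k s} (h : Cyc sg k s) {x : F} (hx : IsConj x (W sg k s))
    (h0 : Ncyc wtB x = s) (h1 : Ncyc wtB (σ x) = s) (h2 : Ncyc wtB (σ⁻¹ x) = s) :
    ∀ i, (k i).natAbs = 1 := by
  have a0 := (NB_σ h hx 0).2
  have a1 := (NB_σ h hx 1).2
  have a2 := (NB_σ h hx (-1)).2
  simp only [zpow_zero, MulAut.one_apply, zpow_one, zpow_neg, zero_mul, add_zero] at a0 a1 a2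
  have et : ∀ i, k i = 0 → (eta sg i).natAbs = 1 := by
    intro i hi
    have := h.red i hi
    unfold eta eI; rw [this]; cases sg i <;> simp
  have hz : ∀ i ∈ Finset.range s, (k i).natAbs ≠ 0 := by
    by_contra hne
    push Not at hne
    obtain ⟨i, hi, hki⟩ := hne
    have lt : ∑ i ∈ Finset.range s, 2 * (k i).natAbs <
        ∑ i ∈ Finset.range s, ((k i + 1 * eta sg i).natAbs + (k i + -1 * eta sg i).natAbs) := by
      refine Finset.sum_lt_sum (fun i _ => by omega) ⟨i, hi, ?_⟩
      have := et i (by omega)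
      omega
    rw [Finset.sum_add_distrib, ← Finset.mul_sum] at lt
    omega
  have all : ∀ i ∈ Finset.range s, (k i).natAbs = 1 := by
    have e : ∑ i ∈ Finset.range s, 1 = ∑ i ∈ Finset.range s, (k i).natAbs := by
      rw [← a0, h0]; simp
    have := (Finset.sum_eq_sum_iff_of_le (fun i hi => Nat.one_le_iff_ne_zero.2 (hz i hi))).1 e
    exact fun i hi => (this i hi).symm
  intro i
  have per : ∀ m i, k (m * s + i) = k i := by
    intro m i
    induction m with
    | zero => simp
    | succ m ih => rw [← ih, ← h.per2 (m * s + i)]; congr 1; ring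
  have := h.pos
  rw [← Nat.div_add_mod i s, mul_comm, per]
  exact all _ (Finset.mem_range.2 (Nat.mod_lt _ (by omega)))

theorem lemA {sg k s} (h : Cyc sg k s) {x : F} (hx : IsConj x (W sg k s))
    (h0 : Ncyc wtB x = s) (h1 : Ncyc wtB (σ x) = s) (h2 : Ncyc wtB (σ⁻¹ x) = s)
    (h3 : Ncyc wtB (σ (σ x)) = s) :
    (∀ i, (k i).natAbs = 1) ∧ (∀ i, eta sg i = 0) ∧ ∀ i, sg (i + 1) = !sg i := by
  have A := lemA0 h hx h0 h1 h2
  have hx' : IsConj (σ x) (W sg (fun i => k i + 1 * eta sg i) s) := by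
    have := (isConj_aut (σ ^ (1:ℤ)) hx).trans (h.σ_conj 1)
    simpa using this
  have B := lemA0 (h.σ 1) hx' h1 h3 (by simpa using h0)
  have E : ∀ i, eta sg i = 0 := by
    intro i
    have a := A i
    have b : (k i + 1 * eta sg i).natAbs = 1 := B i
    have c : eta sg i = 0 ∨ eta sg i = 1 ∨ eta sg i = -1 := by
      unfold eta eI; cases sg i <;> cases sg (i + 1) <;> simp
    omega
  refine ⟨A, E, fun i => ?_⟩
  have := E i
  revert this
  unfold eta eI; cases sg i <;> cases sg (i + 1) <;> simp

/-- sign of a Boolean -/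
def sI (s : Bool) : ℤ := if s then 1 else -1

theorem swp_W (sg : ℕ → Bool) (k : ℕ → ℤ) (hk : ∀ i, (k i).natAbs = 1) (n : ℕ) :
    swp (W sg k n) = gb ^ (sI (sg 0)) * W (fun i => decide (0 < k i)) (fun i => sI (sg (i + 1))) n *
      gb ^ (- sI (sg n)) := by
  induction n with
  | zero => simp [W]
  | succ n ih =>
    rw [W, W, map_mul, ih, map_mul, map_zpow, swp_gb]
    have e1 : swp (sa (sg n)) = gb ^ sI (sg n) := by
      unfold sa sI; cases sg n <;> simp
    have e2 : ga ^ k n = sa (decide (0 < k n)) := by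
      have : k n = 1 ∨ k n = -1 := by have := hk n; omega
      rcases this with h | h <;> simp [h, sa]
    rw [e1, e2]
    simp [mul_assoc]

theorem swp_data {sg k s} (h : Cyc sg k s) (hk : ∀ i, (k i).natAbs = 1) {x : F} (hx : IsConj x (W sg k s)) :
    Cyc (fun i => decide (0 < k i)) (fun i => sI (sg (i + 1))) s ∧
    IsConj (swp x) (W (fun i => decide (0 < k i)) (fun i => sI (sg (i + 1))) s) := by
  refine ⟨⟨h.pos, fun i => by simp only [h.per2], fun i => by simp only [add_assoc, h.per1], ?_⟩, ?_⟩
  · intro i hi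
    exfalso; revert hi; unfold sI; simp only; split_ifs <;> simp
  · refine (isConj_aut swp hx).trans ?_
    have := h.per1 0
    rw [add_zero] at this
    rw [isConj_iff]
    refine ⟨gb ^ (- sI (sg 0)), ?_⟩
    rw [swp_W _ _ hk, this]
    simp [mul_assoc]

/-- The algebraic contradiction at a `σ` step followed by a `τ` step. -/
theorem no_flat (N : ℕ) (u v : F) (x : F) (hxw : x = ⁅⁅u, v⁆, u⁆) (hx1 : x ≠ 1)
    (hA : Ncyc wtA x = N) (h0 : Ncyc wtB x = N) (h1 : Ncyc wtB (σ x) = N) (h2 : Ncyc wtB (σ⁻¹ x) = N)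
    (h3 : Ncyc wtB (σ (σ x)) = N) (t1 : Ncyc wtA (τ (σ x)) = N) (t2 : Ncyc wtA (τ⁻¹ (σ x)) = N)
    (t3 : Ncyc wtA (τ (τ (σ x))) = N) : False := by
  rcases cyclic_form x with ⟨k, hk⟩ | ⟨sg, k, s, h, hx⟩
  · have b := NB_gb hk 0
    simp only [zpow_zero, MulAut.one_apply] at b
    have : k = 0 := by omega
    rw [this, zpow_zero] at hk
    exact hx1 (isConj_one_left.1 hk)
  · have hs : s = N := by
      have := (NB_σ h hx 0).1
      simp only [zpow_zero, MulAut.one_apply] at this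
      omega
    subst hs
    obtain ⟨a1, a2, a3⟩ := lemA h hx h0 h1 h2 h3
    have hx' : IsConj (σ x) (W sg k s) := by
      have := (isConj_aut (σ ^ (1:ℤ)) hx).trans (h.σ_conj 1)
      simpa [a2] using this
    obtain ⟨c1, c2⟩ := swp_data h a1 hx'
    have m1 : ∀ y, σ (swp y) = swp (τ y) := fun y => by
      rw [← MulAut.mul_apply, ← swp_τ]; rfl
    have m2 : ∀ y, σ⁻¹ (swp y) = swp (τ⁻¹ y) := fun y => by
      rw [← MulAut.mul_apply, ← swp_τi]; rfl
    have hA' : Ncyc wtA (σ x) = s := by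
      have := NA_σ x 1
      simp only [zpow_one] at this
      omega
    obtain ⟨b1, b2, b3⟩ := lemA c1 c2 (by rw [NB_swp]; exact hA') (by rw [m1, NB_swp]; exact t1)
      (by rw [m2, NB_swp]; exact t2) (by rw [m1, m1, NB_swp]; exact t3)
    have kalt : ∀ i, k (i + 1) = - k i := by
      intro i
      have q1 := a1 i
      have q2 := a1 (i + 1)
      have q3 := b3 i
      have : (0 < k (i + 1)) ↔ ¬ (0 < k i) := by
        by_cases h1 : 0 < k (i + 1) <;> by_cases h2 : 0 < k i <;> simp [h1, h2] at q3 ⊢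
      omega
    have hev : Even s := by
      by_contra hodd
      rw [Nat.not_even_iff_odd] at hodd
      obtain ⟨m, hm⟩ := hodd
      have e := (hh_alt sg k a3 kalt (a1 0) m).1
      have p := h.per1 0
      rw [add_zero, hm, a3, e] at p
      simp at p
    obtain ⟨m, hm⟩ := hev
    have e := (hh_alt sg k a3 kalt (a1 0) m).2.2
    have hx1 : hh x = 1 := by
      rw [hxw]; simp only [map_commutatorElement, Heis.triple]
    have hc := hh.map_isConj hx
    rw [hx1, hm, ← two_mul, e] at hc
    have hc' := isConj_one_right.1 hc
    have hz := congrArg Heis.z hc'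
    simp only [Heis.one_z] at hz
    have hp := h.pos
    have hm0 : (m : ℤ) ≠ 0 := by omega
    have hk0 : k 0 ≠ 0 := by have := a1 0; omega
    have : (m : ℤ) * ((if sg 0 then 1 else -1) * k 0) ≠ 0 := by
      apply mul_ne_zero hm0 (mul_ne_zero _ hk0)
      split_ifs <;> simp
    exact this (by first | exact hz | exact hz.symm)

end HypCase


section Hyp
open scoped commutatorElement

theorem const_of_convex (f : ℕ → ℕ) (m : ℕ) (hm : 0 < m) (hp : ∀ n, f (n + m) = f n)
    (hc : ∀ n, 2 * f (n + 1) ≤ f n + f (n + 2)) (n : ℕ) : f (n + 1) = f n := by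
  have anti : ∀ n, f (n + 1) ≤ f n := by
    intro n
    by_contra h
    push Not at h
    have key : ∀ j, f (n + j) + 1 ≤ f (n + j + 1) ∧ f n + j ≤ f (n + j) := by
      intro j
      induction j with
      | zero => exact ⟨h, by simp⟩
      | succ j ih =>
        have := hc (n + j)
        rw [show n + (j + 1) = n + j + 1 by ring]
        rw [show n + j + 1 + 1 = n + j + 2 by ring]
        omega
    have := (key m).2
    rw [hp] at this
    omega
  have mono : ∀ j, f (n + 1 + j) ≤ f (n + 1) := by
    intro j
    induction j with
    | zero => simp
    | succ j ih => exact (anti (n + 1 + j)).trans ih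
  have h1 := mono (m - 1)
  rw [show n + 1 + (m - 1) = n + m by omega, hp] at h1
  exact le_antisymm (anti n) h1

/-- letters -/
def lt' (b : Bool) : MulAut F := if b then σ else τ

/-- chains -/
def Ch (l : List Bool) : MulAut F := (l.map lt').prod

/-- partial products -/
def Th (y : ℕ → Bool) : ℕ → MulAut F
  | 0 => 1
  | n + 1 => lt' (y n) * Th y n

theorem Th_per (y : ℕ → Bool) (m : ℕ) (hy : ∀ n, y (n + m) = y n) (n : ℕ) : Th y (n + m) = Th y n * Th y m := by
  induction n with
  | zero => simp [Th]
  | succ n ih => rw [show n + 1 + m = n + m + 1 by ring, Th, ih, hy, Th, mul_assoc]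

theorem Th_eq (r : List Bool) (n : ℕ) (hn : n ≤ r.length) :
    Th (fun i => r.getD (i % r.length) true) n = Ch (r.take n).reverse := by
  induction n with
  | zero => simp [Th, Ch]
  | succ n ih =>
    rw [Th, ih (by omega), ← List.take_append_getElem (by omega : n < r.length)]
    have : r.getD (n % r.length) true = r[n]'(by omega) := by
      rw [Nat.mod_eq_of_lt (by omega)]
      exact List.getD_eq_getElem _ _ _
    rw [this, List.reverse_append, Ch, Ch, List.reverse_singleton, List.singleton_append, List.map_cons, List.prod_cons]

theorem turn (y : ℕ → Bool) (m : ℕ) (hm : 0 < m) (hy : ∀ n, y (n + m) = y n) (h1 : ∃ i, y i = true) (h2 : ∃ i, y i = false)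
    (n0 : ℕ) : ∃ n, n0 ≤ n ∧ y n = true ∧ y (n + 1) = false := by
  by_contra H
  push Not at H
  obtain ⟨i, hi⟩ := h1
  obtain ⟨j, hj⟩ := h2
  have P : ∀ k n, y (n + k * m) = y n := by
    intro k n
    induction k with
    | zero => simp
    | succ k ih => rw [show n + (k + 1) * m = n + k * m + m by ring, hy, ih]
  have T : ∀ k, y (i + n0 * m + k) = true := by
    intro k
    induction k with
    | zero => rw [add_zero, P, hi]
    | succ k ih =>
      have := H (i + n0 * m + k) (by nlinarith) ih
      simpa [add_assoc] using this
  have A : i + n0 * m ≤ j + (i + n0) * m := by nlinarith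
  have := T (j + (i + n0) * m - (i + n0 * m))
  rw [Nat.add_sub_cancel' A, P, hj] at this
  exact absurd this (by simp)

theorem hyp (l : List Bool) (ht : true ∈ l) (hf : false ∈ l) (φ : MulAut F) (hq : qq φ = qq (Ch l))
    (u v : F) (hu : φ u = u) (hv : φ v = v) (huv : u * v ≠ v * u) : False := by
  classical
  set r := l.reverse with hr
  set m := r.length with hm
  have hm0 : 0 < m := by
    rw [hm, List.length_pos_iff]
    intro h
    have : l = [] := by simpa [hr] using h
    simp [this] at ht
  set y : ℕ → Bool := fun i => r.getD (i % m) true with hy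
  have hyp : ∀ n, y (n + m) = y n := by intro n; simp [hy]
  have hmem : ∀ b, b ∈ l → ∃ i, y i = b := by
    intro b hb
    have : b ∈ r := by simpa [hr] using hb
    obtain ⟨i, hi, e⟩ := List.getElem_of_mem this
    refine ⟨i, ?_⟩
    simp only [hy]
    rw [Nat.mod_eq_of_lt hi, List.getD_eq_getElem _ _ hi, e]
  have hTm : Th y m = Ch l := by
    rw [hy, hm, Th_eq r _ le_rfl, List.take_length, hr, List.reverse_reverse]
  set w : F := ⁅⁅u, v⁆, u⁆ with hw
  have hw1 : w ≠ 1 := fun h => huv (comm_of_triple h)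
  have hφw : φ w = w := by rw [hw]; simp [map_commutatorElement, hu, hv]
  obtain ⟨g, hg⟩ := qq_eq (hTm ▸ hq.symm)
  have hper : ∀ ρ : MulAut F, ∀ wt n, Ncyc wt (ρ (Th y (n + m) w)) = Ncyc wt (ρ (Th y n w)) := by
    intro ρ wt n
    rw [Th_per y m hyp, MulAut.mul_apply, hg, MulAut.mul_apply, hφw]
    simp only [MulAut.conj_apply, map_mul, map_inv]
    exact Ncyc_conj _ _ _
  set A : ℕ → ℕ := fun n => Ncyc wtA (Th y n w) with hA
  set B : ℕ → ℕ := fun n => Ncyc wtB (Th y n w) with hB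
  set P : ℕ → ℕ := fun n => Ncyc wtB (σ (Th y n w)) with hP
  set M : ℕ → ℕ := fun n => Ncyc wtB (σ⁻¹ (Th y n w)) with hM
  have xt : ∀ n, y n = true → Th y (n + 1) w = σ (Th y n w) := by
    intro n h; rw [Th, h]; rfl
  have xf : ∀ n, y n = false → Th y (n + 1) w = τ (Th y n w) := by
    intro n h; rw [Th, h]; rfl
  have st : ∀ n, y n = true → A (n + 1) = A n ∧ B (n + 1) = P n ∧ M (n + 1) = B n := by
    intro n h
    simp only [hA, hB, hP, hM]
    rw [xt n h]
    refine ⟨?_, rfl, ?_⟩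
    · have := NA_σ (Th y n w) 1
      simpa using this
    · rw [← MulAut.mul_apply]; simp
  have sf : ∀ n, y n = false → B (n + 1) = B n ∧ A (n + 1) = P n ∧ M (n + 1) = A n := by
    intro n h
    simp only [hA, hB, hP, hM]
    rw [xf n h]
    refine ⟨(NB_τ _).1, (NB_σ_τ _).1.symm, ?_⟩
    · rw [(NB_σ_τ _).2, ← MulAut.mul_apply]; simp
  have cB : ∀ n, 2 * B n ≤ P n + M n := fun n => NB_convex _
  have cA : ∀ n, 2 * A n ≤ P n + M n := by
    intro n
    simp only [hA, hP, hM]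
    have h := NB_convex (swp (Th y n w))
    rw [NB_swp] at h
    have e1 : σ (swp (Th y n w)) = swp (τ (Th y n w)) := by
      rw [← MulAut.mul_apply, ← swp_τ]; rfl
    have e2 : σ⁻¹ (swp (Th y n w)) = swp (τ⁻¹ (Th y n w)) := by
      rw [← MulAut.mul_apply, ← swp_τi]; rfl
    rw [e1, e2, NB_swp, NB_swp, ← (NB_σ_τ _).1, ← (NB_σ_τ _).2] at h
    exact h
  have hc : ∀ n, 2 * (A (n + 1) + B (n + 1)) ≤ (A n + B n) + (A (n + 2) + B (n + 2)) := by
    intro n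
    have a := cA (n + 1)
    have b := cB (n + 1)
    rcases h1 : y n with _ | _ <;> rcases h2 : y (n + 1) with _ | _
    · have := sf _ h1; have := sf _ h2; simp only [add_assoc, Nat.reduceAdd] at *; omega
    · have := sf _ h1; have := st _ h2; simp only [add_assoc, Nat.reduceAdd] at *; omega
    · have := st _ h1; have := sf _ h2; simp only [add_assoc, Nat.reduceAdd] at *; omega
    · have := st _ h1; have := st _ h2; simp only [add_assoc, Nat.reduceAdd] at *; omega
  have hconst := const_of_convex (fun n => A n + B n) m hm0 (by
    intro n
    have a := hper 1 wtA n
    have b := hper 1 wtB n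
    simp only [MulAut.one_apply] at a b
    simp only [hA, hB, a, b]) hc
  obtain ⟨t, -, t1, t2⟩ := turn y m hm0 hyp (hmem _ ht) (hmem _ hf) 0
  obtain ⟨N, hN⟩ : ∃ N, A (t + 1) = N ∧ B (t + 1) = N := by
    refine ⟨A (t + 1), rfl, ?_⟩
    have := st _ t1
    have := sf _ t2
    have a := cA (t + 1)
    have b := cB (t + 1)
    have := hconst t
    have := hconst (t + 1)
    omega
  have hall : ∀ j, A (t + 1 + j) = N ∧ B (t + 1 + j) = N := by
    intro j
    induction j with
    | zero => exact hN
    | succ j ih =>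
      have c := hconst (t + 1 + j)
      rw [show t + 1 + (j + 1) = t + 1 + j + 1 by ring]
      rcases h1 : y (t + 1 + j) with _ | _
      · have := sf _ h1; omega
      · have := st _ h1; omega
  have hall' : ∀ n, t + 1 ≤ n → A n = N ∧ B n = N := by
    intro n hn
    have := hall (n - (t + 1))
    rwa [Nat.add_sub_cancel' hn] at this
  have hPn : ∀ n, t + 1 ≤ n → P n = N ∧ M (n + 1) = N := by
    intro n hn
    have a := hall' n hn
    have b := hall' (n + 1) (by omega)
    rcases h1 : y n with _ | _
    · have := sf _ h1; omega
    · have := st _ h1; omega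
  obtain ⟨n, n1, n2, n3⟩ := turn y m hm0 hyp (hmem _ ht) (hmem _ hf) (t + 2)
  obtain ⟨k, rfl⟩ : ∃ k, n = k + 1 := ⟨n - 1, by omega⟩
  have ex := xt _ n2
  have ex2 := xf _ n3
  refine no_flat N (Th y (k + 1) u) (Th y (k + 1) v) (Th y (k + 1) w) (by rw [hw]; simp [map_commutatorElement]) (by simpa using hw1)
    (hall' (k + 1) (by omega)).1 (hall' (k + 1) (by omega)).2 (hPn (k + 1) (by omega)).1 (hPn k (by omega)).2 ?_ ?_ ?_ ?_
  · rw [← ex]; exact (hPn (k + 2) (by omega)).1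
  · rw [← ex, ← (NB_σ_τ _).1]; exact (hPn (k + 2) (by omega)).1
  · rw [← ex, ← (NB_σ_τ _).2]; exact (hPn (k + 1) (by omega)).2
  · rw [← ex, ← ex2, ← (NB_σ_τ _).1]; exact (hPn (k + 3) (by omega)).1

end Hyp


section Nielsen

/-- word length, abbreviation -/
abbrev nn (w : F) : ℕ := (fTL (Fin 2)).nu w

theorem nn_eq (w : F) : nn w = w.norm := fTL_nu w
theorem nn_inv (w : F) : nn w⁻¹ = nn w := (fTL (Fin 2)).inv w
theorem nn_one : nn 1 = 0 := (fTL (Fin 2)).one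
theorem nn_zero {w : F} (h : nn w = 0) : w = 1 := by
  rw [nn_eq] at h; exact FreeGroup.norm_eq_zero.1 h

/-- subgroup generated by elementary automorphisms -/
def GG : Subgroup (MulAut F) := (Subgroup.closure {qS, qT, qJ, qE}).comap qq

theorem GG_σ : σ ∈ GG := Subgroup.subset_closure (by simp [qS])
theorem GG_τ : τ ∈ GG := Subgroup.subset_closure (by simp [qT])
theorem GG_pi : pi' ∈ GG := Subgroup.subset_closure (by simp [qJ])
theorem GG_eps : eps ∈ GG := Subgroup.subset_closure (by simp [qE])
theorem GG_conj (g : F) : MulAut.conj g ∈ GG := by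
  unfold GG; rw [Subgroup.mem_comap, qq_conj]; exact one_mem _
theorem GG_swp : swp ∈ GG := by
  have : swp = pi' * eps := aut_ext (by simp) (by simp)
  rw [this]; exact mul_mem GG_pi GG_eps
theorem GG_iot : iot ∈ GG := by rw [← pi_sq]; exact mul_mem GG_pi GG_pi
theorem GG_kap : kap ∈ GG := by
  have : kap = iot * eps := aut_ext (by simp) (by simp)
  rw [this]; exact mul_mem GG_iot GG_eps

theorem theta (s t : Fin 2 × Bool) (h : s.1 ≠ t.1) : ∃ θ ∈ GG, θ ga = FreeGroup.mk [s] ∧ θ gb = FreeGroup.mk [t] := by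
  obtain ⟨i, e⟩ := s
  obtain ⟨j, f⟩ := t
  have e1 : FreeGroup.mk [((0 : Fin 2), true)] = ga := rfl
  have e2 : FreeGroup.mk [((0 : Fin 2), false)] = ga⁻¹ := rfl
  have e3 : FreeGroup.mk [((1 : Fin 2), true)] = gb := rfl
  have e4 : FreeGroup.mk [((1 : Fin 2), false)] = gb⁻¹ := rfl
  fin_cases i <;> fin_cases j <;> simp at h <;> cases e <;> cases f <;> simp only [Fin.zero_eta, Fin.mk_one, e1, e2, e3, e4]
  · exact ⟨iot, GG_iot, by simp, by simp⟩
  · exact ⟨kap, GG_kap, by simp, by simp⟩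
  · exact ⟨eps, GG_eps, by simp, by simp⟩
  · exact ⟨1, one_mem _, by simp, by simp⟩
  · exact ⟨swp * iot, mul_mem GG_swp GG_iot, by simp, by simp⟩
  · exact ⟨swp * kap, mul_mem GG_swp GG_kap, by simp, by simp⟩
  · exact ⟨swp * eps, mul_mem GG_swp GG_eps, by simp, by simp⟩
  · exact ⟨swp, GG_swp, by simp, by simp⟩

/-- minimality -/
def Good (α : MulAut F) : Prop := ∀ g ∈ GG, nn (α ga) + nn (α gb) ≤ nn (α (g ga)) + nn (α (g gb))

theorem nn_letter (α : MulAut F) (i : Fin 2) (e : Bool) : nn (α (FreeGroup.mk [(i, e)])) = nn (α (FreeGroup.of i)) := by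
  cases e
  · have : (FreeGroup.mk [(i, false)] : F) = (FreeGroup.of i)⁻¹ := rfl
    rw [this, map_inv, nn_inv]
  · rfl

theorem Good.theta {α : MulAut F} (h : Good α) (s t : Fin 2 × Bool) (hst : s.1 ≠ t.1) :
    ∃ α', Good α' ∧ α' ga = α (FreeGroup.mk [s]) ∧ α' gb = α (FreeGroup.mk [t]) := by
  obtain ⟨θ, h1, h2, h3⟩ := _root_.theta s t hst
  refine ⟨α * θ, fun g hg => ?_, by simp [h2], by simp [h3]⟩
  have := h (θ * g) (mul_mem h1 hg)
  simp only [MulAut.mul_apply, h2, h3] at *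
  refine le_trans (le_of_eq ?_) this
  obtain ⟨i, e⟩ := s
  obtain ⟨j, f⟩ := t
  rw [nn_letter, nn_letter]
  fin_cases i <;> fin_cases j <;> simp at hst
  · rfl
  · rw [add_comm]; rfl

theorem Good.n1 {α : MulAut F} (h : Good α) : nn (α ga) ≤ nn (α ga * α gb) ∧ nn (α gb) ≤ nn (α ga * α gb) := by
  constructor
  · have := h σ GG_σ
    simp at this; omega
  · have := h (MulAut.conj ga * τ) (mul_mem (GG_conj _) GG_τ)
    simp at this
    rw [← mul_assoc, mul_inv_cancel_right] at this
    omega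

theorem nn_sq (y : F) (hy : y ≠ 1) : nn y < nn (y * y) := by
  have h := FreeGroup.reduceCyclically.reduce_flatten_replicate_succ (FreeGroup.isReduced_toWord (x := y)) 1
  have e : (y * y).toWord = FreeGroup.reduce (List.replicate (1 + 1) y.toWord).flatten := by
    rw [← FreeGroup.toWord_mk]
    congr 1
    simp only [List.replicate, List.flatten_cons, List.flatten_nil, List.append_nil, ← FreeGroup.mul_mk, FreeGroup.mk_toWord]
  have h2 := FreeGroup.reduceCyclically.conj_conjugator_reduceCyclically y.toWord
  rw [nn_eq, nn_eq]
  have h3 : FreeGroup.reduceCyclically y.toWord ≠ [] := by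
    intro h0
    rw [h0, List.append_nil] at h2
    apply hy
    rw [← FreeGroup.mk_toWord (x := y), ← h2, ← FreeGroup.mul_mk, ← FreeGroup.inv_mk, mul_inv_cancel]
  have h4 := List.length_pos_iff.2 h3
  have l1 := congrArg List.length h
  have l2 := congrArg List.length h2
  unfold FreeGroup.norm
  rw [e]
  simp [List.replicate] at l1 l2 ⊢
  omega

theorem Good.n2a {α : MulAut F} (h1 : nn (α ga * α gb) = nn (α ga))
    (h2 : nn (α ga * (α gb)⁻¹) = nn (α ga)) : False := by
  have hy : α gb ≠ 1 := by
    rw [Ne, EmbeddingLike.map_eq_one_iff]; exact FreeGroup.of_ne_one _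
  have hsq := nn_sq _ hy
  set X := α ga
  set Y := α gb
  have := (fTL (Fin 2)).fp X⁻¹ Y Y⁻¹
  have i1 := nn_inv X
  have i2 := nn_inv Y
  have i3 : nn (Y⁻¹ * Y⁻¹) = nn (Y * Y) := by rw [← nn_inv, mul_inv_rev, inv_inv]
  rw [inv_inv] at this
  simp only [nn] at *
  omega

theorem Good.n2b {α : MulAut F} (h : Good α) (h1 : nn (α ga * α gb) = nn (α ga))
    (h2 : nn (α gb * α ga) = nn (α ga)) : False := by
  have hY : α gb ≠ 1 := by
    rw [Ne, EmbeddingLike.map_eq_one_iff]; exact FreeGroup.of_ne_one _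
  have hY0 : nn (α gb) ≠ 0 := fun h => hY (nn_zero h)
  have n1 := h.n1
  have hmin : ∀ p : F, nn (α ga) + nn (α gb) ≤ nn (p⁻¹ * (α gb * α ga) * p) + nn (p⁻¹ * α gb * p) := by
    intro p
    have := h (MulAut.conj (α⁻¹ p⁻¹) * (swp * τ * swp * (MulAut.conj gb)))
      (mul_mem (GG_conj _) (mul_mem (mul_mem (mul_mem GG_swp GG_τ) GG_swp) (GG_conj _)))
    have e : (swp * τ * swp * (MulAut.conj gb)) ga = gb * ga := by simp [mul_assoc]
    have e' : (swp * τ * swp * (MulAut.conj gb)) gb = gb := by simp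
    rw [MulAut.mul_apply _ (MulAut.conj _), e, MulAut.mul_apply _ (MulAut.conj _), e'] at this
    simpa using this
  set X := α ga
  set Y := α gb
  obtain ⟨k, hk⟩ : ∃ k, nn Y = 2 * k := by
    obtain ⟨c, hc⟩ := (fTL (Fin 2)).par X⁻¹ Y
    rw [inv_inv] at hc
    have i1 := nn_inv X
    refine ⟨c, ?_⟩
    simp only [nn] at *; omega
  obtain ⟨p, hp1, hp2⟩ := (fTL (Fin 2)).interp Y k (by simp only [nn] at *; omega)
  obtain ⟨q, hq⟩ : ∃ q, q = p⁻¹ * Y := ⟨_, rfl⟩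
  have hYpq : Y = p * q := by rw [hq]; group
  have hm := hmin p
  have hqk : nn q = k := by rw [hq]; simp only [nn] at *; omega
  have hi := nn_inv
  have t1 : nn (p⁻¹ * Y * p) ≤ nn Y := by
    rw [← hq]
    have := (fTL (Fin 2)).d_tri 1 q (q * p)
    simp only [TL.d, inv_one, one_mul] at this
    rw [show q⁻¹ * (q * p) = p by group] at this
    simp only [nn] at *; omega
  have s1 : nn (q * X) + k ≤ nn X := by
    have := (fTL (Fin 2)).fp Y⁻¹ q⁻¹ X
    simp only [inv_inv] at this
    have e : nn (Y * q⁻¹) = k := by rw [hYpq]; rw [mul_inv_cancel_right]; exact hp1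
    have := hi Y; have := hi q
    simp only [nn] at *; omega
  have s2 : nn (X * p) + k ≤ nn X := by
    have := (fTL (Fin 2)).fp Y p X⁻¹
    have e : nn (Y⁻¹ * p) = k := by rw [← nn_inv, hYpq]; rw [← hqk]; congr 1; group
    have e2 : nn (p⁻¹ * X⁻¹) = nn (X * p) := by rw [← nn_inv]; congr 1; group
    have e3 : nn (Y⁻¹ * X⁻¹) = nn (X * Y) := by rw [← nn_inv]; congr 1; group
    have := hi X
    simp only [nn] at *; omega
  have s3 : nn (p⁻¹ * (Y * X) * p) + 2 * k ≤ nn X := by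
    have := (fTL (Fin 2)).d_fp 1 X q⁻¹ (X * p)
    simp only [TL.d, inv_one, one_mul, inv_inv] at this
    have e : nn (X⁻¹ * (X * p)) = k := by rw [inv_mul_cancel_left]; exact hp1
    have e2 : p⁻¹ * (Y * X) * p = q * (X * p) := by rw [hq]; group
    have e3 : nn (X⁻¹ * q⁻¹) = nn (q * X) := by rw [← nn_inv]; congr 1; group
    rw [e2]
    have := hi q
    simp only [nn] at *; omega
  omega

theorem Good.n1' {α : MulAut F} (h : Good α) (s t : Fin 2 × Bool) (hst : s.1 = t.1 → s.2 = t.2) :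
    nn (α (FreeGroup.mk [s])) ≤ nn (α (FreeGroup.mk [s]) * α (FreeGroup.mk [t])) ∧
    nn (α (FreeGroup.mk [t])) ≤ nn (α (FreeGroup.mk [s]) * α (FreeGroup.mk [t])) := by
  by_cases h1 : s.1 = t.1
  · have : s = t := Prod.ext h1 (hst h1)
    subst this
    have hne : α (FreeGroup.mk [s]) ≠ 1 := by
      rw [Ne, EmbeddingLike.map_eq_one_iff, ← FreeGroup.toWord_eq_nil_iff, FreeGroup.toWord_mk]
      simp
    have := nn_sq _ hne
    omega
  · obtain ⟨α', h2, h3, h4⟩ := h.theta s t h1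
    rw [← h3, ← h4]; exact h2.n1

theorem Good.n2 {α : MulAut F} (h : Good α) (r s t : Fin 2 × Bool) (hrs : r.1 = s.1 → r.2 = s.2) (hst : s.1 = t.1 → s.2 = t.2) :
    nn (α (FreeGroup.mk [r])) + nn (α (FreeGroup.mk [t])) <
      nn (α (FreeGroup.mk [r]) * α (FreeGroup.mk [s])) + nn (α (FreeGroup.mk [s]) * α (FreeGroup.mk [t])) := by
  have a := (h.n1' r s hrs).1
  have b := (h.n1' s t hst).2
  have hne : ∀ s, α (FreeGroup.mk [s]) ≠ 1 := by
    intro s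
    rw [Ne, EmbeddingLike.map_eq_one_iff, ← FreeGroup.toWord_eq_nil_iff, FreeGroup.toWord_mk]
    simp
  by_cases h1 : r.1 = s.1
  · have : r = s := Prod.ext h1 (hrs h1)
    subst this
    have := nn_sq _ (hne r)
    omega
  by_cases h2 : s.1 = t.1
  · have : s = t := Prod.ext h2 (hst h2)
    subst this
    have := nn_sq _ (hne s)
    omega
  by_contra hc
  obtain ⟨α', g1, g2, g3⟩ := h.theta r s h1
  have hrt : r.1 = t.1 := by omega
  by_cases h3 : r.2 = t.2
  · have : r = t := Prod.ext hrt h3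
    subst this
    refine g1.n2b ?_ ?_
    · rw [g2, g3]; omega
    · rw [g2, g3]; omega
  · have ht : FreeGroup.mk [t] = (FreeGroup.mk [r])⁻¹ := by
      rw [FreeGroup.inv_mk]
      simp only [FreeGroup.invRev, List.map_cons, List.map_nil, List.reverse_singleton]
      congr 2
      refine Prod.ext hrt.symm ?_
      simp only
      revert h3; cases r.2 <;> cases t.2 <;> simp
    have e : nn (α (FreeGroup.mk [s]) * α (FreeGroup.mk [t])) = nn (α' ga * (α' gb)⁻¹) := by
      rw [ht, g2, g3, ← nn_inv, map_inv]; congr 1; group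
    have e2 : nn (α (FreeGroup.mk [t])) = nn (α (FreeGroup.mk [r])) := by rw [ht, map_inv, nn_inv]
    refine Good.n2a (α := α') ?_ ?_
    · rw [g2, g3]; omega
    · rw [← e, g2]; omega

theorem Good.grow {α : MulAut F} (h : Good α) (m : List (Fin 2 × Bool)) : ∀ (s t : Fin 2 × Bool),
    FreeGroup.IsReduced (m ++ [s, t]) →
    nn (α (FreeGroup.mk (m ++ [s, t]))) + nn (α (FreeGroup.mk [s])) =
      nn (α (FreeGroup.mk (m ++ [s]))) + nn (α (FreeGroup.mk [s]) * α (FreeGroup.mk [t])) := by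
  induction m using List.reverseRecOn with
  | nil =>
    intro s t _
    rw [List.nil_append, List.nil_append, ← map_mul, FreeGroup.mul_mk, List.singleton_append]
    omega
  | append_singleton m r ih =>
    intro s t hred
    have hred1 : FreeGroup.IsReduced (m ++ [r, s]) := by
      unfold FreeGroup.IsReduced at *
      simp [List.isChain_append] at hred ⊢
      tauto
    have hrs : r.1 = s.1 → r.2 = s.2 := by
      unfold FreeGroup.IsReduced at hred
      simp [List.isChain_append] at hred
      tauto
    have hst : s.1 = t.1 → s.2 = t.2 := by
      unfold FreeGroup.IsReduced at hred
      simp [List.isChain_append] at hred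
      tauto
    have IH := ih r s hred1
    have N := h.n2 r s t hrs hst
    have e1 : α (FreeGroup.mk (m ++ [r, s])) = α (FreeGroup.mk (m ++ [r])) * α (FreeGroup.mk [s]) := by
      rw [← map_mul, FreeGroup.mul_mk]; simp
    have e2 : α (FreeGroup.mk (m ++ [r] ++ [s, t])) = α (FreeGroup.mk (m ++ [r])) * (α (FreeGroup.mk [s]) * α (FreeGroup.mk [t])) := by
      rw [← map_mul, ← map_mul, FreeGroup.mul_mk, FreeGroup.mul_mk]; simp
    have e3 : m ++ [r] ++ [s] = m ++ [r, s] := by simp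
    rw [e3, e2, e1]
    rw [e1] at IH
    set A := α (FreeGroup.mk (m ++ [r]))
    set R := α (FreeGroup.mk [r])
    set S := α (FreeGroup.mk [s])
    set U := α (FreeGroup.mk [t])
    have f1 := (fTL (Fin 2)).d_fp 1 A (A * S) (A * (S * U))
    have f2 := (fTL (Fin 2)).d_fp 1 (A * S) A (A * (S * U))
    have f3 := (fTL (Fin 2)).d_fp 1 (A * (S * U)) (A * S) A
    have dc := (fTL (Fin 2)).d_comm
    have d1 : (fTL (Fin 2)).d A (A * S) = nn S := by simp [TL.d]
    have d2 : (fTL (Fin 2)).d A (A * (S * U)) = nn (S * U) := by simp [TL.d]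
    have d3 : (fTL (Fin 2)).d (A * S) (A * (S * U)) = nn U := by simp [TL.d, mul_assoc]
    rw [dc (A * S) A] at f2 f3
    rw [dc (A * (S * U)) A, dc (A * (S * U)) (A * S)] at f3
    simp only [TL.d_one, d1, d2, d3] at f1 f2 f3
    simp only [nn] at *
    omega

theorem Good.two_le {α : MulAut F} (h : Good α) (m : List (Fin 2 × Bool)) : ∀ (s t : Fin 2 × Bool),
    FreeGroup.IsReduced (m ++ [s, t]) → 2 ≤ nn (α (FreeGroup.mk (m ++ [s, t]))) := by
  have hne : ∀ s, nn (α (FreeGroup.mk [s])) ≠ 0 := by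
    intro s hs
    have := nn_zero hs
    rw [EmbeddingLike.map_eq_one_iff, ← FreeGroup.toWord_eq_nil_iff, FreeGroup.toWord_mk] at this
    simp at this
  induction m using List.reverseRecOn with
  | nil =>
    intro s t hred
    have hst : s.1 = t.1 → s.2 = t.2 := by
      unfold FreeGroup.IsReduced at hred
      simpa using hred
    have h1 := h.n1' s t hst
    have e2 : α (FreeGroup.mk ([] ++ [s, t])) = (α (FreeGroup.mk [s]) * α (FreeGroup.mk [t])) := by
      rw [← map_mul, FreeGroup.mul_mk]; simp
    rw [e2]
    obtain ⟨c, hc⟩ := (fTL (Fin 2)).par (α (FreeGroup.mk [s]))⁻¹ (α (FreeGroup.mk [t]))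
    rw [inv_inv] at hc
    have := nn_inv (α (FreeGroup.mk [s]))
    have := hne s
    have := hne t
    simp only [nn] at *
    omega
  | append_singleton m r ih =>
    intro s t hred
    have hred1 : FreeGroup.IsReduced (m ++ [r, s]) := by
      unfold FreeGroup.IsReduced at *
      simp [List.isChain_append] at hred ⊢
      tauto
    have hst : s.1 = t.1 → s.2 = t.2 := by
      unfold FreeGroup.IsReduced at hred
      simp [List.isChain_append] at hred
      tauto
    have g := h.grow _ s t hred
    have h1 := h.n1' s t hst
    have := ih r s hred1
    rw [show m ++ [r] ++ [s] = m ++ [r, s] by simp] at g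
    omega

theorem Good.letter {α : MulAut F} (h : Good α) (x : F) (hx : nn x = 1) : ∃ s, α⁻¹ x = FreeGroup.mk [s] := by
  have hr : FreeGroup.IsReduced (α⁻¹ x).toWord := FreeGroup.isReduced_toWord
  have e : FreeGroup.mk (α⁻¹ x).toWord = α⁻¹ x := FreeGroup.mk_toWord
  rcases List.eq_nil_or_concat (α⁻¹ x).toWord with h0 | ⟨l, t, h0⟩
  · exfalso
    have : α⁻¹ x = 1 := by rw [← e, h0]; rfl
    rw [EmbeddingLike.map_eq_one_iff] at this
    rw [this, nn_one] at hx
    omega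
  · rcases List.eq_nil_or_concat l with h1 | ⟨m, s, h1⟩
    · exact ⟨t, by rw [← e, h0, h1]; rfl⟩
    · exfalso
      have h2 : (α⁻¹ x).toWord = m ++ [s, t] := by rw [h0, h1]; simp
      have := h.two_le m s t (h2 ▸ hr)
      rw [← h2, e] at this
      simp at this
      simp only [nn] at *
      omega

theorem GG_top (α : MulAut F) : α ∈ GG := by
  classical
  obtain ⟨γ, hγ, hmin⟩ : ∃ γ ∈ GG, ∀ g ∈ GG, nn (α (γ ga)) + nn (α (γ gb)) ≤ nn (α (g ga)) + nn (α (g gb)) := by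
    have := WellFounded.has_min (InvImage.wf (fun γ : MulAut F => nn (α (γ ga)) + nn (α (γ gb))) Nat.lt_wfRel.wf) (GG : Set (MulAut F)) ⟨1, one_mem _⟩
    obtain ⟨γ, h1, h2⟩ := this
    exact ⟨γ, h1, fun g hg => not_lt.1 (h2 g hg)⟩
  have hgood : Good (α * γ) := by
    intro g hg
    have := hmin (γ * g) (mul_mem hγ hg)
    simpa using this
  obtain ⟨s, hs⟩ := hgood.letter ga (by rw [nn_eq]; exact FreeGroup.norm_of _)
  obtain ⟨t, ht⟩ := hgood.letter gb (by rw [nn_eq]; exact FreeGroup.norm_of _)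
  have hst : s.1 ≠ t.1 := by
    intro h
    have key : (α * γ)⁻¹ ga = (α * γ)⁻¹ gb ∨ (α * γ)⁻¹ ga = (α * γ)⁻¹ gb⁻¹ := by
      rw [map_inv, hs, ht]
      by_cases h2 : s.2 = t.2
      · left; rw [Prod.ext h h2]
      · right
        rw [FreeGroup.inv_mk]
        simp only [FreeGroup.invRev, List.map_cons, List.map_nil, List.reverse_singleton]
        congr 2
        refine Prod.ext h ?_
        simp only
        revert h2; cases s.2 <;> cases t.2 <;> simp
    rcases key with k | k
    · have := (α * γ)⁻¹.injective k
      have := FreeGroup.of_injective this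
      simp at this
    · have := (α * γ)⁻¹.injective k
      have := congrArg FreeGroup.toWord this
      simp [ga, gb, FreeGroup.toWord_inv, FreeGroup.invRev] at this
  obtain ⟨θ, h1, h2, h3⟩ := theta s t hst
  have : (α * γ)⁻¹ = θ := aut_ext (by rw [hs, h2]) (by rw [ht, h3])
  have h4 : α * γ ∈ GG := by rw [← inv_mem_iff, this]; exact h1
  exact (mul_mem_cancel_right hγ).1 h4

theorem Q_gen : Subgroup.closure {qS, qT, qJ, qE} = ⊤ := by
  rw [eq_top_iff]
  intro q _
  obtain ⟨α, rfl⟩ := qq_surj q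
  exact GG_top α

end Nielsen


section NF

/-- class of a letter -/
def X (b : Bool) : Q := qq (lt' b)
theorem X_t : X true = qS := rfl
theorem X_f : X false = qT := rfl

/-- class of a chain -/
def Cq (l : List Bool) : Q := (l.map X).prod
theorem Cq_nil : Cq [] = 1 := rfl
theorem Cq_cons (b l) : Cq (b :: l) = X b * Cq l := by simp [Cq]
theorem Cq_append (l l') : Cq (l ++ l') = Cq l * Cq l' := by simp [Cq]
theorem Cq_one (b) : Cq [b] = X b := by simp [Cq]
theorem Cq_eq (l) : Cq l = qq (Ch l) := by
  simp only [Cq, Ch, map_list_prod, List.map_map]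
  rfl

theorem rJX (b) : qJ * X b = (X (!b))⁻¹ * qJ := by
  cases b
  · exact rJT
  · exact rJS
theorem rJiX (b) : qJ⁻¹ * X b = (X (!b))⁻¹ * qJ⁻¹ := by
  have h := rJX (!b)
  rw [Bool.not_not] at h
  have : qJ * (X (!b))⁻¹ = X b * qJ := by
    rw [mul_inv_eq_iff_eq_mul, mul_assoc, h]; group
  rw [inv_mul_eq_iff_eq_mul, ← mul_assoc, this]; group
theorem rEX (b) : qE * X b = (X b)⁻¹ * qE := by
  cases b
  · exact rET
  · exact rES

theorem rEi : qE⁻¹ = qE := inv_eq_of_mul_eq_one_left rEE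
theorem rJ2i : (qJ * qJ)⁻¹ = qJ * qJ := inv_eq_of_mul_eq_one_left rJ4
theorem rEJi : qE * qJ⁻¹ = qJ * qE := by
  rw [mul_inv_eq_iff_eq_mul, mul_assoc, rEJ]; group
theorem rJE : qJ * qE = qE * qJ⁻¹ := rEJi.symm
theorem rJiE : qJ⁻¹ * qE = qE * qJ := rEJ.symm
theorem rXX (b) : X b * (X (!b))⁻¹ = X (!b) * qJ ∨ X b * (X (!b))⁻¹ = X (!b) * qJ⁻¹ := by
  cases b
  · right
    show qT * qS⁻¹ = qS * qJ⁻¹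
    nth_rw 1 [rT]; group
  · left
    show qS * qT⁻¹ = qT * qJ
    nth_rw 1 [rS]; group
theorem rJ2X (b) : qJ * qJ * X b = X b * (qJ * qJ) := by
  rw [mul_assoc, rJX, ← mul_assoc]
  have h := rJX (!b)
  rw [Bool.not_not] at h
  have : qJ * (X (!b))⁻¹ = X b * qJ := by
    rw [mul_inv_eq_iff_eq_mul, mul_assoc, h]; group
  rw [this, mul_assoc]
theorem rJ2E : qJ * qJ * qE = qE * (qJ * qJ) := by
  nth_rw 2 [← rJ2i]
  rw [mul_inv_rev, ← mul_assoc qE, ← rJE, mul_assoc, rJE, ← mul_assoc, rJE]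

/-- the dihedral part -/
def Dg : Subgroup Q := Subgroup.closure {qJ, qE}
theorem Dg_J : qJ ∈ Dg := Subgroup.subset_closure (by simp)
theorem Dg_E : qE ∈ Dg := Subgroup.subset_closure (by simp)

theorem CJ (l : List Bool) : Cq l * qJ = qJ * qE * Cq (l.map not) * qE := by
  induction l with
  | nil => simp [Cq_nil, mul_assoc, rEE]
  | cons b l ih =>
    rw [Cq_cons, mul_assoc, ih, List.map_cons, Cq_cons]
    have : X b * (qJ * qE) = qJ * qE * X (!b) := by
      rw [mul_assoc qJ, rEX]
      have h := rJX (!b)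
      rw [Bool.not_not] at h
      have : qJ * (X (!b))⁻¹ = X b * qJ := by
        rw [mul_inv_eq_iff_eq_mul, mul_assoc, h]; group
      rw [← mul_assoc qJ, this, mul_assoc]
    simp only [← mul_assoc] at *
    rw [this]

theorem CJi (l : List Bool) : Cq l * qJ⁻¹ = qJ⁻¹ * qE * Cq (l.map not) * qE := by
  induction l with
  | nil => simp [Cq_nil, mul_assoc, rEE]
  | cons b l ih =>
    rw [Cq_cons, mul_assoc, ih, List.map_cons, Cq_cons]
    have : X b * (qJ⁻¹ * qE) = qJ⁻¹ * qE * X (!b) := by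
      rw [mul_assoc qJ⁻¹, rEX]
      have h := rJiX (!b)
      rw [Bool.not_not] at h
      have : qJ⁻¹ * (X (!b))⁻¹ = X b * qJ⁻¹ := by
        rw [mul_inv_eq_iff_eq_mul, mul_assoc, h]; group
      rw [← mul_assoc qJ⁻¹, this, mul_assoc]
    simp only [← mul_assoc] at *
    rw [this]

/-- normal form predicate -/
def NFp (q : Q) : Prop := ∃ d ∈ Dg, ∃ l, q = d * Cq l ∨ q = d * Cq l * qE

theorem NFp_E {q} (h : NFp q) : NFp (q * qE) := by
  obtain ⟨d, hd, l, rfl | rfl⟩ := h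
  · exact ⟨d, hd, l, Or.inr rfl⟩
  · exact ⟨d, hd, l, Or.inl (by rw [mul_assoc _ qE, rEE, mul_one])⟩

theorem NFp_CJ {d} (hd : d ∈ Dg) (l) : NFp (d * Cq l * qJ) ∧ NFp (d * Cq l * qJ⁻¹) := by
  constructor
  · refine ⟨d * (qJ * qE), mul_mem hd (mul_mem Dg_J Dg_E), l.map not, Or.inr ?_⟩
    rw [mul_assoc, CJ]; simp only [mul_assoc]
  · refine ⟨d * (qJ⁻¹ * qE), mul_mem hd (mul_mem (inv_mem Dg_J) Dg_E), l.map not, Or.inr ?_⟩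
    rw [mul_assoc, CJi]; simp only [mul_assoc]

theorem NFp_J {q} (h : NFp q) : NFp (q * qJ) ∧ NFp (q * qJ⁻¹) := by
  obtain ⟨d, hd, l, rfl | rfl⟩ := h
  · exact NFp_CJ hd l
  · rw [mul_assoc _ qE, rEJ, mul_assoc _ qE, rEJi, ← mul_assoc, ← mul_assoc]
    exact ⟨NFp_E (NFp_CJ hd l).2, NFp_E (NFp_CJ hd l).1⟩

theorem NFp_CXi {d} (hd : d ∈ Dg) (l) (b) : NFp (d * Cq l * (X b)⁻¹) := by
  rcases List.eq_nil_or_concat l with rfl | ⟨m, c, rfl⟩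
  · refine ⟨d * qE, mul_mem hd Dg_E, [b], Or.inr ?_⟩
    rw [Cq_nil, Cq_one, mul_one, mul_assoc d, rEX, mul_assoc d, mul_assoc, rEE, mul_one]
  · rw [List.concat_eq_append, Cq_append, Cq_one]
    by_cases h : c = b
    · subst h
      exact ⟨d, hd, m, Or.inl (by group)⟩
    · have : b = !c := by revert h; cases b <;> cases c <;> simp
      subst this
      rw [mul_assoc, mul_assoc (Cq m)]
      rcases rXX c with h | h <;> rw [h, ← mul_assoc (Cq m), ← Cq_one, ← Cq_append, ← mul_assoc]
      · exact (NFp_CJ hd _).1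
      · exact (NFp_CJ hd _).2

theorem NFp_CX {d} (hd : d ∈ Dg) (l) (b) : NFp (d * Cq l * X b) :=
  ⟨d, hd, l ++ [b], Or.inl (by rw [Cq_append, Cq_one, mul_assoc])⟩

theorem rEXi (b) : qE * (X b)⁻¹ = X b * qE := by
  rw [mul_inv_eq_iff_eq_mul, mul_assoc, rEX]; group

theorem NFp_X {q} (h : NFp q) (b) : NFp (q * X b) ∧ NFp (q * (X b)⁻¹) := by
  obtain ⟨d, hd, l, rfl | rfl⟩ := h
  · exact ⟨NFp_CX hd l b, NFp_CXi hd l b⟩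
  · rw [mul_assoc _ qE, rEX, mul_assoc _ qE, rEXi, ← mul_assoc, ← mul_assoc]
    exact ⟨NFp_E (NFp_CXi hd l b), NFp_E (NFp_CX hd l b)⟩

theorem NFp_all (q : Q) : NFp q := by
  have hq : q ∈ Subgroup.closure {qS, qT, qJ, qE} := by rw [Q_gen]; trivial
  induction hq using Subgroup.closure_induction_right with
  | one => exact ⟨1, one_mem _, [], Or.inl (by simp [Cq_nil])⟩
  | mul_right x hx y hy ih =>
    simp only [Set.mem_insert_iff, Set.mem_singleton_iff] at hy
    rcases hy with rfl | rfl | rfl | rfl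
    · exact (NFp_X ih true).1
    · exact (NFp_X ih false).1
    · exact (NFp_J ih).1
    · exact NFp_E ih
  | mul_inv_cancel x hx y hy ih =>
    simp only [Set.mem_insert_iff, Set.mem_singleton_iff] at hy
    rcases hy with rfl | rfl | rfl | rfl
    · exact (NFp_X ih true).2
    · exact (NFp_X ih false).2
    · exact (NFp_J ih).2
    · rw [rEi]; exact NFp_E ih

end NF


section Tri

theorem rJiJi : qJ⁻¹ * qJ⁻¹ = qJ * qJ := by rw [← mul_inv_rev, rJ2i]

theorem Dg_cases {d : Q} (hd : d ∈ Dg) : d = 1 ∨ d = qJ ∨ d = qJ * qJ ∨ d = qJ⁻¹ ∨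
    d = qE ∨ d = qJ * qE ∨ d = qJ * qJ * qE ∨ d = qJ⁻¹ * qE := by
  have a1 : qJ * qJ * qJ = qJ⁻¹ := by rw [eq_inv_iff_mul_eq_one, mul_assoc]; exact rJ4
  have a2 : qJ * qJ * qJ⁻¹ = qJ := by group
  have b1 : qJ * qE * qJ = qE := by rw [mul_assoc, rEJ]; group
  have b2 : qJ * qJ * qE * qJ = qJ * qE := by rw [mul_assoc, rEJ]; group
  have b3 : qJ⁻¹ * qE * qJ = qJ * qJ * qE := by rw [mul_assoc, rEJ, ← mul_assoc, rJiJi]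
  have c1 : qJ * qE * qJ⁻¹ = qJ * qJ * qE := by rw [mul_assoc, rEJi, ← mul_assoc]
  have c2 : qJ * qJ * qE * qJ⁻¹ = qJ⁻¹ * qE := by rw [mul_assoc, rEJi, ← mul_assoc, a1]
  have c3 : qJ⁻¹ * qE * qJ⁻¹ = qE := by rw [mul_assoc, rEJi]; group
  have e1 : ∀ x, x * qE * qE = x := fun x => by rw [mul_assoc, rEE, mul_one]
  induction hd using Subgroup.closure_induction_right with
  | one => simp
  | mul_right x hx y hy ih =>
    simp only [Set.mem_insert_iff, Set.mem_singleton_iff] at hy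
    rcases hy with rfl | rfl <;> rcases ih with rfl | rfl | rfl | rfl | rfl | rfl | rfl | rfl <;>
      simp [a1, b1, b2, b3, e1, rEE, rEJ]
  | mul_inv_cancel x hx y hy ih =>
    simp only [Set.mem_insert_iff, Set.mem_singleton_iff] at hy
    rcases hy with rfl | rfl <;> rcases ih with rfl | rfl | rfl | rfl | rfl | rfl | rfl | rfl <;>
      simp [rEi, c1, c2, c3, e1, rEE, rEJi, rJiJi]

theorem rJEX (b) : qJ * qE * X b = X (!b) * (qJ * qE) := by
  rw [mul_assoc qJ, rEX]
  have h := rJX (b)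
  have : qJ * (X b)⁻¹ = X (!b) * qJ := by
    rw [mul_inv_eq_iff_eq_mul, mul_assoc, h]; group
  rw [← mul_assoc qJ, this, mul_assoc]

theorem rJiEX (b) : qJ⁻¹ * qE * X b = X (!b) * (qJ⁻¹ * qE) := by
  rw [mul_assoc qJ⁻¹, rEX]
  have h := rJiX (b)
  have : qJ⁻¹ * (X b)⁻¹ = X (!b) * qJ⁻¹ := by
    rw [mul_inv_eq_iff_eq_mul, mul_assoc, h]; group
  rw [← mul_assoc qJ⁻¹, this, mul_assoc]

theorem Dg_split {d : Q} (hd : d ∈ Dg) :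
    (d * d = 1 ∧ ((d = 1 ∨ d = qJ * qJ) ∧ (∀ b, d * X b = X b * d) ∨ ∀ b, d * X b = X (!b) * d)) ∨
    ((d = qJ ∨ d = qJ⁻¹ ∨ d = qE ∨ d = qJ * qJ * qE) ∧ ∃ w : Bool → Bool, ∀ b, d * X b = (X (w b))⁻¹ * d) := by
  rcases Dg_cases hd with rfl | rfl | rfl | rfl | rfl | rfl | rfl | rfl
  · left; simp
  · right; exact ⟨by simp, not, rJX⟩
  · left; exact ⟨rJ4, Or.inl ⟨by simp, rJ2X⟩⟩
  · right; exact ⟨by simp, not, rJiX⟩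
  · right; exact ⟨by simp, id, rEX⟩
  · left; refine ⟨?_, Or.inr rJEX⟩
    rw [← mul_assoc, mul_assoc qJ, rEJ, ← mul_assoc, mul_inv_cancel, one_mul, rEE]
  · right; refine ⟨by simp, id, fun b => ?_⟩
    rw [mul_assoc, rEX, ← mul_assoc]
    have : qJ * qJ * (X b)⁻¹ = (X b)⁻¹ * (qJ * qJ) := by
      rw [mul_inv_eq_iff_eq_mul, mul_assoc, rJ2X]; group
    rw [this, mul_assoc]; rfl
  · left; refine ⟨?_, Or.inr rJiEX⟩
    rw [← mul_assoc, mul_assoc qJ⁻¹, rEJi, ← mul_assoc, inv_mul_cancel, one_mul, rEE]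

/-- possible conjugacy representatives -/
def Repq (r : Q) : Prop :=
  r ∈ Dg ∨ r = qJ * qS ∨ r = qJ⁻¹ * qS ∨ (∃ n : ℕ, n ≠ 0 ∧ (r = qS ^ n ∨ r = qJ * qJ * qS ^ n)) ∨
    ∃ l, true ∈ l ∧ false ∈ l ∧ r * r = Cq l

/-- being conjugate to a representative -/
def Tri (q : Q) : Prop := ∃ r, Repq r ∧ IsConj q r

theorem Tri.conj {p q : Q} (h : IsConj p q) (hq : Tri q) : Tri p := by
  obtain ⟨r, h1, h2⟩ := hq
  exact ⟨r, h1, h.trans h2⟩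

theorem conj_swap (x y : Q) : IsConj (x * y) (y * x) := isConj_iff.2 ⟨y, by group⟩

theorem Cq_rep (b : Bool) (n : ℕ) : Cq (List.replicate n b) = X b ^ n := by simp [Cq]

theorem Tri_all : ∀ (n : ℕ) (d : Q), d ∈ Dg → ∀ l : List Bool, l.length = n → Tri (d * Cq l) := by
  intro n
  induction n using Nat.strong_induction_on with
  | _ n IH =>
  intro d hd l hl
  rcases Nat.eq_zero_or_pos n with h0 | hpos
  · have : l = [] := List.length_eq_zero_iff.1 (by omega)
    subst this
    exact ⟨d, Or.inl hd, by rw [Cq_nil, mul_one]⟩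
  rcases Dg_split hd with ⟨hd2, hpm⟩ | ⟨hdc, w, hw⟩
  · -- positive
    by_cases hboth : true ∈ l ∧ false ∈ l
    · obtain ⟨w, hw⟩ : ∃ w : Bool → Bool, ∀ b, d * X b = X (w b) * d := by
        rcases hpm with ⟨-, h⟩ | h
        · exact ⟨id, h⟩
        · exact ⟨not, h⟩
      have hC : ∀ l, d * Cq l = Cq (l.map w) * d := by
        intro l
        induction l with
        | nil => simp [Cq_nil]
        | cons b l ih => rw [Cq_cons, ← mul_assoc, hw, mul_assoc, ih, List.map_cons, Cq_cons, mul_assoc]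
      refine ⟨_, Or.inr (Or.inr (Or.inr (Or.inr ⟨l.map w ++ l, by simp [hboth.1], by simp [hboth.2], ?_⟩))), IsConj.refl _⟩
      rw [Cq_append]
      calc d * Cq l * (d * Cq l) = d * Cq l * d * Cq l := by rw [← mul_assoc]
        _ = Cq (l.map w) * d * d * Cq l := by rw [hC]
        _ = _ := by rw [mul_assoc _ d d, hd2, mul_one]
    · obtain ⟨b, hb⟩ : ∃ b, l = List.replicate n b := by
        by_cases ht : true ∈ l
        · refine ⟨true, List.eq_replicate_iff.2 ⟨hl, fun b hb => ?_⟩⟩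
          cases b
          · exact absurd ⟨ht, hb⟩ hboth
          · rfl
        · refine ⟨false, List.eq_replicate_iff.2 ⟨hl, fun b hb => ?_⟩⟩
          cases b
          · rfl
          · exact absurd hb ht
      rcases hpm with ⟨h1, h2⟩ | h
      · have key : IsConj (d * Cq l) (d * qS ^ n) := by
          rw [hb, Cq_rep]
          cases b
          · rw [isConj_iff]
            refine ⟨qJ * qE, ?_⟩
            have e1 : qJ * qE * d = d * (qJ * qE) := by
              rcases h1 with rfl | rfl
              · simp
              · rw [mul_assoc, ← rJ2E]; simp only [mul_assoc]
            have e2 : qJ * qE * X false ^ n = qS ^ n * (qJ * qE) := by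
              have : SemiconjBy (qJ * qE) (X false) qS := rJEX false
              exact this.pow_right n
            rw [← mul_assoc, e1, mul_assoc d, e2]; group
          · exact IsConj.refl _
        refine Tri.conj key ⟨_, Or.inr (Or.inr (Or.inr (Or.inl ⟨n, by omega, ?_⟩))), IsConj.refl _⟩
        rcases h1 with rfl | rfl
        · left; simp
        · right; rfl
      · -- swap
        refine ⟨_, Or.inr (Or.inr (Or.inr (Or.inr ⟨List.replicate n (!b) ++ List.replicate n b, ?_, ?_, ?_⟩))), IsConj.refl _⟩
        · cases b <;> simp <;> omega
        · cases b <;> simp <;> omega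
        · rw [hb, Cq_append, Cq_rep, Cq_rep]
          have : SemiconjBy d (X b) (X (!b)) := h b
          have e := (this.pow_right n).eq
          calc d * X b ^ n * (d * X b ^ n) = d * X b ^ n * d * X b ^ n := by rw [← mul_assoc]
            _ = X (!b) ^ n * d * d * X b ^ n := by rw [e]
            _ = _ := by rw [mul_assoc _ d d, hd2, mul_one]
  · -- negative
    obtain ⟨x, l', rfl⟩ : ∃ x l', l = x :: l' := by
      cases l with
      | nil => simp at hl; omega
      | cons x l' => exact ⟨x, l', rfl⟩
    rcases List.eq_nil_or_concat l' with rfl | ⟨l2, y, rfl⟩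
    · -- length one
      have hES : qT * (qE * qS) * qT⁻¹ = qE * qJ := by
        have : qE * qT = qT⁻¹ * qE := rET
        rw [rS, ← mul_assoc qE, ← mul_assoc qE, this]; group
      have hS : ∀ d, (d = qJ ∨ d = qJ⁻¹ ∨ d = qE ∨ d = qJ * qJ * qE) → Tri (d * qS) := by
        intro d hdc
        rcases hdc with rfl | rfl | rfl | rfl
        · exact ⟨_, Or.inr (Or.inl rfl), IsConj.refl _⟩
        · exact ⟨_, Or.inr (Or.inr (Or.inl rfl)), IsConj.refl _⟩
        · exact ⟨qE * qJ, Or.inl (mul_mem Dg_E Dg_J), isConj_iff.2 ⟨qT, hES⟩⟩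
        · refine ⟨qJ * qJ * (qE * qJ), Or.inl (mul_mem (mul_mem Dg_J Dg_J) (mul_mem Dg_E Dg_J)), isConj_iff.2 ⟨qT, ?_⟩⟩
          have c : qJ * qJ * qT = qT * (qJ * qJ) := rJ2X false
          rw [← hES, mul_assoc (qJ * qJ), ← mul_assoc qT, ← c]; group
      rw [Cq_one]
      cases x
      · have : ∃ d', (d' = qJ ∨ d' = qJ⁻¹ ∨ d' = qE ∨ d' = qJ * qJ * qE) ∧ qJ * qE * d = d' * (qJ * qE) := by
          rcases hdc with rfl | rfl | rfl | rfl
          · exact ⟨qJ⁻¹, by simp, by rw [mul_assoc, rEJ]; group⟩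
          · exact ⟨qJ, by simp, by rw [mul_assoc, rEJi]⟩
          · refine ⟨qJ * qJ * qE, by simp, ?_⟩
            rw [mul_assoc (qJ * qJ), ← mul_assoc qE, rEJ, mul_assoc qJ⁻¹]; group
          · refine ⟨qE, by simp, ?_⟩
            rw [rJ2E, mul_assoc qJ, ← mul_assoc qE, rEE, one_mul, ← mul_assoc qE qJ, rEJ, mul_assoc, rEE, mul_one]
            rw [← rJiJi]; group
        obtain ⟨d', h1, h2⟩ := this
        refine Tri.conj (isConj_iff.2 ⟨qJ * qE, ?_⟩) (hS d' h1)
        rw [← mul_assoc, h2, mul_assoc d', rJEX]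
        simp only [Bool.not_false, X_t]
        group
      · exact hS d hdc
    · rw [List.concat_eq_append] at *
      simp at hl
      rw [Cq_cons, ← mul_assoc, hw, mul_assoc]
      refine Tri.conj (conj_swap _ _) ?_
      rw [Cq_append, Cq_one]
      by_cases h : y = w x
      · rw [← h]
        rw [show d * (Cq l2 * X y) * (X y)⁻¹ = d * Cq l2 by group]
        exact IH _ (by omega) d hd l2 rfl
      · have : w x = !y := by revert h; cases y <;> cases w x <;> simp
        rw [this]
        rcases rXX y with e | e
        · rw [show d * (Cq l2 * X y) * (X (!y))⁻¹ = d * Cq l2 * (X y * (X (!y))⁻¹) by group, e, ← mul_assoc]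
          refine Tri.conj (conj_swap _ _) ?_
          rw [mul_assoc, ← Cq_one, ← Cq_append, ← mul_assoc]
          exact IH (l2.length + 1) (by omega) _ (mul_mem Dg_J hd) (l2 ++ [!y]) (by simp)
        · rw [show d * (Cq l2 * X y) * (X (!y))⁻¹ = d * Cq l2 * (X y * (X (!y))⁻¹) by group, e, ← mul_assoc]
          refine Tri.conj (conj_swap _ _) ?_
          rw [mul_assoc, ← Cq_one, ← Cq_append, ← mul_assoc]
          exact IH (l2.length + 1) (by omega) _ (mul_mem (inv_mem Dg_J) hd) (l2 ++ [!y]) (by simp)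

theorem Tri_q (q : Q) : Tri q := by
  obtain ⟨d, hd, l, rfl | rfl⟩ := NFp_all q
  · exact Tri_all _ d hd l rfl
  · refine Tri.conj (conj_swap _ _) ?_
    rw [← mul_assoc]
    exact Tri_all _ _ (mul_mem Dg_E hd) l rfl

end Tri


set_option linter.unusedSectionVars false
section Letter
variable {α : Type*} [DecidableEq α]

/-- `β` sends the generator `i` to the letter `(e i, c i)`. -/
def Sgn (β : FreeGroup α →* FreeGroup α) (e : α → α) (c : α → Bool) : Prop :=
  Function.Injective e ∧ ∀ i, β (FreeGroup.of i) = FreeGroup.mk [(e i, c i)]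

/-- induced map on letters -/
def sf (e : α → α) (c : α → Bool) (x : α × Bool) : α × Bool := (e x.1, x.2 == c x.1)

theorem Sgn.mk {β : FreeGroup α →* FreeGroup α} {e c} (h : Sgn β e c) (l : List (α × Bool)) :
    β (FreeGroup.mk l) = FreeGroup.mk (l.map (sf e c)) := by
  induction l with
  | nil => exact map_one β
  | cons x l ih =>
    have e1 : FreeGroup.mk (x :: l) = FreeGroup.mk [x] * FreeGroup.mk l := by rw [FreeGroup.mul_mk]; rfl
    have e2 : β (FreeGroup.mk [x]) = FreeGroup.mk [sf e c x] := by
      obtain ⟨i, s⟩ := x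
      have := h.2 i
      cases s
      · have e3 : FreeGroup.mk [(i, false)] = (FreeGroup.of i)⁻¹ := rfl
        rw [e3, map_inv, this, FreeGroup.inv_mk]
        simp only [FreeGroup.invRev, sf]
        cases c i <;> rfl
      · have e3 : FreeGroup.mk [(i, true)] = (FreeGroup.of i) := rfl
        rw [e3, this]
        simp only [sf]
        cases c i <;> rfl
    rw [e1, map_mul, ih, e2, FreeGroup.mul_mk]; rfl

theorem Sgn.toWord {β : FreeGroup α →* FreeGroup α} {e c} (h : Sgn β e c) (w : FreeGroup α) :
    (β w).toWord = w.toWord.map (sf e c) := by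
  have h1 := h.mk w.toWord
  rw [FreeGroup.mk_toWord] at h1
  rw [h1, FreeGroup.toWord_mk]
  apply FreeGroup.IsReduced.reduce_eq
  have := FreeGroup.isReduced_toWord (x := w)
  unfold FreeGroup.IsReduced at *
  rw [List.isChain_map]
  refine this.imp ?_
  rintro ⟨i, s⟩ ⟨j, t⟩ hij hk
  simp only [sf] at *
  have := h.1 hk
  subst this
  rw [hij rfl]

theorem Sgn.norm {β : FreeGroup α →* FreeGroup α} {e c} (h : Sgn β e c) (w : FreeGroup α) :
    (fTL α).nu (β w) = (fTL α).nu w := by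
  rw [fTL_nu, fTL_nu, FreeGroup.norm, FreeGroup.norm, h.toWord, List.length_map]

theorem Sgn.fix {β : FreeGroup α →* FreeGroup α} {e c} (h : Sgn β e c) {w : FreeGroup α} (hw : β w = w) :
    ∀ x ∈ w.toWord, e x.1 = x.1 ∧ c x.1 = true := by
  have h1 := h.toWord w
  rw [hw] at h1
  intro x hx
  obtain ⟨n, hn, rfl⟩ := List.getElem_of_mem hx
  have h2 : w.toWord[n] = sf e c w.toWord[n] := by
    conv_lhs => rw [List.getElem_of_eq h1 hn]
    simp
  have h3 := congrArg Prod.fst h2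
  have h4 := congrArg Prod.snd h2
  simp only [sf] at h3 h4
  have h5 : ∀ x y : Bool, y = (y == x) → x = true := by decide
  exact ⟨h3.symm, h5 _ _ h4⟩

theorem word_zpow (j : α) (l : List (α × Bool)) (h : ∀ x ∈ l, x.1 = j) : FreeGroup.mk l ∈ Subgroup.zpowers (FreeGroup.of j) := by
  induction l with
  | nil => exact one_mem _
  | cons x l ih =>
    have e1 : FreeGroup.mk (x :: l) = FreeGroup.mk [x] * FreeGroup.mk l := by rw [FreeGroup.mul_mk]; rfl
    rw [e1]
    refine mul_mem ?_ (ih fun y hy => h y (by simp [hy]))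
    obtain ⟨i, s⟩ := x
    have : i = j := h (i, s) (by simp)
    subst this
    cases s
    · exact inv_mem (Subgroup.mem_zpowers _)
    · exact Subgroup.mem_zpowers _

end Letter

theorem fix_conj {G : Type*} [Group G] {g h t : G} {ω : MulAut G} (ht : h⁻¹ * (g * ω h) = t) {u : G} :
    g * ω u = u * g ↔ t * ω (h⁻¹ * u * h) = (h⁻¹ * u * h) * t := by
  subst ht
  simp only [map_mul, map_inv, mul_assoc]
  constructor
  · intro e
    have : u = g * ω u * g⁻¹ := by rw [e]; group
    conv_rhs => rw [this]
    group
  · intro e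
    have := congrArg (fun x => h * x * (ω h)⁻¹) e
    simp only [mul_assoc, mul_inv_cancel_left, mul_inv_cancel, mul_one, inv_mul_cancel_left] at this
    simpa [mul_assoc] using this

theorem noncomm_conj {G : Type*} [Group G] {u v : G} (h : G) (huv : u * v ≠ v * u) :
    (h⁻¹ * u * h) * (h⁻¹ * v * h) ≠ (h⁻¹ * v * h) * (h⁻¹ * u * h) := by
  intro e
  apply huv
  have := congrArg (fun x => h * x * h⁻¹) e
  simpa [mul_assoc] using this

theorem case_sgn (g : F) (β : MulAut F) (e : Fin 2 → Fin 2) (c : Fin 2 → Bool) (hs : Sgn β.toMonoidHom e c) (u v : F)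
    (huv : u * v ≠ v * u) (hu : g * β u = u * g) (hv : g * β v = v * g) :
    (∀ i, e i = i ∧ c i = true) ∧ ∃ h, g = h * (β h)⁻¹ := by
  obtain ⟨h, hh⟩ := (fTL (Fin 2)).lemT g β hs.norm u v huv hu hv
  have hh := nn_zero hh
  constructor
  · rw [fix_conj hh] at hu hv
    have hn := noncomm_conj h huv
    rw [one_mul, mul_one] at hu hv
    generalize h⁻¹ * u * h = u' at *
    generalize h⁻¹ * v * h = v' at *
    have f1 := hs.fix hu
    have f2 := hs.fix hv
    by_contra hc
    push Not at hc
    obtain ⟨i, hi⟩ := hc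
    have hne : ∀ k : Fin 2, k ≠ i → k = 1 - i := by clear hi; revert i; decide
    have z1 := word_zpow (1 - i) u'.toWord (fun x hx => hne _ (fun e1 => by
      have := f1 x hx; rw [e1] at this; exact hi this.1 this.2))
    have z2 := word_zpow (1 - i) v'.toWord (fun x hx => hne _ (fun e1 => by
      have := f2 x hx; rw [e1] at this; exact hi this.1 this.2))
    rw [FreeGroup.mk_toWord] at z1 z2
    obtain ⟨m, rfl⟩ := z1
    obtain ⟨n, rfl⟩ := z2
    exact hn (by simp only [← zpow_add, add_comm])
  · refine ⟨h, ?_⟩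
    have : g = h * (h⁻¹ * (g * β h)) * (β h)⁻¹ := by group
    rw [this, hh]; group

theorem Dg_lift {d : Q} (hd : d ∈ Dg) : ∃ β : MulAut F, qq β = d ∧ ∃ e c, Sgn β.toMonoidHom e c := by
  have inj0 : Function.Injective (![0, 1] : Fin 2 → Fin 2) := by decide
  have inj1 : Function.Injective (![1, 0] : Fin 2 → Fin 2) := by decide
  have e1 : FreeGroup.mk [((0 : Fin 2), true)] = ga := rfl
  have e2 : FreeGroup.mk [((0 : Fin 2), false)] = ga⁻¹ := rfl
  have e3 : FreeGroup.mk [((1 : Fin 2), true)] = gb := rfl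
  have e4 : FreeGroup.mk [((1 : Fin 2), false)] = gb⁻¹ := rfl
  have mk2 : ∀ (β : MulAut F) (e : Fin 2 → Fin 2) (c : Fin 2 → Bool), Function.Injective e →
      β ga = FreeGroup.mk [(e 0, c 0)] → β gb = FreeGroup.mk [(e 1, c 1)] → Sgn β.toMonoidHom e c := by
    intro β e c h0 h1 h2
    refine ⟨h0, fun i => ?_⟩
    fin_cases i
    · exact h1
    · exact h2
  rcases Dg_cases hd with rfl | rfl | rfl | rfl | rfl | rfl | rfl | rfl
  · exact ⟨1, map_one _, ![0, 1], ![true, true], mk2 _ _ _ inj0 (by simp [e1]) (by simp [e3])⟩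
  · exact ⟨pi', rfl, ![1, 0], ![true, false], mk2 _ _ _ inj1 (by simp [e3]) (by simp [e2])⟩
  · exact ⟨pi' * pi', rfl, ![0, 1], ![false, false], mk2 _ _ _ inj0 (by simp [e2]) (by simp [e4])⟩
  · exact ⟨pi'⁻¹, rfl, ![1, 0], ![false, true], mk2 _ _ _ inj1 (by simp [e4]) (by simp [e1])⟩
  · exact ⟨eps, rfl, ![0, 1], ![true, false], mk2 _ _ _ inj0 (by simp [e1]) (by simp [e4])⟩
  · exact ⟨pi' * eps, rfl, ![1, 0], ![true, true], mk2 _ _ _ inj1 (by simp [e3]) (by simp [e1])⟩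
  · exact ⟨pi' * pi' * eps, rfl, ![0, 1], ![false, true], mk2 _ _ _ inj0 (by simp [e2]) (by simp [e3])⟩
  · exact ⟨pi'⁻¹ * eps, rfl, ![1, 0], ![false, false], mk2 _ _ _ inj1 (by simp [e4]) (by simp [e2])⟩

theorem iot_sgn : Sgn iot.toMonoidHom id (fun _ => false) := by
  refine ⟨fun _ _ h => h, fun i => ?_⟩
  fin_cases i
  · exact iot_ga
  · exact iot_gb

theorem qfix {φ ω : MulAut F} (h : qq φ = qq ω) : ∃ g, φ = MulAut.conj g * ω ∧ ∀ u, φ u = u ↔ g * ω u = u * g := by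
  obtain ⟨g, rfl⟩ := qq_eq h
  refine ⟨g, rfl, fun u => ?_⟩
  rw [MulAut.mul_apply, MulAut.conj_apply, mul_inv_eq_iff_eq_mul]

/-- torsion case -/
theorem case_Dg (φ : MulAut F) (hq : qq φ ∈ Dg) (u v : F) (huv : u * v ≠ v * u) (hu : φ u = u) (hv : φ v = v) : φ = 1 := by
  obtain ⟨β, hb, e, c, hs⟩ := Dg_lift hq
  obtain ⟨g, rfl, hg⟩ := qfix hb.symm
  rw [hg] at hu hv
  obtain ⟨h1, h, h2⟩ := case_sgn g β e c hs u v huv hu hv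
  have : β = 1 := by
    have k := fun i => hs.2 i
    simp only [fun i => (h1 i).1, fun i => (h1 i).2] at k
    exact aut_ext (k 0) (k 1)
  subst this
  rw [h2]; simp

/-- order 3 -/
theorem case_JS (φ : MulAut F) (hq : qq φ = qJ * qS) (u v : F) (huv : u * v ≠ v * u) (hu : φ u = u) (hv : φ v = v) : False := by
  have hq' : qq φ = qq (pi' * σ) := hq
  obtain ⟨g, rfl, hg⟩ := qfix hq'
  rw [hg] at hu hv
  let x : FreeGroup (Fin 3) := FreeGroup.of 0
  let y : FreeGroup (Fin 3) := FreeGroup.of 1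
  let z : FreeGroup (Fin 3) := FreeGroup.of 2
  let ρ : MulAut (FreeGroup (Fin 3)) := FreeGroup.freeGroupCongr (finRotate 3)
  let j : F →* FreeGroup (Fin 3) := FreeGroup.lift ![y * x⁻¹, z * x⁻¹]
  let r : FreeGroup (Fin 3) →* F := FreeGroup.lift ![1, ga, gb]
  have ja : j ga = y * x⁻¹ := by simp [j, ga]
  have jb : j gb = z * x⁻¹ := by simp [j, gb]
  have rx : ρ x = y := by simp [ρ, x, y]
  have ry : ρ y = z := by simp [ρ, y, z]
  have rz : ρ z = x := by simp [ρ, z, x]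
  have hrj : ∀ w, r (j w) = w := by
    have : r.comp j = MonoidHom.id F := hom_ext2 (by simp [ja, r, x, y]) (by simp [jb, r, x, z])
    intro w; exact DFunLike.congr_fun this w
  have hj : ∀ w, j ((pi' * σ) w) = ρ (j w) := by
    have : j.comp (pi' * σ).toMonoidHom = ρ.toMonoidHom.comp j :=
      hom_ext2 (by simp [ja, jb, rx, ry, rz]) (by simp [ja, jb, rx, ry, rz])
    intro w; exact DFunLike.congr_fun this w
  have hs : Sgn ρ.toMonoidHom (finRotate 3) (fun _ => true) := by
    refine ⟨(finRotate 3).injective, fun i => ?_⟩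
    show ρ (FreeGroup.of i) = FreeGroup.of (finRotate 3 i)
    simp [ρ]
  have hinj : Function.Injective j := Function.LeftInverse.injective hrj
  have hu' : j g * ρ (j u) = j u * j g := by rw [← hj, ← map_mul, hu, map_mul]
  have hv' : j g * ρ (j v) = j v * j g := by rw [← hj, ← map_mul, hv, map_mul]
  have huv' : j u * j v ≠ j v * j u := by
    rw [← map_mul, ← map_mul]; exact fun e => huv (hinj e)
  obtain ⟨h, hh⟩ := (fTL (Fin 3)).lemT (j g) ρ hs.norm (j u) (j v) huv' hu' hv'
  rw [fTL_nu, FreeGroup.norm_eq_zero] at hh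
  rw [fix_conj hh, one_mul, mul_one] at hu'
  have f1 := hs.fix hu'
  have hw : (h⁻¹ * j u * h).toWord = [] := by
    rw [List.eq_nil_iff_forall_not_mem]
    intro x hx
    have : ∀ i : Fin 3, finRotate 3 i ≠ i := by decide
    exact this _ (f1 x hx).1
  rw [FreeGroup.toWord_eq_nil_iff] at hw
  have : j u = 1 := by
    have e : j u = h * (h⁻¹ * j u * h) * h⁻¹ := by group
    rw [e, hw]; group
  apply huv'
  rw [this]; simp

theorem case_JiS (φ : MulAut F) (hq : qq φ = qJ⁻¹ * qS) (u v : F) (huv : u * v ≠ v * u) (hu : φ u = u) (hv : φ v = v) : False := by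
  have hq' : qq (φ * φ * φ) = qq iot := by
    rw [map_mul, map_mul, hq]
    unfold qJ qS
    rw [← map_inv, ← map_mul, ← map_mul, ← map_mul]
    exact qq_of (ga⁻¹ * gb) (aut_ext (by simp [mul_assoc]) (by simp [mul_assoc]))
  obtain ⟨g, h0, hg⟩ := qfix hq'
  have hu3 : (φ * φ * φ) u = u := by simp [hu]
  have hv3 : (φ * φ * φ) v = v := by simp [hv]
  rw [hg] at hu3 hv3
  have := (case_sgn g iot _ _ iot_sgn u v huv hu3 hv3).1 0
  simp at this

theorem case_hyp (φ : MulAut F) (l : List Bool) (ht : true ∈ l) (hf : false ∈ l) (hq : qq φ * qq φ = Cq l)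
    (u v : F) (huv : u * v ≠ v * u) (hu : φ u = u) (hv : φ v = v) : False := by
  refine hyp l ht hf (φ * φ) (by rw [map_mul, hq, Cq_eq]) u v (by simp [hu]) (by simp [hv]) huv


section Para

theorem ab_ne : ga * gb ≠ gb * ga := by
  intro h
  have := congrArg (fun w => (hh w).z) h
  simp [hh_ga, hh_gb] at this

theorem hh_gbz (k : ℤ) : (hh (gb ^ k)).x = 0 := by
  induction k with
  | zero => simp
  | succ n ih => rw [zpow_add_one, map_mul, Heis.mul_x, ih, hh_gb]; rfl
  | pred n ih => rw [zpow_sub_one, map_mul, Heis.mul_x, ih, map_inv, Heis.inv_x, hh_gb]; rfl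

theorem hh_gbzy (k : ℤ) : (hh (gb ^ k)).y = k := by
  induction k with
  | zero => simp
  | succ n ih => rw [zpow_add_one, map_mul, Heis.mul_y, ih, hh_gb]
  | pred n ih => rw [zpow_sub_one, map_mul, Heis.mul_y, ih, map_inv, Heis.inv_y, hh_gb]; rfl

theorem gb_inj {k l : ℤ} (h : gb ^ k = gb ^ l) : k = l := by
  rw [← hh_gbzy k, h, hh_gbzy]

theorem lw_zero (l : List (Fin 2 × Bool)) (h : lw wtA l = 0) : ∃ k : ℤ, FreeGroup.mk l = gb ^ k := by
  induction l with
  | nil => exact ⟨0, by simp; rfl⟩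
  | cons x l ih =>
    have e1 : FreeGroup.mk (x :: l) = FreeGroup.mk [x] * FreeGroup.mk l := by rw [FreeGroup.mul_mk]; rfl
    obtain ⟨i, s⟩ := x
    simp only [lw, List.map_cons, List.sum_cons] at h
    obtain ⟨k, hk⟩ := ih (by unfold lw; omega)
    fin_cases i
    · simp [wtA] at h
    · rw [e1, hk]
      cases s
      · exact ⟨-1 + k, by rw [zpow_add, zpow_neg_one]; rfl⟩
      · exact ⟨1 + k, by rw [zpow_add, zpow_one]; rfl⟩

theorem lw_one (l : List (Fin 2 × Bool)) (h : lw wtA l = 1) :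
    ∃ (i : ℤ) (s : Bool) (j : ℤ), FreeGroup.mk l = gb ^ i * sa s * gb ^ j := by
  induction l with
  | nil => simp [lw] at h
  | cons x l ih =>
    have e1 : FreeGroup.mk (x :: l) = FreeGroup.mk [x] * FreeGroup.mk l := by rw [FreeGroup.mul_mk]; rfl
    obtain ⟨i, s⟩ := x
    simp only [lw, List.map_cons, List.sum_cons] at h
    fin_cases i
    · obtain ⟨k, hk⟩ := lw_zero l (by simp [wtA] at h; unfold lw; simpa [wtA] using h)
      refine ⟨0, s, k, ?_⟩
      rw [e1, hk]
      cases s <;> simp [sa] <;> rfl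
    · obtain ⟨i, t, j, hk⟩ := ih (by simp [wtA] at h; unfold lw; simpa [wtA] using h)
      rw [e1, hk]
      cases s
      · exact ⟨-1 + i, t, j, by rw [zpow_add, zpow_neg_one]; simp only [mul_assoc]; rfl⟩
      · exact ⟨1 + i, t, j, by rw [zpow_add, zpow_one]; simp only [mul_assoc]; rfl⟩

theorem nuA_zero {w : F} (h : wnu wtA w = 0) : ∃ k : ℤ, w = gb ^ k := by
  obtain ⟨k, hk⟩ := lw_zero _ h
  exact ⟨k, by rw [← hk, FreeGroup.mk_toWord]⟩

theorem nuA_one {w : F} (h : wnu wtA w = 1) : ∃ (i : ℤ) (s : Bool) (j : ℤ), w = gb ^ i * sa s * gb ^ j := by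
  obtain ⟨i, s, j, hk⟩ := lw_one _ h
  exact ⟨i, s, j, by rw [← hk, FreeGroup.mk_toWord]⟩

theorem nuA_lmul (i : ℤ) (w : F) : wnu wtA (gb ^ i * w) = wnu wtA w := by
  have h := fun i : ℤ => (wnu_gb_zpow i).1
  apply le_antisymm
  · have := wnu_mul_le wtA (gb ^ i) w
    rw [h] at this; omega
  · have := wnu_mul_le wtA (gb ^ (-i)) (gb ^ i * w)
    rw [h, zpow_neg, inv_mul_cancel_left] at this; omega

theorem nuA_rmul (i : ℤ) (w : F) : wnu wtA (w * gb ^ i) = wnu wtA w := by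
  rw [← wnu_inv, mul_inv_rev, ← zpow_neg, nuA_lmul, wnu_inv]

theorem sa_conj {s : Bool} {k l : ℤ} (h : (sa s)⁻¹ * gb ^ k * sa s = gb ^ l) : k = 0 := by
  have h1 : k = l := by
    have := congrArg (fun w => (hh w).y) h
    simp only [map_mul, Heis.mul_y, hh_gbzy, map_inv, Heis.inv_y] at this
    omega
  subst h1
  by_contra hk
  have hne : gb ^ k ≠ 1 := by
    intro e; exact hk (gb_inj (by rw [e, zpow_zero]))
  have h2 : gb ^ k * sa s = sa s * gb ^ k := by
    rw [mul_assoc, inv_mul_eq_iff_eq_mul] at h; exact h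
  have h3 : ga * gb ^ k = gb ^ k * ga := by
    cases s
    · simp only [sa] at h2
      have := congrArg (fun x => ga * x * ga) h2
      simpa [mul_assoc] using this
    · exact h2.symm
  exact ab_ne (comm_trans hne h3 (by rw [← zpow_one_add, ← zpow_add_one, add_comm]))

theorem sa_ne {s t : Bool} {k l : ℤ} (h : (sa s)⁻¹ * gb ^ k * sa t = gb ^ l) : s = t ∧ k = 0 := by
  have : s = t := by
    have := congrArg (fun w => (hh w).x) h
    cases s <;> cases t <;> simp only [map_mul, Heis.mul_x, map_inv, Heis.inv_x, hh_gbz, sa, hh_ga, if_true, Bool.false_eq_true, if_false] at this ⊢ <;> omega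
  subst this
  exact ⟨rfl, sa_conj h⟩

/-- The Bass–Serre tree length counting the letter `a`. -/
def TA : TL F := wTL wtA (by decide) (by
  intro c p q h1 h2 h3
  obtain ⟨k, hk⟩ := nuA_zero h1
  obtain ⟨l, hl⟩ := nuA_zero h2
  obtain ⟨i, s, j, hp⟩ := nuA_one h3
  have e : (sa s)⁻¹ * gb ^ k * sa s = gb ^ l := by
    have e1 : q⁻¹ * (c * q) = (p⁻¹ * q)⁻¹ * (p⁻¹ * (c * p)) * (p⁻¹ * q) := by group
    rw [hl, hk, hp] at e1
    have e2 : gb ^ l = gb ^ j * gb ^ l * gb ^ (-j) := by rw [← zpow_add, ← zpow_add]; congr 1; ring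
    have e3 : gb ^ k = gb ^ (-i) * gb ^ k * gb ^ i := by rw [← zpow_add, ← zpow_add]; congr 1; ring
    rw [e2, e1, e3]; group
  have hk0 := sa_conj e
  rw [hk0, zpow_zero] at hk
  have : c = p * (p⁻¹ * (c * p)) * p⁻¹ := by group
  rw [this, hk]; group)

theorem TA_nu (w : F) : TA.nu w = wnu wtA w := rfl

/-- The first syllable of `w` is `b^i a^s`. -/
def Fst (w : F) (i : ℤ) (s : Bool) : Prop := wnu wtA ((gb ^ i * sa s)⁻¹ * w) + 1 = wnu wtA w

theorem nuA_sa (i : ℤ) (s : Bool) : wnu wtA (gb ^ i * sa s) = 1 := by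
  rw [nuA_lmul]; cases s <;> simp [sa, wnu_inv, wnu_ga, wtA]

theorem Fst_ex {w : F} (h : wnu wtA w ≠ 0) : ∃ i s, Fst w i s := by
  obtain ⟨p, h1, h2⟩ := TA.interp w 1 (by rw [TA_nu]; omega)
  obtain ⟨i, s, j, rfl⟩ := nuA_one h1
  refine ⟨i, s, ?_⟩
  unfold Fst
  rw [h1] at h2
  simp only [TA_nu] at h2
  rw [← h2, mul_inv_rev _ (gb ^ j), ← zpow_neg, mul_assoc (gb ^ (-j)), nuA_lmul]; omega

theorem Fst_uniq {w : F} {i s i' s'} (h1 : Fst w i s) (h2 : Fst w i' s') : s = s' ∧ i = i' := by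
  unfold Fst at *
  have e : ∀ x, TA.d 1 x = wnu wtA x := fun x => by rw [TA.d_one]; rfl
  have := TA.same_pt w (gb ^ i * sa s) (gb ^ i' * sa s')
    (by rw [e, nuA_sa]; unfold TL.d; simp only [TA_nu]; omega)
    (by rw [e, nuA_sa]; unfold TL.d; simp only [TA_nu]; omega)
    (by rw [e, e, nuA_sa, nuA_sa])
  obtain ⟨k, hk⟩ := nuA_zero this
  have e1 : (sa s)⁻¹ * gb ^ (i' - i) * sa s' = gb ^ k := by
    rw [← hk, sub_eq_neg_add, zpow_add]; group
  have := sa_ne e1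
  exact ⟨this.1, by have := this.2; omega⟩

theorem Fst_step {w : F} (f : F → F) (hf : ∀ p q, wnu wtA ((f p)⁻¹ * f q) = wnu wtA (p⁻¹ * q)) (hw : f w = w) {i s}
    (h1 : Fst w i s) {i' s' j} (he : f (gb ^ i * sa s) = gb ^ i' * sa s' * gb ^ (j : ℤ)) : s = s' ∧ i = i' := by
  refine Fst_uniq h1 ?_
  unfold Fst at *
  have := hf (gb ^ i * sa s) w
  rw [hw, he, mul_inv_rev _ (gb ^ j), ← zpow_neg, mul_assoc (gb ^ (-j)), nuA_lmul] at this
  omega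

theorem nuA_σ (n : ℤ) (w : F) : wnu wtA ((σ ^ n) w) = wnu wtA w := by
  have h : ∀ (n : ℤ) (w : F), wnu wtA ((σ ^ n) w) ≤ wnu wtA w := fun n w =>
    wnu_aut_le _ _ _ (by rw [σ_zpow_ga, nuA_rmul, wnu_ga]) (by rw [σ_zpow_gb, wnu_gb]) w
  apply le_antisymm (h n w)
  have := h (-n) ((σ ^ n) w)
  rwa [← MulAut.mul_apply, ← zpow_add, neg_add_cancel, zpow_zero, MulAut.one_apply] at this

theorem nuA_iot (w : F) : wnu wtA (iot w) = wnu wtA w := by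
  have h : ∀ g, wnu wtA (iot g) ≤ wnu wtA g :=
    wnu_aut_le _ _ _ (by simp [wnu_inv, wnu_ga]) (by simp [wnu_inv, wnu_gb])
  apply le_antisymm (h w)
  have := h (iot w)
  rwa [← MulAut.mul_apply, iot_iot, MulAut.one_apply] at this

theorem σz_sa (n : ℤ) : (σ ^ n) (sa true) = sa true * gb ^ n ∧ (σ ^ n) (sa false) = gb ^ (-n) * sa false := by
  simp [sa, σ_zpow_ga]

theorem σz_gbz (n i : ℤ) : (σ ^ n) (gb ^ i) = gb ^ i := by rw [map_zpow, σ_zpow_gb]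

/-- fixed points of powers of σ -/
theorem fix_σ_pow (n : ℤ) (hn : n ≠ 0) : ∀ (N : ℕ) (w : F), wnu wtA w ≤ N → (σ ^ n) w = w → σ w = w := by
  intro N
  have base : ∀ w, wnu wtA w = 0 → σ w = w := by
    intro w h
    obtain ⟨k, rfl⟩ := nuA_zero h
    have := σz_gbz 1 k
    rwa [zpow_one] at this
  induction N using Nat.strong_induction_on with
  | _ N IH =>
  intro w hN hw
  by_cases h0 : wnu wtA w = 0
  · exact base w h0
  obtain ⟨i, s, hs⟩ := Fst_ex h0
  have hf : ∀ p q, wnu wtA (((σ ^ n) p)⁻¹ * (σ ^ n) q) = wnu wtA (p⁻¹ * q) := by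
    intro p q; rw [← map_inv, ← map_mul, nuA_σ]
  cases s
  · have := Fst_step (fun p => (σ ^ n) p) hf hw hs (i' := i - n) (s' := false) (j := 0)
      (by simp only [map_mul, σz_gbz, (σz_sa n).2]; rw [sub_eq_add_neg, zpow_add]; group)
    omega
  · unfold Fst at hs
    set x := (gb ^ i * sa true)⁻¹ * w with hx
    have hwx : w = gb ^ i * sa true * x := by rw [hx]; group
    have hxx : gb ^ n * (σ ^ n) x = x := by
      rw [hwx] at hw
      rw [map_mul, map_mul, σz_gbz, (σz_sa n).1] at hw
      have := congrArg (fun y => (gb ^ i * sa true)⁻¹ * y) hw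
      simpa [mul_assoc] using this
    have hf' : ∀ p q, wnu wtA ((gb ^ n * (σ ^ n) p)⁻¹ * (gb ^ n * (σ ^ n) q)) = wnu wtA (p⁻¹ * q) := by
      intro p q; rw [← hf p q]; congr 1; group
    by_cases hx0 : wnu wtA x = 0
    · obtain ⟨k, hk⟩ := nuA_zero hx0
      rw [hk, σz_gbz, ← zpow_add] at hxx
      have := gb_inj hxx
      omega
    obtain ⟨j, t, ht⟩ := Fst_ex hx0
    cases t
    · have ht' := ht
      unfold Fst at ht
      set y := (gb ^ j * sa false)⁻¹ * x with hy
      have hxy : x = gb ^ j * sa false * y := by rw [hy]; group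
      have hyy : (σ ^ n) y = y := by
        rw [hxy, map_mul, map_mul, σz_gbz, (σz_sa n).2] at hxx
        have e : gb ^ n * (gb ^ j * (gb ^ (-n) * sa false) * (σ ^ n) y) = gb ^ j * sa false * (σ ^ n) y := by
          rw [← mul_assoc, ← mul_assoc, ← mul_assoc, ← zpow_add, ← zpow_add]; congr 3; ring
        rw [e] at hxx
        exact mul_left_cancel hxx
      have := IH (wnu wtA y) (by omega) y le_rfl hyy
      rw [hwx, hxy]
      have e1 := σz_gbz 1 i
      have e2 := σz_gbz 1 j
      have e3 := σz_sa 1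
      rw [zpow_one] at e1 e2 e3
      rw [map_mul, map_mul, map_mul, map_mul, e1, e2, e3.1, e3.2, this]
      have e : gb ^ (1 : ℤ) * gb ^ j * gb ^ (-1 : ℤ) = gb ^ j := by rw [← zpow_add, ← zpow_add]; congr 1; ring
      calc _ = gb ^ i * sa true * (gb ^ (1 : ℤ) * gb ^ j * gb ^ (-1 : ℤ)) * sa false * y := by group
        _ = _ := by rw [e]; group
    · have := Fst_step (fun p => gb ^ n * (σ ^ n) p) hf' hxx ht (i' := n + j) (s' := true) (j := n)
        (by simp only [map_mul, σz_gbz, (σz_sa n).1]; rw [zpow_add]; group)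
      omega

theorem fix_σ_iff (n : ℤ) (hn : n ≠ 0) (w : F) : (σ ^ n) w = w ↔ σ w = w := by
  constructor
  · exact fix_σ_pow n hn _ w le_rfl
  · intro h
    induction n with
    | zero => rfl
    | succ k ih =>
      rcases k.eq_zero_or_pos with rfl | hk
      · simpa using h
      · rw [zpow_add_one, MulAut.mul_apply, h]; exact ih (by omega)
    | pred k ih =>
      have h' : σ⁻¹ w = w := by rw [MulAut.inv_apply, MulEquiv.symm_apply_eq, h]
      rcases k.eq_zero_or_pos with rfl | hk
      · simpa using h'
      · rw [zpow_sub_one, MulAut.mul_apply, h']; exact ih (by omega)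

theorem lemTA (g : F) (ω : MulAut F) (hω : ∀ x, wnu wtA (ω x) = wnu wtA x) (u v : F) (huv : u * v ≠ v * u)
    (hu : g * ω u = u * g) (hv : g * ω v = v * g) : ∃ (h : F) (m : ℤ), h⁻¹ * (g * ω h) = gb ^ m := by
  obtain ⟨h, hh⟩ := TA.lemT g ω hω u v huv hu hv
  obtain ⟨m, hm⟩ := nuA_zero hh
  exact ⟨h, m, hm⟩

theorem iso_conj (m : ℤ) (ω : MulAut F) (hω : ∀ x, wnu wtA (ω x) = wnu wtA x) (p q : F) :
    wnu wtA ((gb ^ m * ω p * gb ^ (-m))⁻¹ * (gb ^ m * ω q * gb ^ (-m))) = wnu wtA (p⁻¹ * q) := by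
  have : (gb ^ m * ω p * gb ^ (-m))⁻¹ * (gb ^ m * ω q * gb ^ (-m)) = gb ^ m * ω (p⁻¹ * q) * gb ^ (-m) := by
    rw [map_mul, map_inv]; group
  rw [this, nuA_rmul, nuA_lmul, hω]

theorem case_JJS (φ : MulAut F) (n : ℕ) (hq : qq φ = qJ * qJ * qS ^ n) (u v : F)
    (huv : u * v ≠ v * u) (hu : φ u = u) (hv : φ v = v) : False := by
  have hq' : qq φ = qq (iot * σ ^ (n : ℤ)) := by
    rw [hq, ← pi_sq, zpow_natCast]; simp [qJ, qS]
  obtain ⟨g, -, hg⟩ := qfix hq'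
  rw [hg] at hu hv
  have hω : ∀ x, wnu wtA ((iot * σ ^ (n : ℤ)) x) = wnu wtA x := by
    intro x; rw [MulAut.mul_apply, nuA_iot, nuA_σ]
  obtain ⟨h, m, hm⟩ := lemTA g _ hω u v huv hu hv
  rw [fix_conj hm] at hu hv
  have hn := noncomm_conj h huv
  generalize h⁻¹ * u * h = u' at *
  generalize h⁻¹ * v * h = v' at *
  have ib : ∀ i : ℤ, iot (gb ^ i) = gb ^ (-i) := fun i => by rw [map_zpow, iot_gb, inv_zpow, zpow_neg]
  have it : iot (sa true) = sa false := by simp [sa]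
  have jf : iot (sa false) = sa true := by simp [sa]
  have key : ∀ w : F, gb ^ m * (iot * σ ^ (n : ℤ)) w = w * gb ^ m → w = 1 := by
    intro w hw
    have hw' : gb ^ m * (iot * σ ^ (n : ℤ)) w * gb ^ (-m) = w := by rw [hw]; group
    by_cases h0 : wnu wtA w = 0
    · obtain ⟨k, rfl⟩ := nuA_zero h0
      rw [MulAut.mul_apply, σz_gbz, ib, ← zpow_add, ← zpow_add] at hw
      have := gb_inj hw
      rw [show k = 0 by omega, zpow_zero]
    · obtain ⟨i, s, hs⟩ := Fst_ex h0
      cases s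
      · have := Fst_step _ (iso_conj m _ hω) hw' hs (i' := m + -i + n) (s' := true) (j := - m)
          (by simp only [map_mul, MulAut.mul_apply, σz_gbz, (σz_sa n).2, ib, jf, neg_neg]; rw [zpow_add, zpow_add]; group)
        simp at this
      · have := Fst_step _ (iso_conj m _ hω) hw' hs (i' := m + -i) (s' := false) (j := - n - m)
          (by simp only [map_mul, MulAut.mul_apply, σz_gbz, (σz_sa n).1, ib, it, neg_neg]; rw [zpow_add, sub_eq_add_neg, zpow_add]; group)
        simp at this
  rw [key u' hu] at hn
  simp at hn

theorem case_S (φ : MulAut F) (n : ℕ) (hn0 : n ≠ 0) (hq : qq φ = qS ^ n) (u v : F)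
    (huv : u * v ≠ v * u) (hu : φ u = u) (hv : φ v = v) : ∃ α : MulAut F, ∀ w, φ w = w ↔ σ (α w) = α w := by
  have hq' : qq φ = qq (σ ^ (n : ℤ)) := by
    rw [hq, zpow_natCast]; simp [qS]
  obtain ⟨g, -, hg⟩ := qfix hq'
  rw [hg] at hu hv
  obtain ⟨h, m, hm⟩ := lemTA g _ (nuA_σ n) u v huv hu hv
  rw [fix_conj hm] at hu hv
  have hn := noncomm_conj h huv
  have key : ∀ w : F, gb ^ m * (σ ^ (n : ℤ)) w = w * gb ^ m → m = 0 ∨ m = n ∨ ∃ k : ℤ, w = gb ^ k := by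
    intro w hw
    have hw' : gb ^ m * (σ ^ (n : ℤ)) w * gb ^ (-m) = w := by rw [hw]; group
    by_cases h0 : wnu wtA w = 0
    · obtain ⟨k, rfl⟩ := nuA_zero h0
      exact Or.inr (Or.inr ⟨k, rfl⟩)
    · obtain ⟨i, s, hs⟩ := Fst_ex h0
      cases s
      · have := Fst_step _ (iso_conj m _ (nuA_σ n)) hw' hs (i' := m + i - n) (s' := false) (j := - m)
          (by simp only [map_mul, σz_gbz, (σz_sa n).2]; rw [sub_eq_add_neg, zpow_add, zpow_add]; group)
        right; left; omega
      · have := Fst_step _ (iso_conj m _ (nuA_σ n)) hw' hs (i' := m + i) (s' := true) (j := n - m)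
          (by simp only [map_mul, σz_gbz, (σz_sa n).1]; rw [sub_eq_add_neg, zpow_add, zpow_add]; group)
        left; omega
  have hm2 : m = 0 ∨ m = n := by
    rcases key _ hu with h1 | h1 | ⟨k, hk⟩
    · exact Or.inl h1
    · exact Or.inr h1
    rcases key _ hv with h1 | h1 | ⟨l, hl⟩
    · exact Or.inl h1
    · exact Or.inr h1
    exact absurd (by rw [hk, hl, ← zpow_add, ← zpow_add, add_comm]) hn
  rcases hm2 with rfl | rfl
  · refine ⟨MulAut.conj h⁻¹, fun w => ?_⟩
    rw [hg, fix_conj hm, zpow_zero, one_mul, mul_one, fix_σ_iff n (by omega)]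
    simp
  · refine ⟨kap * MulAut.conj h⁻¹, fun w => ?_⟩
    have e : MulAut.conj (gb ^ (n : ℤ)) * σ ^ (n : ℤ) = kap * σ ^ (-(n : ℤ)) * kap := by
      apply aut_ext
      · rw [MulAut.mul_apply, MulAut.conj_apply]
        simp only [MulAut.mul_apply, kap_ga, map_inv, σ_zpow_ga, map_mul, map_zpow, kap_gb]
        group
      · simp only [MulAut.mul_apply, MulAut.conj_apply, kap_gb, σ_zpow_gb]
        group
    have kk : ∀ x, kap (kap x) = x := fun x => by rw [← MulAut.mul_apply, kap_kap]; rfl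
    rw [hg, fix_conj hm, ← fix_σ_iff (-n) (by omega), ← mul_inv_eq_iff_eq_mul]
    have e2 := DFunLike.congr_fun e (h⁻¹ * w * h)
    rw [MulAut.mul_apply, MulAut.conj_apply] at e2
    rw [e2]
    simp only [MulAut.mul_apply, MulAut.conj_apply, inv_inv]
    constructor
    · intro h1
      have := congrArg kap h1
      rwa [kk] at this
    · intro h1
      rw [h1, kk]

/-- Theorem C -/
theorem thmC (φ : MulAut F) (u v : F) (huv : u * v ≠ v * u) (hu : φ u = u) (hv : φ v = v) :
    φ = 1 ∨ ∃ α : MulAut F, ∀ w, φ w = w ↔ σ (α w) = α w := by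
  obtain ⟨r, hr, hc⟩ := Tri_q (qq φ)
  obtain ⟨c, hc⟩ := isConj_iff.1 hc
  obtain ⟨γ, rfl⟩ := qq_surj c
  set φ' := γ * φ * γ⁻¹ with hφ'
  have hq : qq φ' = r := by rw [hφ', map_mul, map_mul, map_inv, hc]
  have fx : ∀ w, φ w = w ↔ φ' (γ w) = γ w := by
    intro w
    simp [hφ']
  have hu' := (fx u).1 hu
  have hv' := (fx v).1 hv
  have huv' : γ u * γ v ≠ γ v * γ u := by
    rw [← map_mul, ← map_mul]; exact fun e => huv (γ.injective e)
  rcases hr with h | h | h | ⟨n, hn, h | h⟩ | ⟨l, h1, h2, h3⟩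
  · left
    have := case_Dg φ' (hq ▸ h) _ _ huv' hu' hv'
    rw [hφ'] at this
    have e : φ = γ⁻¹ * (γ * φ * γ⁻¹) * γ := by group
    rw [e, this]; group
  · exact (case_JS φ' (hq.trans h) _ _ huv' hu' hv').elim
  · exact (case_JiS φ' (hq.trans h) _ _ huv' hu' hv').elim
  · right
    obtain ⟨α, hα⟩ := case_S φ' n hn (hq.trans h) _ _ huv' hu' hv'
    exact ⟨α * γ, fun w => by rw [fx, hα]; rfl⟩
  · exact (case_JJS φ' n (hq.trans h) _ _ huv' hu' hv').elim
  · exact (case_hyp φ' l h1 h2 (by rw [hq, h3]) _ _ huv' hu' hv').elim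

end Para


section Final

theorem IsW1_of_sgn {β : MulAut F} {e c} (h : Sgn β.toMonoidHom e c) : IsW1 β := by
  have key : ∀ (i : Fin 2) (s : Bool), FreeGroup.mk [(i, s)] ∈ ({ga, ga⁻¹, gb, gb⁻¹} : Set F) := by
    intro i s
    have e1 : FreeGroup.mk [((0 : Fin 2), true)] = ga := rfl
    have e2 : FreeGroup.mk [((0 : Fin 2), false)] = ga⁻¹ := rfl
    have e3 : FreeGroup.mk [((1 : Fin 2), true)] = gb := rfl
    have e4 : FreeGroup.mk [((1 : Fin 2), false)] = gb⁻¹ := rfl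
    fin_cases i <;> cases s <;> simp [e1, e2, e3, e4]
  constructor
  · have : β ga = _ := h.2 0
    rw [this]; exact key _ _
  · have : β gb = _ := h.2 1
    rw [this]; exact key _ _

/-- index of the elementary conjugation by a letter -/
def dix (x : Fin 2 × Bool) : Fin 4 := if x.1 = 0 then (if x.2 then 3 else 2) else (if x.2 then 1 else 0)

theorem dix_conj (x : Fin 2 × Bool) : δIdx (dix x) = MulAut.conj (FreeGroup.mk [x]) := by
  have e1 : FreeGroup.mk [((0 : Fin 2), true)] = ga := rfl
  have e2 : FreeGroup.mk [((0 : Fin 2), false)] = ga⁻¹ := rfl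
  have e3 : FreeGroup.mk [((1 : Fin 2), true)] = gb := rfl
  have e4 : FreeGroup.mk [((1 : Fin 2), false)] = gb⁻¹ := rfl
  obtain ⟨i, s⟩ := x
  fin_cases i <;> cases s <;> simp [dix, δIdx, e1, e2, e3, e4] <;>
    refine aut_ext ?_ ?_ <;> simp <;> first | exact mkAut_ga .. | exact mkAut_gb ..

theorem conj_ds (g : F) : ∃ ds : List (Fin 4), ds.length = nn g ∧ (ds.map δIdx).prod = MulAut.conj g := by
  refine ⟨g.toWord.map dix, by rw [nn_eq, List.length_map]; rfl, ?_⟩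
  rw [← FreeGroup.mk_toWord (x := g), FreeGroup.toWord_mk, FreeGroup.reduce_toWord]
  generalize g.toWord = l
  induction l with
  | nil => exact (map_one (MulAut.conj (G := F))).symm
  | cons x l ih =>
    have e1 : FreeGroup.mk (x :: l) = FreeGroup.mk [x] * FreeGroup.mk l := by rw [FreeGroup.mul_mk]; rfl
    rw [e1, map_mul, ← ih, ← dix_conj]; simp

/-- negative chain -/
def Chn (l : List Bool) : MulAut F := (l.map fun b => (lt' b)⁻¹).prod

/-- exponent pairs -/
def pr (b : Bool) : ℕ × ℕ := if b then (1, 0) else (0, 1)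

theorem chain_Ch (l : List Bool) : chainC1 (l.map pr) = Ch l ∧ chainC2 (l.map pr) = Chn l ∧ chainLen (l.map pr) = l.length := by
  refine ⟨?_, ?_, ?_⟩
  · unfold chainC1 Ch; rw [List.map_map]; congr 2; ext1 b
    cases b <;> simp [pr, lt']
  · unfold chainC2 Chn; rw [List.map_map]; congr 2; ext1 b
    cases b <;> simp [pr, lt']
  · induction l with
    | nil => rfl
    | cons b l ih =>
      simp only [chainLen, sigmaCount, tauCount, List.map_cons, List.sum_cons, List.length_cons] at *
      cases b <;> simp only [pr] at * <;> simp at * <;> omega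

/-- negative class -/
def Cn (l : List Bool) : Q := (l.map fun b => (X b)⁻¹).prod
theorem Cn_eq (l) : Cn l = qq (Chn l) := by
  unfold Cn Chn; rw [map_list_prod, List.map_map]; congr 2

theorem push {e : Q} (he : e ∈ Dg) : ∃ w : Bool → Bool, (∀ m, Cq m * e = e * Cq (m.map w)) ∨ ∀ m, Cq m * e = e * Cn (m.map w) := by
  have pos : ∀ w : Bool → Bool, (∀ b, e⁻¹ * X b = X (w b) * e⁻¹) → ∀ m, Cq m * e = e * Cq (m.map w) := by
    intro w h m
    induction m with
    | nil => simp [Cq_nil]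
    | cons b m ih =>
      have : X b * e = e * X (w b) := by
        have := congrArg (fun x => e * x * e) (h b)
        simpa [mul_assoc] using this
      rw [Cq_cons, mul_assoc, ih, ← mul_assoc, this, List.map_cons, Cq_cons, mul_assoc]
  have neg : ∀ w : Bool → Bool, (∀ b, e⁻¹ * X b = (X (w b))⁻¹ * e⁻¹) → ∀ m, Cq m * e = e * Cn (m.map w) := by
    intro w h m
    induction m with
    | nil => simp [Cq_nil, Cn]
    | cons b m ih =>
      have : X b * e = e * (X (w b))⁻¹ := by
        have := congrArg (fun x => e * x * e) (h b)
        simpa [mul_assoc] using this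
      rw [Cq_cons, mul_assoc, ih, ← mul_assoc, this]; simp [Cn, mul_assoc]
  rcases Dg_split (inv_mem he) with ⟨-, ⟨-, h⟩ | h⟩ | ⟨-, w, h⟩
  · exact ⟨id, Or.inl (pos id h)⟩
  · exact ⟨not, Or.inl (pos not h)⟩
  · exact ⟨w, Or.inr (neg w h)⟩

theorem nn_aut_le (φ : MulAut F) (c : ℕ) (ha : nn (φ ga) ≤ c) (hb : nn (φ gb) ≤ c) (w : F) : nn (φ w) ≤ c * nn w := by
  have h := wnu_aut_le (fun _ => 1) (fun _ => c) φ ha hb w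
  have e : wnu (fun _ => c) w = c * nn w := by
    rw [nn_eq]; simp [wnu, lw, FreeGroup.norm, mul_comm]
  rw [e] at h
  exact h

theorem nn_mul_le (g h : F) : nn (g * h) ≤ nn g + nn h := wnu_mul_le (fun _ => 1) g h
theorem nn_ga : nn ga = 1 := by rw [nn_eq]; exact FreeGroup.norm_of _
theorem nn_gb : nn gb = 1 := by rw [nn_eq]; exact FreeGroup.norm_of _

theorem nn_lt (b : Bool) (w : F) : nn (lt' b w) ≤ 2 * nn w ∧ nn ((lt' b)⁻¹ w) ≤ 2 * nn w := by
  have h1 := nn_mul_le ga gb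
  have h2 := nn_mul_le gb ga
  have h3 := nn_mul_le ga gb⁻¹
  have h4 := nn_mul_le gb ga⁻¹
  rw [nn_inv] at h3 h4
  rw [nn_ga, nn_gb] at *
  constructor <;> apply nn_aut_le <;> cases b <;> simp [lt', nn_ga, nn_gb] <;> omega

theorem nn_Ch (l : List Bool) (w : F) : nn (Ch l w) ≤ 2 ^ l.length * nn w ∧ nn (Chn l w) ≤ 2 ^ l.length * nn w := by
  induction l with
  | nil => simp [Ch, Chn]
  | cons b l ih =>
    have e1 : Ch (b :: l) w = lt' b (Ch l w) := by simp [Ch]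
    have e2 : Chn (b :: l) w = (lt' b)⁻¹ (Chn l w) := by simp [Chn]
    rw [e1, e2, List.length_cons, pow_succ]
    have h1 := (nn_lt b (Ch l w)).1
    have h2 := (nn_lt b (Chn l w)).2
    constructor <;> nlinarith [ih.1, ih.2]

/-- exponent sums -/
def ex (w : F) : ℤ := (hh w).x
/-- exponent sums -/
def ey (w : F) : ℤ := (hh w).y
@[simp] theorem ex_mul (v w) : ex (v * w) = ex v + ex w := by simp [ex]
@[simp] theorem ey_mul (v w) : ey (v * w) = ey v + ey w := by simp [ey]
@[simp] theorem ex_inv (v) : ex (v⁻¹) = - ex v := by simp [ex]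
@[simp] theorem ey_inv (v) : ey (v⁻¹) = - ey v := by simp [ey]
@[simp] theorem ex_one : ex 1 = 0 := by simp [ex]
@[simp] theorem ey_one : ey 1 = 0 := by simp [ey]
@[simp] theorem ex_ga : ex ga = 1 := by simp [ex, hh_ga]
@[simp] theorem ey_ga : ey ga = 0 := by simp [ey, hh_ga]
@[simp] theorem ex_gb : ex gb = 0 := by simp [ex, hh_gb]
@[simp] theorem ey_gb : ey gb = 1 := by simp [ey, hh_gb]

theorem ex_aut (φ : MulAut F) (w : F) : ex (φ w) = ex w * ex (φ ga) + ey w * ex (φ gb) ∧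
    ey (φ w) = ex w * ey (φ ga) + ey w * ey (φ gb) := by
  induction w using F_induction with
  | h1 => simp
  | ha w ih => simp [ih]; constructor <;> ring
  | hb w ih => simp [ih]; constructor <;> ring
  | ha' w ih => simp [ih]; constructor <;> ring
  | hb' w ih => simp [ih]; constructor <;> ring

theorem exy_le (w : F) : |ex w| + |ey w| ≤ nn w := by
  have key : ∀ l : List (Fin 2 × Bool), |ex (FreeGroup.mk l)| + |ey (FreeGroup.mk l)| ≤ l.length := by
    intro l
    induction l with
    | nil =>
      have : FreeGroup.mk ([] : List (Fin 2 × Bool)) = 1 := rfl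
      simp [this]
    | cons x l ih =>
      have hc1 : FreeGroup.mk (x :: l) = FreeGroup.mk [x] * FreeGroup.mk l := by rw [FreeGroup.mul_mk]; rfl
      have : |ex (FreeGroup.mk [x])| + |ey (FreeGroup.mk [x])| = 1 := by
        have e1 : FreeGroup.mk [((0 : Fin 2), true)] = ga := rfl
        have e2 : FreeGroup.mk [((0 : Fin 2), false)] = ga⁻¹ := rfl
        have e3 : FreeGroup.mk [((1 : Fin 2), true)] = gb := rfl
        have e4 : FreeGroup.mk [((1 : Fin 2), false)] = gb⁻¹ := rfl
        obtain ⟨i, s⟩ := x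
        fin_cases i <;> cases s <;> simp [e1, e2, e3, e4]
      rw [hc1, ex_mul, ey_mul, List.length_cons]
      have a1 := abs_add_le (ex (FreeGroup.mk [x])) (ex (FreeGroup.mk l))
      have a2 := abs_add_le (ey (FreeGroup.mk [x])) (ey (FreeGroup.mk l))
      push_cast; linarith
  have := key w.toWord
  rw [FreeGroup.mk_toWord] at this
  rw [nn_eq]; exact this

theorem exy_Ch (l : List Bool) (w : F) (hx : 1 ≤ ex w) (hy : 1 ≤ ey w) :
    1 ≤ ex (Ch l w) ∧ 1 ≤ ey (Ch l w) ∧ ex w + ey w + l.length ≤ ex (Ch l w) + ey (Ch l w) := by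
  induction l with
  | nil => simp [Ch, hx, hy]
  | cons b l ih =>
    have e1 : Ch (b :: l) w = lt' b (Ch l w) := by simp [Ch]
    rw [e1, List.length_cons]
    obtain ⟨i1, i2, i3⟩ := ih
    obtain ⟨j1, j2⟩ := ex_aut (lt' b) (Ch l w)
    generalize Ch l w = v at *
    rw [j1, j2]
    clear j1 j2
    cases b <;> simp [lt'] <;> omega

theorem ex_of_fix {w : F} (h : σ w = w) : ex w = 0 := by
  have := (ex_aut σ w).2
  rw [h] at this
  simp at this
  exact this

theorem norm_gamma (γ : MulAut F) : ∀ (n : ℕ) (d : Q), d ∈ Dg → ∀ l : List Bool, l.length = n → qq γ = d * Cq l →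
    ∃ (γ' : MulAut F) (l' : List Bool), qq γ' = d * Cq l' ∧ (l' = [] ∨ ∃ l1, l' = l1 ++ [false]) ∧
      ∀ w, σ (γ⁻¹ w) = γ⁻¹ w ↔ σ (γ'⁻¹ w) = γ'⁻¹ w := by
  intro n
  induction n generalizing γ with
  | zero =>
    intro d hd l hl hq
    exact ⟨γ, l, hq, Or.inl (List.length_eq_zero_iff.1 hl), fun w => Iff.rfl⟩
  | succ n ih =>
    intro d hd l hl hq
    rcases List.eq_nil_or_concat l with rfl | ⟨l2, y, rfl⟩
    · simp at hl
    rw [List.concat_eq_append] at *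
    cases y
    · exact ⟨γ, _, hq, Or.inr ⟨l2, rfl⟩, fun w => Iff.rfl⟩
    · simp at hl
      obtain ⟨γ', l', h1, h2, h3⟩ := ih (γ * σ⁻¹) d hd l2 hl (by
        rw [map_mul, hq, Cq_append, Cq_one, map_inv, ← mul_assoc]
        exact mul_inv_cancel_right _ _)
      refine ⟨γ', l', h1, h2, fun w => ?_⟩
      rw [← h3]
      simp

theorem fix_eps (w : F) : σ (eps w) = eps w ↔ σ w = w := by
  have e : eps * σ * eps = σ⁻¹ := aut_ext (by simp) (by simp)
  have ee : ∀ x, eps (eps x) = x := fun x => by rw [← MulAut.mul_apply, eps_eps]; rfl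
  have h1 : eps (σ (eps w)) = σ⁻¹ w := DFunLike.congr_fun e w
  constructor
  · intro h
    rw [h, ee] at h1
    have := congrArg σ h1
    simpa using this
  · intro h
    have h2 : σ⁻¹ w = w := by rw [MulAut.inv_apply, MulEquiv.symm_apply_eq, h]
    rw [h2] at h1
    have := congrArg eps h1
    rwa [ee] at this

theorem norm_gamma' (α : MulAut F) : ∃ (γ : MulAut F) (d : Q) (l : List Bool), d ∈ Dg ∧ qq γ = d * Cq l ∧
    (l = [] ∨ ∃ l1, l = l1 ++ [false]) ∧ ∀ w, σ (α w) = α w ↔ σ (γ⁻¹ w) = γ⁻¹ w := by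
  obtain ⟨d, hd, l, h | h⟩ := NFp_all (qq α⁻¹)
  · obtain ⟨γ', l', h1, h2, h3⟩ := norm_gamma α⁻¹ _ d hd l rfl h
    exact ⟨γ', d, l', hd, h1, h2, fun w => by rw [← h3]; simp⟩
  · obtain ⟨γ', l', h1, h2, h3⟩ := norm_gamma (α⁻¹ * eps) _ d hd l rfl (by
      rw [map_mul, h, mul_assoc]
      show d * Cq l * (qE * qE) = _
      rw [rEE, mul_one])
    refine ⟨γ', d, l', hd, h1, h2, fun w => ?_⟩
    rw [← h3]
    have e : (α⁻¹ * eps)⁻¹ = eps * α := by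
      rw [mul_inv_rev, inv_inv, inv_eq_of_mul_eq_one_left eps_eps]
    rw [e, MulAut.mul_apply, fix_eps]

theorem class_phi (γ : MulAut F) (d : Q) (l : List Bool) (hd : d ∈ Dg) (hq : qq γ = d * Cq l)
    (hl : l = [] ∨ ∃ l1, l = l1 ++ [false]) :
    ∃ e ∈ Dg, ∃ m : List Bool, m ≠ [] ∧ m.length ≤ 2 * l.length + 1 ∧ qq (γ * σ * γ⁻¹) = d * Cq m * e := by
  have h0 : qq (γ * σ * γ⁻¹) = d * Cq l * qS * (Cq l)⁻¹ * d⁻¹ := by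
    rw [map_mul, map_mul, map_inv, hq]; simp only [mul_inv_rev, mul_assoc]; rfl
  rw [h0]
  rcases hl with rfl | ⟨l1, rfl⟩
  · exact ⟨d⁻¹, inv_mem hd, [true], by simp, by simp, by rw [Cq_nil, Cq_one]; simp; rfl⟩
  · refine ⟨qJ * d⁻¹, mul_mem Dg_J (inv_mem hd), l1 ++ [false, false] ++ (l1.reverse.map not), by simp, by simp; omega, ?_⟩
    have hJ : ∀ l : List Bool, qJ * (Cq l)⁻¹ = Cq (l.reverse.map not) * qJ := by
      intro l
      induction l with
      | nil => simp [Cq_nil]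
      | cons b l ih =>
        have : qJ * (X b)⁻¹ = X (!b) * qJ := by
          rw [mul_inv_eq_iff_eq_mul, mul_assoc, rJX]; group
        rw [Cq_cons, mul_inv_rev, ← mul_assoc, ih, mul_assoc, this]
        simp [Cq_append, Cq_one, mul_assoc]
    have e2 : Cq [false, false] = qT * qT := by simp [Cq]; rfl
    rw [Cq_append, Cq_append, Cq_append, Cq_one, e2, mul_inv_rev, X_f, rS]
    have := hJ l1
    calc _ = d * Cq l1 * qT * qT * (qJ * (Cq l1)⁻¹) * d⁻¹ := by group
      _ = _ := by rw [this]; group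

/-- the bound on the length of the chain -/
theorem len_bound {k : ℕ} (u : Fin k → F) (L : ℕ) (hL : ∀ i, nn (u i) ≤ L)
    (γ : MulAut F) (d : Q) (l : List Bool) (hd : d ∈ Dg) (hq : qq γ = d * Cq l)
    (hl : l = [] ∨ ∃ l1, l = l1 ++ [false]) (hfix : ∀ w, σ (γ⁻¹ w) = γ⁻¹ w ↔ w ∈ Subgroup.closure (Set.range u)) :
    l.length + 1 ≤ L := by
  obtain ⟨β, hβ, e, c, hs⟩ := Dg_lift hd
  obtain ⟨i, hi⟩ : ∃ i, ey (γ⁻¹ (u i)) ≠ 0 := by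
    by_contra hc
    push Not at hc
    have : ∀ w ∈ Subgroup.closure (Set.range u), ey (γ⁻¹ w) = 0 := by
      intro w hw
      induction hw using Subgroup.closure_induction with
      | mem x hx => obtain ⟨i, rfl⟩ := hx; exact hc i
      | one => simp
      | mul x y _ _ h1 h2 => rw [map_mul, ey_mul, h1, h2]; rfl
      | inv x _ h => rw [map_inv, ey_inv, h]; rfl
    have h1 := this (γ gb) ((hfix _).1 (by simp))
    simp at h1
  have hx := ex_of_fix ((hfix (u i)).2 (Subgroup.subset_closure ⟨i, rfl⟩))
  have hq' : qq γ = qq (β * Ch l) := by rw [hq, map_mul, hβ, Cq_eq]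
  obtain ⟨g, hg⟩ := qq_eq hq'
  have h1 : β⁻¹ (u i) = (β⁻¹ g) * Ch l (γ⁻¹ (u i)) * (β⁻¹ g)⁻¹ := by
    have h2 : ∀ x, β⁻¹ (γ x) = (β⁻¹ g) * Ch l x * (β⁻¹ g)⁻¹ := by
      intro x
      rw [hg]
      simp
    have h3 := h2 (γ⁻¹ (u i))
    rwa [MulAut.apply_inv_self] at h3
  have h2 : nn (β⁻¹ (u i)) ≤ L := by
    have := hs.norm (β⁻¹ (u i))
    have e : β.toMonoidHom (β⁻¹ (u i)) = u i := MulEquiv.apply_symm_apply β (u i)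
    rw [e] at this
    unfold nn; rw [← this]; exact hL i
  have h3 := exy_le (β⁻¹ (u i))
  rw [h1] at h3
  simp only [ex_mul, ey_mul, ex_inv, ey_inv] at h3
  rw [← h1, (ex_aut (Ch l) _).1, (ex_aut (Ch l) _).2, hx] at h3
  have h5 : (l.length : ℤ) + 1 ≤ |ex (Ch l gb)| + |ey (Ch l gb)| := by
    rcases hl with rfl | ⟨l1, rfl⟩
    · simp [Ch]
    · have : Ch (l1 ++ [false]) gb = Ch l1 (gb * ga) := by simp [Ch, lt']
      rw [this]
      have := exy_Ch l1 (gb * ga) (by simp) (by simp)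
      have a1 := le_abs_self (ex (Ch l1 (gb * ga)))
      have a2 := le_abs_self (ey (Ch l1 (gb * ga)))
      simp at this ⊢
      simp at a1 a2
      omega
  have h6 : 1 ≤ |ey (γ⁻¹ (u i))| := Int.one_le_abs hi
  generalize ey (γ⁻¹ (u i)) = y at *
  generalize ex (Ch l gb) = p at *
  generalize ey (Ch l gb) = q at *
  have e1 : ∀ z t s : ℤ, z + (0 * s + t) + -z = t := fun z t s => by ring
  rw [e1, e1, abs_mul, abs_mul] at h3
  have h7 : |p| + |q| ≤ |y| * |p| + |y| * |q| := by
    have := abs_nonneg p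
    have := abs_nonneg q
    nlinarith
  omega

end Final


theorem one_sgn : Sgn (1 : MulAut F).toMonoidHom id (fun _ => true) := by
  refine ⟨fun _ _ h => h, fun i => ?_⟩
  rfl

theorem chain_zero : chainC1 [(0, 0)] = 1 ∧ chainLen [(0, 0)] = 0 := by
  constructor
  · simp [chainC1]
  · rfl

theorem Sgn.nn_inv {β : MulAut F} {e c} (h : Sgn β.toMonoidHom e c) (w : F) : nn (β⁻¹ w) = nn w := by
  have := h.norm (β⁻¹ w)
  have e : β.toMonoidHom (β⁻¹ w) = w := MulEquiv.apply_symm_apply β w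
  rw [e] at this
  exact this.symm

theorem arith (L : ℕ) (hL : 1 ≤ L) : 4 * (2 ^ (2 * L) * L) + 2 ≤ (2 ^ (4 * L + 4) + 1) * L := by
  have h1 : 2 ^ (4 * L + 4) = 16 * (2 ^ (2 * L) * 2 ^ (2 * L)) := by
    rw [← pow_add]; ring
  have h2 : 1 ≤ 2 ^ (2 * L) := Nat.one_le_two_pow
  rw [h1]
  generalize 2 ^ (2 * L) = x at *
  have h3 : x * L ≤ x * x * L := by nlinarith [Nat.zero_le (x * L)]
  have h4 : 1 ≤ x * L := by nlinarith
  nlinarith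

theorem final_nc {k : ℕ} (u : Fin k → F) (L : ℕ) (hL : ∀ i, nn (u i) ≤ L)
    (φ : MulAut F) (hφ : ∀ w, φ w = w ↔ w ∈ Subgroup.closure (Set.range u)) (i j : Fin k)
    (hij : u i * u j ≠ u j * u i) (h1 : φ ≠ 1) :
    ∃ β : MulAut F, IsW1 β ∧ ∃ g : F, nn g ≤ (2 ^ (4 * L + 4) + 1) * L ∧
      ∃ m : List Bool, m ≠ [] ∧ m.length ≤ 2 * L ∧ ∃ ψ, (ψ = Ch m ∨ ψ = Chn m) ∧
        ∀ w, (β * MulAut.conj g * ψ) w = w ↔ w ∈ Subgroup.closure (Set.range u) := by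
  have hu : ∀ i, φ (u i) = u i := fun i => (hφ _).2 (Subgroup.subset_closure ⟨i, rfl⟩)
  obtain ⟨α, hα⟩ := (thmC φ _ _ hij (hu i) (hu j)).resolve_left h1
  obtain ⟨γ, d, l, hd, hq, hl, hw⟩ := norm_gamma' α
  have hfix : ∀ w, σ (γ⁻¹ w) = γ⁻¹ w ↔ w ∈ Subgroup.closure (Set.range u) := fun w => by
    rw [← hw, ← hα, hφ]
  have hlen := len_bound u L hL γ d l hd hq hl hfix
  obtain ⟨e, he, m, hm, hml, hqm⟩ := class_phi γ d l hd hq hl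
  have hfix' : ∀ w, (γ * σ * γ⁻¹) w = w ↔ w ∈ Subgroup.closure (Set.range u) := fun w => by
    rw [← hfix]
    constructor
    · intro h
      have := congrArg (fun x => γ⁻¹ x) h
      simpa using this
    · intro h
      rw [MulAut.mul_apply, MulAut.mul_apply, h, MulAut.apply_inv_self]
  generalize γ * σ * γ⁻¹ = φ' at *
  obtain ⟨β, hβ, ee, c, hs⟩ := Dg_lift (mul_mem hd he)
  obtain ⟨ψ, m', hm', hψ, hqψ⟩ : ∃ ψ : MulAut F, ∃ m' : List Bool, m'.length = m.length ∧
      (ψ = Ch m' ∨ ψ = Chn m') ∧ qq φ' = qq (β * ψ) := by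
    obtain ⟨w, h | h⟩ := push he
    · exact ⟨Ch (m.map w), m.map w, by simp, Or.inl rfl, by
        rw [hqm, map_mul, hβ, mul_assoc, h, ← Cq_eq, mul_assoc]⟩
    · exact ⟨Chn (m.map w), m.map w, by simp, Or.inr rfl, by
        rw [hqm, map_mul, hβ, mul_assoc, h, ← Cn_eq, mul_assoc]⟩
  obtain ⟨g, hg⟩ := qq_eq hqψ
  have hg' : φ' = β * MulAut.conj (β⁻¹ g) * ψ := by
    rw [conj_comm_aut, MulAut.apply_inv_self, hg, mul_assoc]
  have hu' : ∀ i, φ' (u i) = u i := fun i => (hfix' _).2 (Subgroup.subset_closure ⟨i, rfl⟩)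
  have hL1 : 1 ≤ L := by omega
  have hp : m'.length ≤ 2 * L := by omega
  have hpow : 2 ^ m'.length ≤ 2 ^ (2 * L) := Nat.pow_le_pow_right (by norm_num) hp
  have h2 : 1 ≤ 2 ^ (2 * L) := Nat.one_le_two_pow
  have key : ∀ i, nn (β⁻¹ (u i)) ≤ 2 ^ (2 * L) * L ∧
      (fTL (Fin 2)).d (β⁻¹ g) (β⁻¹ (u i) * β⁻¹ g) ≤ 2 ^ (2 * L) * L := by
    intro i
    have hi := hL i
    refine ⟨by rw [hs.nn_inv]; nlinarith, ?_⟩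
    have h3 : (β⁻¹ g)⁻¹ * (β⁻¹ (u i) * β⁻¹ g) = ψ (u i) := by
      have := hu' i
      rw [hg'] at this
      have h4 : β⁻¹ (u i) = β⁻¹ g * ψ (u i) * (β⁻¹ g)⁻¹ := by
        conv_lhs => rw [← this]
        simp
      rw [h4]; group
    show nn _ ≤ _
    rw [h3]
    have h5 : nn (ψ (u i)) ≤ 2 ^ m'.length * nn (u i) := by
      rcases hψ with rfl | rfl
      · exact (nn_Ch _ _).1
      · exact (nn_Ch _ _).2
    exact h5.trans (Nat.mul_le_mul hpow hi)
  have hb := (fTL (Fin 2)).lemG (β⁻¹ (u i)) (β⁻¹ (u j)) (β⁻¹ g) (2 ^ (2 * L) * L)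
    (by rw [← map_mul, ← map_mul]; exact fun h => hij ((β⁻¹).injective h))
    (key i).1 (key j).1 (key i).2 (key j).2
  refine ⟨β, IsW1_of_sgn hs, β⁻¹ g, le_trans hb (arith L hL1), m', ?_, hp, ψ, hψ, fun w => ?_⟩
  · intro h; rw [h] at hm'; exact hm (List.length_eq_zero_iff.1 hm'.symm)
  · rw [← hg', hfix']

theorem main_thm {k : ℕ} (u : Fin k → F) (L : ℕ) (hL : ∀ i, nn (u i) ≤ L)
    (φ : MulAut F) (hφ : ∀ w, φ w = w ↔ w ∈ Subgroup.closure (Set.range u)) :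
    ∃ β : MulAut F, IsW1 β ∧
      ∃ ds : List (Fin 4), ds.length ≤ (2 ^ (4 * L + 4) + 1) * L ∧
        ∃ c : List (ℕ × ℕ), c ≠ [] ∧ chainLen c ≤ 4 * L + 4 ∧
          ∃ ψ' : MulAut F, (ψ' = chainC1 c ∨ ψ' = chainC2 c) ∧
            ∀ w : F, (β * (ds.map δIdx).prod * ψ') w = w ↔ w ∈ Subgroup.closure (Set.range u) := by
  have w1 : IsW1 (1 : MulAut F) := IsW1_of_sgn one_sgn
  have hc0 : chainLen [(0, 0)] ≤ 4 * L + 4 := by rw [chain_zero.2]; omega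
  by_cases hc : ∀ i j, u i * u j = u j * u i
  · by_cases h1 : ∀ i, u i = 1
    · refine ⟨iot, IsW1_of_sgn iot_sgn, [], by simp, [(0, 0)], by simp, hc0, 1, Or.inl chain_zero.1.symm, fun w => ?_⟩
      have hb : Subgroup.closure (Set.range u) = ⊥ := by
        rw [Subgroup.closure_eq_bot_iff]
        rintro _ ⟨i, rfl⟩; exact h1 i
      rw [hb, Subgroup.mem_bot]
      simp only [List.map_nil, List.prod_nil, mul_one]
      constructor
      · intro h
        have := iot_sgn.fix (w := w) h
        rw [← FreeGroup.toWord_eq_nil_iff]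
        rcases hw : w.toWord with _ | ⟨x, t⟩
        · rfl
        · have := (this x (by rw [hw]; simp)).2
          simp at this
      · rintro rfl; simp
    · push Not at h1
      obtain ⟨i, hi⟩ := h1
      obtain ⟨ds, hd1, hd2⟩ := conj_ds (u i)
      refine ⟨1, w1, ds, ?_, [(0, 0)], by simp, hc0, 1, Or.inl chain_zero.1.symm, fun w => ?_⟩
      · rw [hd1]
        have := hL i
        nlinarith [Nat.zero_le (2 ^ (4 * L + 4) * L)]
      · rw [hd2, one_mul, mul_one, ← hφ]
        rw [← fix_comm_eq hi ((hφ _).2 (Subgroup.subset_closure ⟨i, rfl⟩)) ?_ w]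
        · rw [MulAut.conj_apply, mul_inv_eq_iff_eq_mul]; exact eq_comm
        · intro y hy
          rw [hφ] at hy
          induction hy using Subgroup.closure_induction with
          | mem x hx => obtain ⟨j, rfl⟩ := hx; exact hc j i
          | one => simp
          | mul x y _ _ h1 h2 => rw [mul_assoc, h2, ← mul_assoc, h1, mul_assoc]
          | inv x _ h =>
            have : Commute x (u i) := h
            exact this.inv_left
  · push Not at hc
    obtain ⟨i, j, hij⟩ := hc
    by_cases h1 : φ = 1
    · refine ⟨1, w1, [], by simp, [(0, 0)], by simp, hc0, 1, Or.inl chain_zero.1.symm, fun w => ?_⟩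
      rw [← hφ, h1]; simp
    · obtain ⟨β, hβ, g, hg, m, hm, hml, ψ, hψ, hf⟩ := final_nc u L hL φ hφ i j hij h1
      obtain ⟨ds, hd1, hd2⟩ := conj_ds g
      obtain ⟨c1, c2, c3⟩ := chain_Ch m
      refine ⟨β, hβ, ds, by rw [hd1]; exact hg, m.map pr, by simpa using hm, by rw [c3]; omega, ψ,
        by rw [c1, c2]; exact hψ, fun w => ?_⟩
      rw [hd2, hf]

/-- Theorem 5.4: if `H = ⟨u₁, …, u_k⟩` is the fixed point group of some automorphism of
`F₂`, then it is the fixed point group of one of the special form `β ∘ δ' ∘ ψ'` with the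
stated bounds, where `L = max |u_i|`. -/
theorem stmt19 (k : ℕ) (hk : 0 < k) (u : Fin k → F) (L : ℕ)
    (hL : L = Finset.univ.sup fun i => len (u i))
    (H : Subgroup F) (hH : H = Subgroup.closure (Set.range u))
    (hfix : ∃ φ : MulAut F, ∀ w : F, φ w = w ↔ w ∈ H) :
    ∃ β : MulAut F, IsW1 β ∧
      ∃ ds : List (Fin 4), ds.length ≤ (2 ^ (4 * L + 4) + 1) * L ∧
        ∃ c : List (ℕ × ℕ), c ≠ [] ∧ chainLen c ≤ 4 * L + 4 ∧
          ∃ ψ' : MulAut F, (ψ' = chainC1 c ∨ ψ' = chainC2 c) ∧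
            ∀ w : F, (β * (ds.map δIdx).prod * ψ') w = w ↔ w ∈ H := by
  subst hH
  obtain ⟨φ, hφ⟩ := hfix
  refine main_thm u L (fun i => ?_) φ hφ
  rw [hL, nn_eq]
  exact Finset.le_sup (f := fun i => len (u i)) (Finset.mem_univ i)
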